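/- arXiv:1706.03306 — 3 statements merged into one kernel-verified Lean document; each statement's English description precedes it below -/
import Mathlib

section
/- For all integers r, k, e with r ≥ k+1 ≥ e ≥ 3, one has f_r(n, e(r−k)+k+1, e) = o(n^k); that is, for every real ε > 0 there exists N such that for all integers n ≥ N, f_r(n, e(r−k)+k+1, e) ≤ ε·n^k. -/
open Finset

/-- A hypergraph `H` is `G_r(v,e)`-free if any `e` distinct edges span at least `v+1` vertices. -/
def GFree {V : Type*} [DecidableEq V] (H : Finset (Finset V)) (v e : ℕ) : Prop :=
  ∀ S ⊆ H, S.card = e → v + 1 ≤ (S.biUnion id).card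

/-- `extremalF r n v e` is the maximum number of edges of a `G_r(v,e)`-free `r`-uniform
hypergraph on `n` vertices. -/
noncomputable def extremalF (r n v e : ℕ) : ℕ :=
  sSup {m : ℕ | ∃ H : Finset (Finset (Fin n)),
    (∀ A ∈ H, A.card = r) ∧ GFree H v e ∧ H.card = m}

open MeasureTheory Set

namespace BES

section gen
variable {T : Type*}

@[reducible]
def Bs (U : Set T) : MeasurableSpace (T → Bool) :=
  MeasurableSpace.comap (fun (ω : T → Bool) (t : U) => ω t) MeasurableSpace.pi

lemma Bs_eval {U : Set T} {t : T} (ht : t ∈ U) : Measurable[Bs U] (fun ω : T → Bool => ω t) := by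
  have h1 : Measurable[Bs U] (fun (ω : T → Bool) (t : U) => ω t) := comap_measurable _
  exact (measurable_pi_apply (⟨t, ht⟩ : U)).comp h1

lemma meas_to_Bs {α : Type*} (mα : MeasurableSpace α) {U : Set T} {f : α → T → Bool}
    (h : ∀ t ∈ U, Measurable[mα] (fun x => f x t)) : @Measurable _ _ mα (Bs U) f := by
  rw [Bs, measurable_comap_iff]
  exact measurable_pi_lambda _ (fun t => h t t.2)

lemma Bs_mono {U V : Set T} (h : U ⊆ V) : Bs U ≤ Bs V := by
  have := meas_to_Bs (Bs V) (U := U) (f := id) (fun t ht => Bs_eval (h ht))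
  intro s hs
  exact this hs

lemma Bs_le (U : Set T) : Bs U ≤ MeasurableSpace.pi := by
  have := meas_to_Bs MeasurableSpace.pi (U := U) (f := id) (fun t ht => measurable_pi_apply t)
  intro s hs
  exact this hs

lemma Bs_invariant {U : Set T} {S : Set (T → Bool)} (hS : MeasurableSet[Bs U] S)
    {x y : T → Bool} (h : ∀ t ∈ U, x t = y t) : x ∈ S ↔ y ∈ S := by
  obtain ⟨S', -, rfl⟩ := hS
  have : (fun t : U => x t) = (fun t : U => y t) := by
    ext t; exact h t t.2
  simp only [Set.mem_preimage, this]

lemma approx (μ : Measure (T → Bool)) [IsFiniteMeasure μ] (U : Set T) (W : ℕ → Set T)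
    (hW : Monotone W) (hU : U ⊆ ⋃ m, W m) {A : Set (T → Bool)} (hA : MeasurableSet[Bs U] A)
    {δ : ℝ} (hδ : 0 < δ) :
    ∃ m, ∃ S, MeasurableSet[Bs (W m)] S ∧ μ.real (symmDiff A S) < δ := by
  let C : Set (Set (T → Bool)) := {S | ∃ m, MeasurableSet[Bs (W m)] S}
  have hC : IsSetRing C := by
    refine ⟨⟨0, @MeasurableSet.empty _ (Bs (W 0))⟩, ?_, ?_⟩
    · rintro s t ⟨m, hm⟩ ⟨m', hm'⟩
      exact ⟨max m m', @MeasurableSet.union _ (Bs _) _ _ (Bs_mono (hW (le_max_left _ _)) _ hm)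
        (Bs_mono (hW (le_max_right _ _)) _ hm')⟩
    · rintro s t ⟨m, hm⟩ ⟨m', hm'⟩
      exact ⟨max m m', @MeasurableSet.diff _ (Bs _) _ _ (Bs_mono (hW (le_max_left _ _)) _ hm)
        (Bs_mono (hW (le_max_right _ _)) _ hm')⟩
  let M := MeasurableSpace.generateFrom C
  have hM : M ≤ MeasurableSpace.pi := by
    apply MeasurableSpace.generateFrom_le
    rintro s ⟨m, hm⟩
    exact Bs_le _ _ hm
  have hUM : Bs U ≤ M := by
    have : @Measurable _ _ M (Bs U) (id : (T → Bool) → T → Bool) := by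
      apply meas_to_Bs
      intro t ht
      obtain ⟨m, hm⟩ := Set.mem_iUnion.1 (hU ht)
      intro s hs
      exact MeasurableSpace.measurableSet_generateFrom ⟨m, Bs_eval hm hs⟩
    intro s hs
    exact this hs
  have hAM := hUM _ hA
  have key := @exists_measure_symmDiff_lt_of_generateFrom_isSetRing _ M (μ.trim hM) _ C hC
    ⟨{Set.univ}, by simp, by simpa using ⟨0, @MeasurableSet.univ _ (Bs (W 0))⟩, by simp⟩ rfl A hAM (ENNReal.ofReal δ) (by simpa using hδ)
  obtain ⟨S, ⟨m, hm⟩, hS⟩ := key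
  refine ⟨m, S, hm, ?_⟩
  have hSM : MeasurableSet[M] S := MeasurableSpace.measurableSet_generateFrom ⟨m, hm⟩
  rw [trim_measurableSet_eq hM (@MeasurableSet.symmDiff _ M _ _ hSM hAM), symmDiff_comm] at hS
  rw [Measure.real]
  exact (ENNReal.toReal_lt_of_lt_ofReal hS)

def cell (W : Set T) (κ : T → Bool) : Set (T → Bool) := {ω | ∀ t ∈ W, ω t = κ t}

lemma cell_meas {W : Set T} (hW : W.Finite) (κ : T → Bool) : MeasurableSet[Bs W] (cell W κ) := by
  have : cell W κ = ⋂ t ∈ W, (fun ω : T → Bool => ω t) ⁻¹' {κ t} := by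
    ext; simp [cell]
  rw [this]
  refine @MeasurableSet.biInter _ _ (Bs W) _ _ hW.countable (fun t ht => Bs_eval ht ?_)
  exact MeasurableSet.singleton _

open Classical in
lemma cell_form {U W : Set T} {S : Set (T → Bool)} (hS : MeasurableSet[Bs (U ∪ W)] S)
    (κ : T → Bool) :
    ∃ q, MeasurableSet[Bs U] q ∧ S ∩ cell W κ = q ∩ cell W κ := by
  let g : (T → Bool) → T → Bool := fun ω t => if t ∈ W then κ t else ω t
  have hg : @Measurable _ _ (Bs U) (Bs (U ∪ W)) g := by
    apply meas_to_Bs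
    intro t ht
    by_cases h : t ∈ W
    · simp only [g, h, if_true]; exact measurable_const
    · simp only [g, h, if_false]
      exact Bs_eval (by simpa [h] using ht)
  refine ⟨g ⁻¹' S, hg hS, ?_⟩
  ext ω
  simp only [Set.mem_inter_iff, Set.mem_preimage, and_congr_left_iff]
  intro hω
  have : g ω = ω := by
    ext t
    by_cases h : t ∈ W
    · simp [g, h, hω t h]
    · simp [g, h]
  rw [this]

lemma cell_eq {W : Set T} {κ ω : T → Bool} (h : ω ∈ cell W κ) : cell W ω = cell W κ := by
  ext x; simp only [cell, Set.mem_ofPred_eq] at *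
  constructor
  · intro hx t ht; rw [hx t ht, h t ht]
  · intro hx t ht; rw [hx t ht, h t ht]

/-- finitely many representatives of cells -/
lemma cell_reps {W : Set T} (hW : W.Finite) : ∃ R : Finset (T → Bool),
    (∀ ω, ∃ κ ∈ R, ω ∈ cell W κ) ∧ (R : Set (T → Bool)).PairwiseDisjoint (cell W) := by
  classical
  have := hW.to_subtype
  have := Fintype.ofFinite W
  let ext : (W → Bool) → T → Bool := fun f t => if h : t ∈ W then f ⟨t, h⟩ else false
  refine ⟨Finset.univ.image ext, ?_, ?_⟩
  · intro ω
    refine ⟨ext (fun t => ω t), by simp, ?_⟩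
    intro t ht; simp [ext, ht]
  · intro a ha b hb hab
    rw [Function.onFun, Set.disjoint_left]
    intro ω h1 h2
    apply hab
    simp only [Finset.coe_image, Finset.coe_univ, Set.image_univ, Set.mem_range] at ha hb
    obtain ⟨f, rfl⟩ := ha
    obtain ⟨g, rfl⟩ := hb
    congr 1
    ext t
    have := h1 t t.2
    have h' := h2 t t.2
    simp only [ext, t.2, dif_pos] at this h'
    rw [← this, ← h']

lemma cell_sum (μ : Measure (T → Bool)) [IsFiniteMeasure μ] {W : Set T} (hW : W.Finite)
    {R : Finset (T → Bool)} (h1 : ∀ ω, ∃ κ ∈ R, ω ∈ cell W κ)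
    (h2 : (R : Set (T → Bool)).PairwiseDisjoint (cell W)) (X : Set (T → Bool)) :
    μ.real X = ∑ κ ∈ R, μ.real (X ∩ cell W κ) := by
  have hm : ∀ κ, MeasurableSet (cell W κ) := fun κ => Bs_le _ _ (cell_meas hW κ)
  have hu : (⋃ κ ∈ R, cell W κ) = Set.univ := by
    ext ω; simpa using h1 ω
  have := measureReal_biUnion_finset (μ := μ.restrict X) (s := R) (f := cell W) h2 (fun κ _ => hm κ)
  rw [hu] at this
  simp only [measureReal_def, Measure.restrict_apply MeasurableSet.univ, Measure.restrict_apply (hm _)] at this ⊢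
  simpa [Set.inter_comm] using this

/-- indicator -/
noncomputable def ind (S : Set (T → Bool)) : (T → Bool) → ℝ := S.indicator 1

lemma ind_int (μ : Measure (T → Bool)) [IsFiniteMeasure μ] {S : Set (T → Bool)}
    (hS : MeasurableSet S) : Integrable (ind S) μ :=
  (integrable_const (1:ℝ)).indicator hS

lemma ind_L2 (μ : Measure (T → Bool)) [IsFiniteMeasure μ] {S : Set (T → Bool)}
    (hS : MeasurableSet S) : MemLp (ind S) 2 μ :=
  (memLp_const (1:ℝ)).indicator hS

lemma ind_setInt (μ : Measure (T → Bool)) [IsFiniteMeasure μ] {S Q : Set (T → Bool)}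
    (hS : MeasurableSet S) : ∫ ω in Q, ind S ω ∂μ = μ.real (S ∩ Q) := by
  unfold ind
  rw [integral_indicator_one hS, measureReal_restrict_apply hS]

lemma ce_setInt (μ : Measure (T → Bool)) [IsFiniteMeasure μ] {U : Set T} {S Q : Set (T → Bool)}
    (hS : MeasurableSet S) (hQ : MeasurableSet[Bs U] Q) :
    ∫ ω in Q, (μ[ind S | Bs U]) ω ∂μ = μ.real (S ∩ Q) := by
  rw [setIntegral_condExp (Bs_le U) (ind_int μ hS) hQ, ind_setInt μ hS]

/-- bad set -/
def Zset (μ : Measure (T → Bool)) (U W : Set T) (A : Set (T → Bool)) (θ : ℝ) : Set (T → Bool) :=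
  {ω | (μ[ind (A ∩ cell W ω) | Bs U]) ω ≤ θ * (μ[ind (cell W ω) | Bs U]) ω}

def qset (μ : Measure (T → Bool)) (U W : Set T) (A : Set (T → Bool)) (θ : ℝ) (κ : T → Bool) :
    Set (T → Bool) :=
  {ω | (μ[ind (A ∩ cell W κ) | Bs U]) ω ≤ θ * (μ[ind (cell W κ) | Bs U]) ω}

lemma qset_meas (μ : Measure (T → Bool)) (U W : Set T) (A : Set (T → Bool)) (θ : ℝ)
    (κ : T → Bool) : MeasurableSet[Bs U] (qset μ U W A θ κ) := by
  unfold qset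
  have h1 : Measurable[Bs U] (μ[ind (A ∩ cell W κ) | Bs U]) := stronglyMeasurable_condExp.measurable
  have h2 : Measurable[Bs U] (fun ω => θ * (μ[ind (cell W κ) | Bs U]) ω) :=
    stronglyMeasurable_condExp.measurable.const_mul θ
  exact measurableSet_le h1 h2

lemma Zset_cell (μ : Measure (T → Bool)) (U W : Set T) (A : Set (T → Bool)) (θ : ℝ)
    (κ : T → Bool) : Zset μ U W A θ ∩ cell W κ = qset μ U W A θ κ ∩ cell W κ := by
  ext ω
  simp only [Set.mem_inter_iff, and_congr_left_iff]
  intro h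
  simp only [Zset, qset, Set.mem_ofPred_eq, cell_eq h]

lemma Zset_meas (μ : Measure (T → Bool)) (U : Set T) {W : Set T} (hW : W.Finite)
    (A : Set (T → Bool)) (θ : ℝ) : MeasurableSet[Bs (U ∪ W)] (Zset μ U W A θ) := by
  obtain ⟨R, h1, -⟩ := cell_reps hW
  have : Zset μ U W A θ = ⋃ κ ∈ R, qset μ U W A θ κ ∩ cell W κ := by
    ext ω
    simp only [← Zset_cell]
    obtain ⟨κ, hκ, h⟩ := h1 ω
    simp only [Set.mem_iUnion, Set.mem_inter_iff]
    constructor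
    · intro hz; exact ⟨κ, hκ, hz, h⟩
    · rintro ⟨_, _, hz, _⟩; exact hz
  rw [this]
  refine @Finset.measurableSet_biUnion _ _ (Bs (U ∪ W)) _ R (fun κ _ => ?_)
  exact @MeasurableSet.inter _ (Bs (U ∪ W)) _ _ (Bs_mono Set.subset_union_left _ (qset_meas μ U W A θ κ))
    (Bs_mono Set.subset_union_right _ (cell_meas hW κ))

lemma claimB (μ : Measure (T → Bool)) [IsFiniteMeasure μ] (U : Set T) (W : ℕ → Set T)
    (hW : Monotone W) (hfin : ∀ m, (W m).Finite) {A : Set (T → Bool)}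
    (hA : MeasurableSet[Bs (U ∪ ⋃ m, W m)] A) {θ : ℝ} (hθ : θ < 1) {δ : ℝ} (hδ : 0 < δ) :
    ∃ m₀, ∀ m, m₀ ≤ m → μ.real (A ∩ Zset μ U (W m) A θ) ≤ δ := by
  have hθ' : 0 < 1 - θ := by linarith
  obtain ⟨m₀, S, hS, hAS⟩ := approx μ (U ∪ ⋃ m, W m) (fun m => U ∪ W m)
    (fun a b h => Set.union_subset_union_right _ (hW h)) (by rw [Set.union_iUnion]) hA
    (δ := δ / (1 / (1 - θ) + 1)) (by positivity)
  refine ⟨m₀, fun m hm => ?_⟩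
  have hS' : MeasurableSet[Bs (U ∪ W m)] S :=
    Bs_mono (Set.union_subset_union_right _ (hW hm)) _ hS
  set Z := Zset μ U (W m) A θ
  have hAm : MeasurableSet A := Bs_le _ _ hA
  have hSm : MeasurableSet S := Bs_le _ _ hS
  have hZm : MeasurableSet Z := Bs_le _ _ (Zset_meas μ U (hfin m) A θ)
  obtain ⟨R, h1, h2⟩ := cell_reps (hfin m)
  have hcell : ∀ κ, MeasurableSet (cell (W m) κ) := fun κ => Bs_le _ _ (cell_meas (hfin m) κ)
  have key : μ.real (A ∩ (Z ∩ S)) ≤ θ * μ.real (Z ∩ S) := by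
    rw [cell_sum μ (hfin m) h1 h2 (A ∩ (Z ∩ S)), cell_sum μ (hfin m) h1 h2 (Z ∩ S), Finset.mul_sum]
    apply Finset.sum_le_sum
    intro κ _
    obtain ⟨s, hs, hse⟩ := cell_form hS' κ
    have hq := qset_meas μ U (W m) A θ κ
    set q := qset μ U (W m) A θ κ
    have hqs : MeasurableSet[Bs U] (q ∩ s) := @MeasurableSet.inter _ (Bs U) _ _ hq hs
    have e1 : (Z ∩ S) ∩ cell (W m) κ = cell (W m) κ ∩ (q ∩ s) := by
      have hz := Zset_cell μ U (W m) A θ κ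
      calc (Z ∩ S) ∩ cell (W m) κ = (Z ∩ cell (W m) κ) ∩ (S ∩ cell (W m) κ) := by
            ext; simp; tauto
        _ = _ := by rw [hse, hz]; ext; simp; tauto
    have e2 : (A ∩ (Z ∩ S)) ∩ cell (W m) κ = (A ∩ cell (W m) κ) ∩ (q ∩ s) := by
      rw [Set.inter_assoc, e1, Set.inter_assoc]
    rw [e1, e2, ← ce_setInt μ (hAm.inter (hcell κ)) hqs, ← ce_setInt μ (hcell κ) hqs,
      ← integral_const_mul]
    refine setIntegral_mono_on integrable_condExp.integrableOn
      (integrable_condExp.const_mul θ).integrableOn (Bs_le _ _ hqs) ?_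
    intro ω hω
    exact hω.1
  have h3 : μ.real (Z ∩ S) ≤ μ.real (A ∩ (Z ∩ S)) + μ.real (symmDiff A S) := by
    refine le_trans (measureReal_mono ?_) (measureReal_union_le _ _)
    intro ω hω
    by_cases h : ω ∈ A
    · exact Or.inl ⟨h, hω⟩
    · exact Or.inr (Or.inr ⟨hω.2, h⟩)
  have h4 : μ.real (A ∩ Z) ≤ μ.real (Z ∩ S) + μ.real (symmDiff A S) := by
    refine le_trans (measureReal_mono ?_) (measureReal_union_le _ _)
    intro ω hω
    by_cases h : ω ∈ S
    · exact Or.inl ⟨hω.2, h⟩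
    · exact Or.inr (Or.inl ⟨hω.1, h⟩)
  set d := μ.real (symmDiff A S)
  have h5 : μ.real (Z ∩ S) ≤ d * (1 / (1 - θ)) := by
    rw [mul_one_div, le_div_iff₀ hθ']; nlinarith
  have h6 : d * (1 / (1 - θ) + 1) < δ := by
    rwa [lt_div_iff₀ (by positivity)] at hAS
  linarith

lemma int_pull {α : Type*} {m : MeasurableSpace α} [m0 : MeasurableSpace α] (μ : Measure α)
    [IsFiniteMeasure μ] (hm : m ≤ m0) {f g : α → ℝ} (hf : MemLp f 2 μ) (hg : MemLp g 2 μ)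
    (hgm : StronglyMeasurable[m] g) : ∫ ω, f ω * g ω ∂μ = ∫ ω, (μ[f | m]) ω * g ω ∂μ := by
  have hfi : Integrable f μ := hf.integrable (by norm_num)
  have h := condExp_mul_of_stronglyMeasurable_right hgm (hf.integrable_mul hg) hfi
  have h2 := integral_condExp (μ := μ) hm (f := f * g)
  rw [integral_congr_ae h] at h2
  exact h2.symm

/-- If a measure preserving map fixes `f` and maps `D` into `C ≤ D`, then the conditional
expectations agree. -/
lemma ce_eq {α : Type*} {C D : MeasurableSpace α} [m0 : MeasurableSpace α] (μ : Measure α)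
    [IsFiniteMeasure μ] (hCD : C ≤ D) (hD : D ≤ m0) {f : α → ℝ} (hf : MemLp f 2 μ)
    {τ : α → α} (hτ : MeasurePreserving τ μ μ) (hfτ : f ∘ τ = f)
    (hτm : @Measurable _ _ C D τ) : μ[f | D] =ᵐ[μ] μ[f | C] := by
  have hC := hCD.trans hD
  set gD := μ[f | D]
  set gC := μ[f | C]
  have hgDs : StronglyMeasurable[D] gD := stronglyMeasurable_condExp
  have hgCs : StronglyMeasurable[C] gC := stronglyMeasurable_condExp
  have hgD : MemLp gD 2 μ := hf.condExp (by norm_num)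
  have hgC : MemLp gC 2 μ := hf.condExp (by norm_num)
  have hh : MemLp (gD ∘ τ) 2 μ := hgD.comp_measurePreserving hτ
  have hhs : StronglyMeasurable[C] (gD ∘ τ) := hgDs.comp_measurable hτm
  have e1 := int_pull μ hD hf hgD hgDs
  have e2 := int_pull μ hC hf hgC hgCs
  have e3 := int_pull μ hD hf hgC (hgCs.mono hCD)
  have e4 := int_pull μ hC hf hh hhs
  have comp : ∀ F : α → ℝ, AEStronglyMeasurable F μ → ∫ ω, F (τ ω) ∂μ = ∫ ω, F ω ∂μ := by
    intro F hF
    have := integral_map (μ := μ) hτ.measurable.aemeasurable (f := F) (by rwa [hτ.map_eq])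
    rw [hτ.map_eq] at this
    exact this.symm
  have e5 : ∫ ω, f ω * (gD ∘ τ) ω ∂μ = ∫ ω, f ω * gD ω ∂μ := by
    rw [← comp (fun ω => f ω * gD ω) (hf.integrable_mul hgD).aestronglyMeasurable]
    congr 1; ext ω
    have := congrFun hfτ ω
    simp only [Function.comp] at this ⊢
    rw [this]
  have e6 : ∫ ω, (gD ∘ τ) ω * (gD ∘ τ) ω ∂μ = ∫ ω, gD ω * gD ω ∂μ :=
    comp (fun ω => gD ω * gD ω) (hgD.integrable_mul hgD).aestronglyMeasurable
  have sq : ∀ a b : α → ℝ, MemLp a 2 μ → MemLp b 2 μ →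
      ∫ ω, (a ω - b ω) ^ 2 ∂μ = ∫ ω, a ω * a ω ∂μ - 2 * ∫ ω, a ω * b ω ∂μ + ∫ ω, b ω * b ω ∂μ := by
    intro a b ha hb
    have haa : Integrable (fun ω => a ω * a ω) μ := ha.integrable_mul ha
    have hab : Integrable (fun ω => a ω * b ω) μ := ha.integrable_mul hb
    have hbb : Integrable (fun ω => b ω * b ω) μ := hb.integrable_mul hb
    have h1 := integral_sub haa (hab.const_mul 2)
    have h2 := integral_add (haa.sub (hab.const_mul 2)) hbb
    simp only [Pi.sub_apply] at h2
    rw [← integral_const_mul, ← h1, ← h2]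
    congr 1; ext ω; ring
  have s1 := sq gC (gD ∘ τ) hgC hh
  have s2 := sq gD gC hgD hgC
  have p1 : 0 ≤ ∫ ω, (gC ω - (gD ∘ τ) ω) ^ 2 ∂μ := integral_nonneg (fun _ => sq_nonneg _)
  have p2 : 0 ≤ ∫ ω, (gD ω - gC ω) ^ 2 ∂μ := integral_nonneg (fun _ => sq_nonneg _)
  have hz : ∫ ω, (gD ω - gC ω) ^ 2 ∂μ = 0 := by linarith
  have hz := (integral_eq_zero_iff_of_nonneg (fun _ => sq_nonneg _) (hgD.sub hgC).integrable_sq).1 hz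
  filter_upwards [hz] with ω hω
  have : gD ω - gC ω = 0 := by simpa using hω
  linarith

end gen

section arr
variable {K : ℕ}

abbrev TT (K : ℕ) := Fin K × (Fin K → ℕ)

def zz (t : TT K) : Finset (Fin K) := Finset.univ.filter (fun j => t.2 j = 0)

lemma mem_zz {t : TT K} {j : Fin K} : j ∈ zz t ↔ t.2 j = 0 := by simp [zz]

def sh (i : Fin K) (σ : ℕ → ℕ) (t : TT K) : TT K := (t.1, Function.update t.2 i (σ (t.2 i)))

def shift (i : Fin K) (σ : ℕ → ℕ) (ω : TT K → Bool) : TT K → Bool := fun t => ω (sh i σ t)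

/-- invariance under injections -/
def Exch (μ : Measure (TT K → Bool)) : Prop :=
  ∀ (i : Fin K) (σ : ℕ → ℕ), Function.Injective σ → μ.map (shift i σ) = μ

lemma shift_meas (i : Fin K) (σ : ℕ → ℕ) : Measurable (shift i σ) :=
  measurable_pi_lambda _ (fun t => measurable_pi_apply _)

/-- index sets -/
def US (𝒱 : Finset (Finset (Fin K))) (i : Fin K) : Set (TT K) := {t | zz t ∈ 𝒱 ∧ t.2 i ≠ 0}

lemma CI (μ : Measure (TT K → Bool)) [IsFiniteMeasure μ] (hμ : Exch μ)
    (𝒱 : Finset (Finset (Fin K))) (hdown : ∀ a ∈ 𝒱, ∀ b, b ⊆ a → b ∈ 𝒱) (i : Fin K)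
    {S : Set (TT K → Bool)} (hS : MeasurableSet[Bs {t | t.2 i ≠ 0}] S)
    {Q : Set (TT K → Bool)} (hQ : MeasurableSet[Bs {t | zz t ∈ 𝒱}] Q) :
    ∫ ω in Q, (μ[ind S | Bs (US 𝒱 i)]) ω ∂μ = μ.real (S ∩ Q) := by
  have hQm := Bs_le _ _ hQ
  have hSm := Bs_le _ _ hS
  have hsub : US 𝒱 i ⊆ {t | zz t ∈ 𝒱} := fun t ht => ht.1
  -- special case
  have special : ∀ m : ℕ, ∀ S' : Set (TT K → Bool),
      MeasurableSet[Bs {t | t.2 i ≠ 0 ∧ t.2 i ≤ m}] S' →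
      ∫ ω in Q, (μ[ind S' | Bs (US 𝒱 i)]) ω ∂μ = μ.real (S' ∩ Q) := by
    intro m S' hS'
    have hS'm := Bs_le _ _ hS'
    let σ : ℕ → ℕ := fun n => if n = 0 then m + 1 else if n ≤ m then n else n + 1
    have hσ : Function.Injective σ := by
      intro a b h
      simp only [σ] at h
      split_ifs at h <;> omega
    have hpos : ∀ n, σ n ≠ 0 := by
      intro n; simp only [σ]; split_ifs <;> omega
    have hmp : MeasurePreserving (shift i σ) μ μ := ⟨shift_meas i σ, hμ i σ hσ⟩
    have hfix : ind S' ∘ shift i σ = ind S' := by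
      ext ω
      have : shift i σ ω ∈ S' ↔ ω ∈ S' := by
        apply Bs_invariant hS'
        rintro ⟨a, t⟩ ⟨h1, h2⟩
        simp only [shift, sh]
        have : σ (t i) = t i := by
          simp only at h1 h2
          simp [σ, h1, h2]
        simp [this]
      by_cases h : ω ∈ S'
      · simp [ind, h, this.2 h]
      · simp [ind, h, mt this.1 h]
    have hmeas : @Measurable _ _ (Bs (US 𝒱 i)) (Bs {t | zz t ∈ 𝒱}) (shift i σ) := by
      apply meas_to_Bs
      intro t ht
      apply Bs_eval
      refine ⟨hdown _ ht _ ?_, ?_⟩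
      · intro j hj
        rw [mem_zz] at hj ⊢
        by_cases hji : j = i
        · subst hji
          simp [sh, hpos] at hj
        · simpa [sh, Function.update_of_ne hji] using hj
      · simp [sh, hpos]
    have := ce_eq μ (Bs_mono hsub) (Bs_le _) (ind_L2 μ hS'm) hmp hfix hmeas
    rw [← ce_setInt μ hS'm hQ]
    exact integral_congr_ae (ae_restrict_of_ae this.symm)
  have hlim : ∀ δ : ℝ, 0 < δ →
      |∫ ω in Q, (μ[ind S | Bs (US 𝒱 i)]) ω ∂μ - μ.real (S ∩ Q)| ≤ 2 * δ := by
    intro δ hδ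
    obtain ⟨m, S', hS', hd⟩ := approx μ {t : TT K | t.2 i ≠ 0}
      (fun m => {t : TT K | t.2 i ≠ 0 ∧ t.2 i ≤ m})
      (fun a b h t ht => ⟨ht.1, ht.2.trans h⟩)
      (fun t ht => Set.mem_iUnion.2 ⟨t.2 i, ht, le_rfl⟩) hS hδ
    have hS'm := Bs_le _ _ hS'
    have h1 := special m S' hS'
    have h2 : |μ.real (S' ∩ Q) - μ.real (S ∩ Q)| ≤ δ := by
      refine (abs_measureReal_sub_le_measureReal_symmDiff (hS'm.inter hQm).nullMeasurableSet
        (hSm.inter hQm).nullMeasurableSet).trans (le_trans (measureReal_mono ?_) hd.le)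
      intro ω hω
      rcases hω with ⟨⟨a, b⟩, c⟩ | ⟨⟨a, b⟩, c⟩
      · exact Or.inr ⟨a, fun h => c ⟨h, b⟩⟩
      · exact Or.inl ⟨a, fun h => c ⟨h, b⟩⟩
    have h3 : |∫ ω in Q, (μ[ind S | Bs (US 𝒱 i)]) ω ∂μ -
        ∫ ω in Q, (μ[ind S' | Bs (US 𝒱 i)]) ω ∂μ| ≤ δ := by
      rw [← integral_sub integrable_condExp.integrableOn integrable_condExp.integrableOn]
      refine (abs_integral_le_integral_abs).trans ?_
      have hle : ∫ ω in Q, |(μ[ind S | Bs (US 𝒱 i)]) ω - (μ[ind S' | Bs (US 𝒱 i)]) ω| ∂μ ≤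
          ∫ ω, |(μ[ind S | Bs (US 𝒱 i)]) ω - (μ[ind S' | Bs (US 𝒱 i)]) ω| ∂μ :=
        setIntegral_le_integral (integrable_condExp.sub integrable_condExp).abs
          (Filter.Eventually.of_forall fun _ => abs_nonneg _)
      have hsubce := condExp_sub (μ := μ) (ind_int μ hSm) (ind_int μ hS'm) (Bs (US 𝒱 i))
      have h4 : ∫ ω, |(μ[ind S | Bs (US 𝒱 i)]) ω - (μ[ind S' | Bs (US 𝒱 i)]) ω| ∂μ =
          ∫ ω, |(μ[ind S - ind S' | Bs (US 𝒱 i)]) ω| ∂μ := by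
        apply integral_congr_ae
        filter_upwards [hsubce] with ω hω
        rw [hω]; rfl
      have h5 := integral_abs_condExp_le (μ := μ) (m := Bs (US 𝒱 i)) (ind S - ind S')
      have h6 : ∫ ω, |(ind S - ind S') ω| ∂μ = μ.real (symmDiff S S') := by
        rw [← integral_indicator_one (hSm.symmDiff hS'm)]
        congr 1; ext ω
        by_cases a : ω ∈ S <;> by_cases b : ω ∈ S' <;> simp [ind, a, b, Set.mem_symmDiff, Set.indicator]
      linarith
    rw [h1] at h3
    have := abs_sub_le (∫ ω in Q, (μ[ind S | Bs (US 𝒱 i)]) ω ∂μ) (μ.real (S' ∩ Q)) (μ.real (S ∩ Q))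
    linarith
  have h0 : |∫ ω in Q, (μ[ind S | Bs (US 𝒱 i)]) ω ∂μ - μ.real (S ∩ Q)| ≤ 0 := by
    apply le_of_forall_pos_le_add
    intro δ hδ
    have := hlim (δ / 2) (by positivity)
    linarith
  have := abs_nonpos_iff.1 h0
  linarith

theorem core (μ ν : Measure (TT K → Bool)) [IsProbabilityMeasure μ] [IsProbabilityMeasure ν]
    (hμ : Exch μ) (c : ℝ) (hc : 0 < c)
    (hac : ∀ i S, MeasurableSet[Bs {t | t.2 i ≠ 0}] S → ν.real S ≤ c * μ.real S) :
    ∀ 𝒰 : Finset (Finset (Fin K)), (∀ a ∈ 𝒰, ∀ b, b ⊆ a → b ∈ 𝒰) → Finset.univ ∉ 𝒰 →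
    ∀ A : Fin K → Set (TT K → Bool), (∀ i, MeasurableSet[Bs (US 𝒰 i)] (A i)) →
      0 < ν.real (⋂ i, A i) → 0 < μ.real (⋂ i, A i) := by
  intro 𝒰
  induction 𝒰 using Finset.strongInduction with
  | H 𝒰 ih =>
  intro hdown huniv A hA hpos
  rcases 𝒰.eq_empty_or_nonempty with rfl | hne
  · have hall : ∀ i, A i = Set.univ := by
      intro i
      have hne : (⋂ i, A i).Nonempty := by
        by_contra h
        rw [Set.not_nonempty_iff_eq_empty] at h
        simp [h] at hpos
      obtain ⟨ω, hω⟩ := hne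
      ext x
      simp only [Set.mem_univ, iff_true]
      rw [Bs_invariant (hA i) (y := ω) (fun t ht => by simp [US] at ht)]
      exact Set.mem_iInter.1 hω i
    simp [hall]
  obtain ⟨J, hJ⟩ := 𝒰.exists_maximal hne
  have hJU : J ∈ 𝒰 := hJ.1
  set 𝒱 := 𝒰.erase J with h𝒱
  have hVdown : ∀ a ∈ 𝒱, ∀ b, b ⊆ a → b ∈ 𝒱 := by
    intro a ha b hb
    rw [h𝒱, Finset.mem_erase] at ha ⊢
    refine ⟨?_, hdown a ha.2 b hb⟩
    rintro rfl
    exact ha.1 (le_antisymm (hJ.2 ha.2 hb) hb)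
  have hVuniv : Finset.univ ∉ 𝒱 := fun h => huniv (Finset.mem_of_mem_erase h)
  obtain ⟨enc, henc⟩ := Countable.exists_injective_nat (TT K)
  let W : ℕ → Set (TT K) := fun m => {t | zz t = J ∧ enc t < m}
  have hWmono : Monotone W := fun a b h t ht => ⟨ht.1, ht.2.trans_le h⟩
  have hWfin : ∀ m, (W m).Finite := by
    intro m
    apply Set.Finite.subset ((Set.finite_Iio m).preimage henc.injOn)
    intro t ht; exact ht.2
  have hJi : ∀ i, i ∉ J → US 𝒰 i = US 𝒱 i ∪ ⋃ m, W m := by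
    intro i hi
    ext t
    simp only [US, W, h𝒱, Finset.mem_erase, Set.mem_union, Set.mem_iUnion, Set.mem_ofPred_eq]
    constructor
    · rintro ⟨h1, h2⟩
      by_cases h : zz t = J
      · exact Or.inr ⟨enc t + 1, h, Nat.lt_succ_self _⟩
      · exact Or.inl ⟨⟨h, h1⟩, h2⟩
    · rintro (⟨⟨h, h1⟩, h2⟩ | ⟨m, h, -⟩)
      · exact ⟨h1, h2⟩
      · refine ⟨h ▸ hJU, fun h0 => hi ?_⟩
        rw [← h, mem_zz]; exact h0
  have hJi' : ∀ i, i ∈ J → US 𝒰 i ⊆ US 𝒱 i := by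
    rintro i hi t ⟨h1, h2⟩
    refine ⟨Finset.mem_erase.2 ⟨?_, h1⟩, h2⟩
    rintro h
    rw [← h, mem_zz] at hi
    exact h2 hi
  have hUSi : ∀ 𝒲 : Finset (Finset (Fin K)), ∀ i, US 𝒲 i ⊆ {t | t.2 i ≠ 0} := fun _ i t ht => ht.2
  have hUSV : ∀ i, US 𝒱 i ⊆ {t | zz t ∈ 𝒱} := fun i t ht => ht.1
  have hWi : ∀ i, i ∉ J → ∀ m, W m ⊆ {t | t.2 i ≠ 0} := by
    intro i hi m t ht h0
    apply hi; rw [← ht.1, mem_zz]; exact h0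
  obtain ⟨i₀, hi₀⟩ : ∃ i, i ∉ J := by
    by_contra h
    push Not at h
    exact huniv ((Finset.eq_univ_iff_forall.2 h) ▸ hJU)
  have hKpos : (0:ℝ) < K := by
    have : 0 < K := i₀.pos
    exact_mod_cast this
  set θ : ℝ := K / (K + 1) with hθ
  have hθ1 : θ < 1 := by rw [hθ, div_lt_one (by positivity)]; linarith
  set η := ν.real (⋂ i, A i)
  have hAm : ∀ i, MeasurableSet (A i) := fun i => Bs_le _ _ (hA i)
  -- choose m
  have hm : ∃ m, ∀ i, i ∉ J → μ.real (A i ∩ Zset μ (US 𝒱 i) (W m) (A i) θ) ≤ η / (2 * K * c) := by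
    have : ∀ i, ∃ m₀, ∀ m, m₀ ≤ m → i ∉ J →
        μ.real (A i ∩ Zset μ (US 𝒱 i) (W m) (A i) θ) ≤ η / (2 * K * c) := by
      intro i
      by_cases hi : i ∈ J
      · exact ⟨0, fun m _ h => absurd hi h⟩
      · have hA' := hA i
        rw [hJi i hi] at hA'
        obtain ⟨m₀, h⟩ := claimB μ (US 𝒱 i) W hWmono hWfin hA' hθ1
          (δ := η / (2 * K * c)) (by positivity)
        exact ⟨m₀, fun m hm _ => h m hm⟩
    choose m₀ hm₀ using this
    exact ⟨Finset.univ.sup m₀, fun i hi => hm₀ i _ (Finset.le_sup (Finset.mem_univ i)) hi⟩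
  obtain ⟨m, hm⟩ := hm
  let Bad : Fin K → Set (TT K → Bool) := fun i =>
    if i ∈ J then ∅ else A i ∩ Zset μ (US 𝒱 i) (W m) (A i) θ
  have hBad : ∀ i, ν.real (Bad i) ≤ η / (2 * K) := by
    intro i
    by_cases hi : i ∈ J
    · simp only [Bad, hi, if_true, measureReal_empty]; positivity
    · simp only [Bad, hi, if_false]
      have hz := Zset_meas μ (US 𝒱 i) (hWfin m) (A i) θ
      have hmeas : MeasurableSet[Bs {t | t.2 i ≠ 0}] (A i ∩ Zset μ (US 𝒱 i) (W m) (A i) θ) :=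
        @MeasurableSet.inter _ (Bs _) _ _ (Bs_mono (hUSi 𝒰 i) _ (hA i))
          (Bs_mono (Set.union_subset (hUSi 𝒱 i) (hWi i hi m)) _ hz)
      refine (hac i _ hmeas).trans ?_
      calc c * _ ≤ c * (η / (2 * K * c)) := by gcongr; exact hm i hi
        _ = η / (2 * K) := by field_simp
  have hX : 0 < ν.real ((⋂ i, A i) \ ⋃ i, Bad i) := by
    have h1 : ν.real (⋃ i, Bad i) ≤ η / 2 := by
      refine (measureReal_iUnion_fintype_le _).trans ?_
      refine (Finset.sum_le_sum (fun i _ => hBad i)).trans ?_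
      simp only [Finset.sum_const, Finset.card_univ, Fintype.card_fin, nsmul_eq_mul]
      apply le_of_eq; field_simp
    have h2 : η ≤ ν.real ((⋂ i, A i) \ ⋃ i, Bad i) + ν.real (⋃ i, Bad i) := by
      refine le_trans (measureReal_mono ?_) (measureReal_union_le _ _)
      intro ω hω
      by_cases h : ω ∈ ⋃ i, Bad i
      · exact Or.inr h
      · exact Or.inl ⟨hω, h⟩
    linarith
  obtain ⟨R, hR1, hR2⟩ := cell_reps (hWfin m)
  rw [cell_sum ν (hWfin m) hR1 hR2] at hX
  obtain ⟨κ, hκR, hκ⟩ : ∃ κ ∈ R, 0 < ν.real (((⋂ i, A i) \ ⋃ i, Bad i) ∩ cell (W m) κ) := by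
    by_contra h
    push Not at h
    exact absurd (Finset.sum_nonpos h) (not_le.2 hX)
  set ce := cell (W m) κ with hce
  let A' : Fin K → Set (TT K → Bool) := fun i =>
    if i ∈ J then A i else (qset μ (US 𝒱 i) (W m) (A i) θ κ)ᶜ
  have hA' : ∀ i, MeasurableSet[Bs (US 𝒱 i)] (A' i) := by
    intro i
    by_cases hi : i ∈ J
    · simp only [A', hi, if_true]
      exact Bs_mono (hJi' i hi) _ (hA i)
    · simp only [A', hi, if_false]
      exact @MeasurableSet.compl _ _ (Bs (US 𝒱 i)) (qset_meas μ (US 𝒱 i) (W m) (A i) θ κ)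
  have hνA' : 0 < ν.real (⋂ i, A' i) := by
    refine hκ.trans_le (measureReal_mono ?_)
    rintro ω ⟨⟨h1, h2⟩, h3⟩
    rw [Set.mem_iInter] at h1 ⊢
    intro i
    by_cases hi : i ∈ J
    · simp only [A', hi, if_true]; exact h1 i
    · simp only [A', hi, if_false]
      intro hq
      apply h2
      rw [Set.mem_iUnion]
      refine ⟨i, ?_⟩
      simp only [Bad, hi, if_false]
      have : ω ∈ qset μ (US 𝒱 i) (W m) (A i) θ κ ∩ cell (W m) κ := ⟨hq, h3⟩
      rw [← Zset_cell] at this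
      exact ⟨h1 i, this.1⟩
  have hQpos := ih 𝒱 (Finset.erase_ssubset hJU) hVdown hVuniv A' hA' hνA'
  set Q := ⋂ i, A' i with hQdef
  have hQ : MeasurableSet[Bs {t | zz t ∈ 𝒱}] Q :=
    @MeasurableSet.iInter _ _ (Bs _) _ _ (fun i => Bs_mono (hUSV i) _ (hA' i))
  have hQm : MeasurableSet Q := Bs_le _ _ hQ
  have hcem : MeasurableSet ce := Bs_le _ _ (cell_meas (hWfin m) κ)
  have hci : ∀ i, i ∉ J → MeasurableSet[Bs {t | t.2 i ≠ 0}] ce := fun i hi =>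
    Bs_mono (hWi i hi m) _ (cell_meas (hWfin m) κ)
  have hcA : ∀ i, i ∉ J → MeasurableSet[Bs {t | t.2 i ≠ 0}] (A i ∩ ce) := fun i hi =>
    @MeasurableSet.inter _ (Bs _) _ _ (Bs_mono (hUSi 𝒰 i) _ (hA i)) (hci i hi)
  have hlt : ∀ i, i ∉ J → ∀ ω ∈ Q, θ * (μ[ind ce | Bs (US 𝒱 i)]) ω <
      (μ[ind (A i ∩ ce) | Bs (US 𝒱 i)]) ω := by
    intro i hi ω hω
    have := Set.mem_iInter.1 hω i
    simp only [A', hi, if_false, qset, Set.mem_compl_iff, Set.mem_ofPred_eq, not_le] at this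
    exact this
  have hge : ∀ i, i ∉ J → θ * μ.real (ce ∩ Q) ≤ μ.real (A i ∩ ce ∩ Q) := by
    intro i hi
    rw [← CI μ hμ 𝒱 hVdown i (hci i hi) hQ, ← CI μ hμ 𝒱 hVdown i (hcA i hi) hQ,
      ← integral_const_mul]
    exact setIntegral_mono_on (integrable_condExp.const_mul θ).integrableOn
      integrable_condExp.integrableOn hQm (fun ω hω => (hlt i hi ω hω).le)
  have hcQ : 0 < μ.real (ce ∩ Q) := by
    by_contra hcon
    have h0 : μ.real (ce ∩ Q) = 0 := le_antisymm (not_lt.1 hcon) measureReal_nonneg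
    have h1 : μ.real (A i₀ ∩ ce ∩ Q) = 0 := by
      apply le_antisymm _ measureReal_nonneg
      rw [← h0]
      exact measureReal_mono (fun ω hω => ⟨hω.1.2, hω.2⟩)
    rw [← CI μ hμ 𝒱 hVdown i₀ (hci i₀ hi₀) hQ] at h0
    rw [← CI μ hμ 𝒱 hVdown i₀ (hcA i₀ hi₀) hQ] at h1
    set g1 := μ[ind ce | Bs (US 𝒱 i₀)]
    set g2 := μ[ind (A i₀ ∩ ce) | Bs (US 𝒱 i₀)]
    have hi1 : IntegrableOn g1 Q μ := integrable_condExp.integrableOn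
    have hi2 : IntegrableOn g2 Q μ := integrable_condExp.integrableOn
    have h2 : ∫ ω in Q, (g2 ω - θ * g1 ω) ∂μ = 0 := by
      rw [integral_sub hi2 (hi1.const_mul θ), integral_const_mul, h0, h1]; simp
    have h3 : 0 < ∫ ω in Q, (g2 ω - θ * g1 ω) ∂μ := by
      have hint : IntegrableOn (fun ω => g2 ω - θ * g1 ω) Q μ := hi2.sub (hi1.const_mul θ)
      refine (setIntegral_pos_iff_support_of_nonneg_ae ?_ hint).2 ?_
      rotate_left
      · have : Function.support (fun ω => g2 ω - θ * g1 ω) ∩ Q = Q := by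
          rw [Set.inter_eq_right]
          intro ω hω
          have := hlt i₀ hi₀ ω hω
          exact (sub_pos.2 this).ne'
        have h4 : (fun ω => g2 ω - θ * g1 ω) = g2 - (fun ω => θ * g1 ω) := rfl
        rw [this]
        by_contra h5
        have : μ Q = 0 := by simpa using h5
        simp [Measure.real, this] at hQpos
      · filter_upwards [ae_restrict_mem hQm] with ω hω
        exact (sub_pos.2 (hlt i₀ hi₀ ω hω)).le
    linarith
  have hdiff : ∀ i, μ.real ((ce ∩ Q) \ A i) ≤ (1 - θ) * μ.real (ce ∩ Q) := by
    intro i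
    by_cases hi : i ∈ J
    · have : (ce ∩ Q) \ A i = ∅ := by
        ext ω
        simp only [Set.mem_sdiff, Set.mem_empty_iff_false, iff_false, not_and, not_not]
        rintro ⟨-, hω⟩
        have := Set.mem_iInter.1 hω i
        simpa only [A', hi, if_true] using this
      rw [this, measureReal_empty]
      have : 0 < 1 - θ := by linarith
      positivity
    · have h1 := measureReal_inter_add_sdiff (μ := μ) (s := ce ∩ Q) (hAm i)
      have h2 : ce ∩ Q ∩ A i = A i ∩ ce ∩ Q := by
        ext; simp; tauto
      rw [h2] at h1
      have := hge i hi
      linarith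
  have hfin : μ.real (ce ∩ Q) ≤ μ.real (⋂ i, A i) + ∑ i, μ.real ((ce ∩ Q) \ A i) := by
    refine le_trans (measureReal_mono ?_) ((measureReal_union_le _ _).trans
      (add_le_add_right (measureReal_iUnion_fintype_le (fun i => (ce ∩ Q) \ A i)) _))
    intro ω hω
    by_cases h : ∀ i, ω ∈ A i
    · exact Or.inl (Set.mem_iInter.2 h)
    · push Not at h
      obtain ⟨i, hi⟩ := h
      exact Or.inr (Set.mem_iUnion.2 ⟨i, hω, hi⟩)
  have hsum : ∑ i, μ.real ((ce ∩ Q) \ A i) ≤ K * ((1 - θ) * μ.real (ce ∩ Q)) := by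
    refine (Finset.sum_le_sum (fun i _ => hdiff i)).trans ?_
    simp
  have hKθ : K * (1 - θ) < 1 := by
    have : (1 - θ) = 1 / (K + 1) := by rw [hθ]; field_simp; ring
    rw [this, mul_one_div, div_lt_one (by positivity)]; linarith
  nlinarith

/-! finite model -/

noncomputable def unif (n : ℕ) : Measure (Fin n) := (n : ENNReal)⁻¹ • Measure.count

instance unif_prob (n : ℕ) [NeZero n] : IsProbabilityMeasure (unif n) := by
  constructor
  simp only [unif, Measure.smul_apply, smul_eq_mul, Measure.count_univ, ENat.card_eq_coe_fintype_card, Fintype.card_fin]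
  exact ENNReal.inv_mul_cancel (by simpa using NeZero.ne n) (by simp)

lemma unif_singleton (n : ℕ) (x : Fin n) : unif n {x} = (n : ENNReal)⁻¹ := by
  simp [unif]

lemma unif_map (n : ℕ) (f : Fin n ≃ Fin n) : (unif n).map f = unif n := by
  refine Measure.ext_of_singleton fun x => ?_
  rw [Measure.map_apply (Measurable.of_discrete) (measurableSet_singleton _)]
  have : f ⁻¹' {x} = {f.symm x} := by
    ext y; simp [Equiv.eq_symm_apply]
  rw [this, unif_singleton, unif_singleton]

lemma reindex {ι ι' : Type*} (n : ℕ) [NeZero n] (s : ι' → ι) (hs : Function.Injective s) :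
    (Measure.infinitePi (fun _ : ι => unif n)).map (fun y : ι → Fin n => fun i => y (s i)) =
      Measure.infinitePi (fun _ : ι' => unif n) := by
  classical
  refine Measure.eq_infinitePi _ fun F t ht => ?_
  rw [Measure.map_apply (by fun_prop) (.pi F.countable_toSet fun _ _ => ht _)]
  have : (fun y : ι → Fin n => fun i => y (s i)) ⁻¹' (Set.pi F t) =
      Set.pi (F.image s : Finset ι) (fun j => {v | ∀ i, s i = j → v ∈ t i}) := by
    ext y
    simp only [Set.mem_preimage, Set.mem_pi, Finset.coe_image, Set.mem_image, Finset.mem_coe,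
      Set.mem_ofPred_eq]
    constructor
    · rintro h j ⟨i, hi, rfl⟩ i' hi'
      rw [hs hi']; exact h i hi
    · intro h i hi
      exact h (s i) ⟨i, hi, rfl⟩ i rfl
  rw [this, Measure.infinitePi_pi _ (fun _ _ => MeasurableSet.of_discrete), Finset.prod_image hs.injOn]
  refine Finset.prod_congr rfl fun i _ => ?_
  congr 1
  ext v
  simp only [Set.mem_ofPred_eq]
  constructor
  · intro h; exact h i rfl
  · intro h i' hi'; rw [hs hi']; exact h

open Classical in
noncomputable def arrD {n : ℕ} (D : Finset (Fin K → Fin n)) (y : Fin K × ℕ → Fin n) : TT K → Bool :=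
  fun t => decide (∃ x ∈ D, ∀ j, j ≠ t.1 → x j = y (j, t.2 j))

lemma arrD_meas {n : ℕ} (D : Finset (Fin K → Fin n)) : Measurable (arrD D) := by
  classical
  refine measurable_pi_lambda _ fun t => ?_
  let f : (Fin K → Fin n) → Bool := fun z => decide (∃ x ∈ D, ∀ j, j ≠ t.1 → x j = z j)
  have hf : Measurable f := Measurable.of_discrete
  have hg : Measurable (fun y : Fin K × ℕ → Fin n => fun j => y (j, t.2 j)) := by fun_prop
  have := hf.comp hg
  convert this using 1
  ext y
  simp [arrD, f]

def aa (i : Fin K) : TT K := (i, fun j => if j = i then 1 else 0)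

def AA (i : Fin K) : Set (TT K → Bool) := {ω | ω (aa i) = true}

def ss (i : Fin K) (σ : ℕ → ℕ) (p : Fin K × ℕ) : Fin K × ℕ := if p.1 = i then (p.1, σ p.2) else p

lemma ss_inj (i : Fin K) {σ : ℕ → ℕ} (hσ : Function.Injective σ) : Function.Injective (ss i σ) := by
  rintro ⟨a, b⟩ ⟨a', b'⟩ h
  simp only [ss] at h
  by_cases h1 : a = i <;> by_cases h2 : a' = i
  · simp only [h1, h2, if_true, Prod.mk.injEq, true_and] at h
    rw [h1, h2, hσ h]
  · simp only [h1, h2, if_true, if_false, Prod.mk.injEq] at h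
    exact absurd h.1.symm h2
  · simp only [h1, h2, if_true, if_false, Prod.mk.injEq] at h
    exact h.1.elim
  · simpa only [h1, h2, if_false] using h

lemma AA_meas (i : Fin K) : MeasurableSet (AA i) :=
  measurableSet_eq_fun (measurable_pi_apply (aa i)) measurable_const

lemma cond_real {α : Type*} [MeasurableSpace α] {P : Measure α} {G : Set α} (hG : MeasurableSet G)
    (S : Set α) : (ProbabilityTheory.cond P G).real S = (P.real G)⁻¹ * P.real (G ∩ S) := by
  simp [Measure.real, ProbabilityTheory.cond_apply hG]

set_option maxHeartbeats 1000000 in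
theorem finite_model (n : ℕ) (hn : 0 < n) (m : ℕ) (δ : ℝ) (hδ : 0 < δ) (hK : 0 < K)
    (D : Finset (Fin K → Fin n))
    (ha : ∀ i : Fin K, ∀ y : Fin K → Fin n, (Finset.univ.filter (fun d : Fin n => Function.update y i d ∈ D)).card ≤ m)
    (hb : δ * (n : ℝ) ^ (K - 1) ≤ D.card)
    (hcc : ∀ c : Fin K → Fin n, (∀ i, ∃ x ∈ D, ∀ j, j ≠ i → x j = c j) → c ∈ D) :
    ∃ μ ν : ProbabilityMeasure (TT K → Bool), Exch (μ : Measure (TT K → Bool)) ∧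
      (∀ i S, MeasurableSet[Bs {t | t.2 i ≠ 0}] S →
        (ν : Measure (TT K → Bool)).real S ≤ (m / δ) * (μ : Measure (TT K → Bool)).real S) ∧
      (ν : Measure (TT K → Bool)).real (⋂ i, AA i) = 1 ∧
      (μ : Measure (TT K → Bool)).real (⋂ i, AA i) ≤ m / n := by
  have : NeZero n := ⟨hn.ne'⟩
  have hn' : (0:ℝ) < n := by exact_mod_cast hn
  set P := Measure.infinitePi (fun _ : Fin K × ℕ => unif n) with hP
  set G : Set (Fin K × ℕ → Fin n) := {y | (fun j => y (j, 0)) ∈ D} with hG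
  have hev : Measurable (fun y : Fin K × ℕ → Fin n => fun j : Fin K => y (j, 0)) := by fun_prop
  have hGm : MeasurableSet G := hev (MeasurableSet.of_discrete (s := (D : Set (Fin K → Fin n))))
  have hPG : P.real G = D.card / (n : ℝ) ^ K := by
    have h1 : P G = ∑ x ∈ D, (n : ENNReal)⁻¹ ^ K := by
      have := reindex n (fun j : Fin K => (j, 0)) (fun a b h => by simpa using h)
      rw [← hP] at this
      have h2 : P G = (P.map (fun y : Fin K × ℕ → Fin n => fun j : Fin K => y (j, 0))) (D : Set (Fin K → Fin n)) := by
        rw [Measure.map_apply hev MeasurableSet.of_discrete]; rfl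
      rw [h2, this, ← sum_measure_singleton]
      refine Finset.sum_congr rfl fun x _ => ?_
      simp [Measure.infinitePi_singleton_of_fintype, unif_singleton]
    simp [Measure.real, h1, div_eq_mul_inv]
  have hPG1 : δ / n ≤ P.real G := by
    rw [hPG, div_le_div_iff₀ hn' (by positivity)]
    calc δ * (n:ℝ) ^ K = δ * (n:ℝ) ^ (K - 1) * n := by
          rw [mul_assoc, ← pow_succ, Nat.sub_add_cancel hK]
      _ ≤ _ := by gcongr
  have hPG0 : 0 < P.real G := lt_of_lt_of_le (by positivity) hPG1
  -- key estimate
  have key : ∀ (i : Fin K) (X : Set (Fin K × ℕ → Fin n)), MeasurableSet X →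
      (∀ y y', (∀ p, p ≠ (i, 0) → y p = y' p) → y ∈ X → y' ∈ X) →
      P.real (G ∩ X) ≤ m / n * P.real X := by
    intro i X hX hinv
    let τ : Fin n → (Fin K × ℕ → Fin n) → (Fin K × ℕ → Fin n) := fun d y p =>
      (if p = (i, 0) then Equiv.addRight d else Equiv.refl (Fin n)) (y p)
    have hτm : ∀ d, Measurable (τ d) := by
      intro d
      refine measurable_pi_lambda _ fun p => ?_
      exact Measurable.of_discrete.comp (measurable_pi_apply p)
    have hτ : ∀ d, P.map (τ d) = P := by
      intro d
      rw [hP, Measure.infinitePi_map_pi (fun _ => unif n) (f := fun p => ⇑(if p = (i, 0) then Equiv.addRight d else Equiv.refl (Fin n))) (fun _ => Measurable.of_discrete)]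
      congr 1
      ext1 p
      exact unif_map n _
    have hX' : ∀ d y, τ d y ∈ X ↔ y ∈ X := by
      intro d y
      constructor
      · exact hinv _ _ fun p hp => by simp [τ, hp]
      · exact hinv _ _ fun p hp => by simp [τ, hp]
    have h1 : ∀ d, P.real (G ∩ X) = ∫ y in X, (τ d ⁻¹' G).indicator 1 y ∂P := by
      intro d
      rw [integral_indicator_one (hτm d hGm), measureReal_restrict_apply (hτm d hGm)]
      conv_lhs => rw [← hτ d]
      rw [map_measureReal_apply (hτm d) (hGm.inter hX)]
      congr 1
      ext y
      simp [hX']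
    have hint : ∀ d, Integrable ((τ d ⁻¹' G).indicator (1 : (Fin K × ℕ → Fin n) → ℝ)) (P.restrict X) := fun d =>
      (integrable_const (1:ℝ)).indicator (hτm d hGm)
    have h2 : n * P.real (G ∩ X) = ∫ y in X, ∑ d : Fin n, (τ d ⁻¹' G).indicator (1 : (Fin K × ℕ → Fin n) → ℝ) y ∂P := by
      rw [integral_finsetSum _ (fun d _ => hint d), ← Finset.sum_congr rfl (fun d _ => h1 d)]
      simp
    have h3 : ∀ y, ∑ d : Fin n, (τ d ⁻¹' G).indicator (1 : (Fin K × ℕ → Fin n) → ℝ) y ≤ m := by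
      intro y
      classical
      have : ∑ d : Fin n, (τ d ⁻¹' G).indicator (1 : (Fin K × ℕ → Fin n) → ℝ) y =
          ((Finset.univ.filter (fun d => τ d y ∈ G)).card : ℝ) := by
        rw [Finset.card_filter]; push_cast
        refine Finset.sum_congr rfl fun d _ => ?_
        simp [Set.indicator]
      rw [this]
      norm_cast
      refine le_trans ?_ (ha i (fun j => y (j, 0)))
      refine Finset.card_le_card_of_injOn (fun d => y (i, 0) + d) ?_ ?_
      · intro d hd
        simp only [Finset.coe_filter, Finset.mem_univ, true_and, Set.mem_ofPred_eq, hG] at hd ⊢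
        convert hd using 1
        ext1 j
        by_cases hj : j = i
        · subst hj; simp [τ]
        · simp [τ, hj, Function.update_of_ne hj]
      · intro a _ b _ h
        simpa using h
    have h4 : n * P.real (G ∩ X) ≤ m * P.real X := by
      rw [h2]
      refine (integral_mono (integrable_finsetSum _ fun d _ => hint d) (integrable_const (m:ℝ)) h3).trans ?_
      simp [mul_comm]
    rw [div_mul_eq_mul_div, le_div_iff₀ hn']
    linarith
  have hPG2 : P.real G ≤ m / n := by
    have := key ⟨0, hK⟩ Set.univ MeasurableSet.univ (fun _ _ _ _ => trivial)
    simpa using this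
  have harr := arrD_meas D
  have hcp : IsProbabilityMeasure (ProbabilityTheory.cond P G) :=
    ProbabilityTheory.cond_isProbabilityMeasure (by
      intro h; simp [Measure.real, h] at hPG0)
  have hAAm : MeasurableSet (⋂ i : Fin K, AA i) :=
    MeasurableSet.iInter fun i => AA_meas i
  have hAG : arrD D ⁻¹' (⋂ i, AA i) = G := by
    ext y
    simp only [Set.mem_preimage, Set.mem_iInter, AA, aa, arrD, Set.mem_ofPred_eq, decide_eq_true_eq, hG]
    have : ∀ i j : Fin K, j ≠ i → y (j, if j = i then 1 else 0) = y (j, 0) := by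
      intro i j h; simp [h]
    constructor
    · intro h
      apply hcc
      intro i
      obtain ⟨x, hx, hxx⟩ := h i
      exact ⟨x, hx, fun j hj => by rw [hxx j hj, this i j hj]⟩
    · intro h i
      exact ⟨_, h, fun j hj => by rw [this i j hj]⟩
  have hPm : IsProbabilityMeasure (P.map (arrD D)) := Measure.isProbabilityMeasure_map harr.aemeasurable
  have hCm : IsProbabilityMeasure ((ProbabilityTheory.cond P G).map (arrD D)) :=
    Measure.isProbabilityMeasure_map harr.aemeasurable
  refine ⟨⟨P.map (arrD D), hPm⟩, ⟨(ProbabilityTheory.cond P G).map (arrD D), hCm⟩, ?_, ?_, ?_, ?_⟩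
  · intro i σ hσ
    simp only [ProbabilityMeasure.coe_mk]
    rw [Measure.map_map (shift_meas i σ) harr]
    let s : Fin K × ℕ → Fin K × ℕ := ss i σ
    have hs : Function.Injective s := ss_inj i hσ
    have h1 : shift i σ ∘ arrD D = arrD D ∘ (fun y : Fin K × ℕ → Fin n => fun p => y (s p)) := by
      ext y t
      have : ∀ j, y (j, Function.update t.2 i (σ (t.2 i)) j) = y (s (j, t.2 j)) := by
        intro j
        by_cases hj : j = i
        · subst hj; simp [s, ss]
        · simp [s, ss, hj, Function.update_of_ne hj]
      simp only [Function.comp, shift, sh, arrD, this]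
    rw [h1, ← Measure.map_map harr (by fun_prop), hP, reindex n s hs]
  · intro i S hS
    have hSm := Bs_le _ _ hS
    simp only [ProbabilityMeasure.coe_mk]
    rw [map_measureReal_apply harr hSm, map_measureReal_apply harr hSm,
      cond_real hGm]
    have := key i (arrD D ⁻¹' S) (harr hSm) (by
      intro y y' hyy hy
      refine (Bs_invariant hS ?_).1 hy
      intro t ht
      have : ∀ j, y (j, t.2 j) = y' (j, t.2 j) := by
        intro j
        apply hyy
        intro h
        simp only [Prod.mk.injEq] at h
        apply ht
        rw [← h.1]; exact h.2
      simp only [arrD, this])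
    rw [inv_mul_le_iff₀ hPG0]
    refine this.trans ?_
    have h0 : 0 ≤ P.real (arrD D ⁻¹' S) := measureReal_nonneg
    calc (m:ℝ) / n * P.real (arrD D ⁻¹' S) = (δ / n) * (m / δ * P.real (arrD D ⁻¹' S)) := by
          field_simp
      _ ≤ _ := by gcongr
  · simp only [ProbabilityMeasure.coe_mk]
    rw [map_measureReal_apply harr hAAm, hAG, cond_real hGm, Set.inter_self]
    exact inv_mul_cancel₀ hPG0.ne'
  · simp only [ProbabilityMeasure.coe_mk]
    rw [map_measureReal_apply harr hAAm, hAG]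
    exact hPG2

lemma clopen_of_finite {W : Set (TT K)} (hW : W.Finite) {S : Set (TT K → Bool)}
    (hS : MeasurableSet[Bs W] S) : IsClopen S := by
  have := hW.to_subtype
  let f : (TT K → Bool) → (W → Bool) := fun ω t => ω t
  have hf : Continuous f := by fun_prop
  have : S = f ⁻¹' (f '' S) := by
    ext ω
    constructor
    · intro h; exact ⟨ω, h, rfl⟩
    · rintro ⟨ω', h, h2⟩
      refine (Bs_invariant hS ?_).1 h
      intro t ht
      exact congrFun h2 ⟨t, ht⟩
  rw [this]
  exact (isClopen_discrete _).preimage hf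

theorem simplex_removal (K : ℕ) (hK : 0 < K) (m : ℕ) (δ : ℝ) (hδ : 0 < δ) :
    ∃ N : ℕ, ∀ n, N ≤ n → ∀ D : Finset (Fin K → Fin n),
      (∀ i : Fin K, ∀ y : Fin K → Fin n,
        (Finset.univ.filter (fun d : Fin n => Function.update y i d ∈ D)).card ≤ m) →
      (∀ c : Fin K → Fin n, (∀ i, ∃ x ∈ D, ∀ j, j ≠ i → x j = c j) → c ∈ D) →
      (D.card : ℝ) ≤ δ * (n : ℝ) ^ (K - 1) := by
  by_contra hcon
  push Not at hcon
  have hex : ∀ N : ℕ, ∃ μ ν : ProbabilityMeasure (TT K → Bool), Exch (μ : Measure (TT K → Bool)) ∧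
      (∀ i S, MeasurableSet[Bs {t | t.2 i ≠ 0}] S →
        (ν : Measure (TT K → Bool)).real S ≤ (m / δ) * (μ : Measure (TT K → Bool)).real S) ∧
      (ν : Measure (TT K → Bool)).real (⋂ i, AA i) = 1 ∧
      (μ : Measure (TT K → Bool)).real (⋂ i, AA i) ≤ m / (N + 1 : ℝ) := by
    intro N
    obtain ⟨n, hn, D, ha, hc, hb⟩ := hcon (N + 1)
    obtain ⟨μ, ν, h1, h2, h3, h4⟩ := finite_model n (by omega) m δ hδ hK D ha hb.le hc
    refine ⟨μ, ν, h1, h2, h3, h4.trans ?_⟩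
    have : ((N:ℝ) + 1) ≤ n := by exact_mod_cast hn
    gcongr
  choose μs νs hex hac h1 h0 using hex
  let L : Ultrafilter ℕ := Filter.hyperfilter ℕ
  have hL : (L : Filter ℕ) ≤ Filter.atTop := Nat.hyperfilter_le_atTop
  obtain ⟨μ, -, hμ⟩ := isCompact_univ.ultrafilter_le_nhds (L.map μs) (by simp)
  obtain ⟨ν, -, hν⟩ := isCompact_univ.ultrafilter_le_nhds (L.map νs) (by simp)
  have hμ : Filter.Tendsto μs L (nhds μ) := hμ
  have hν : Filter.Tendsto νs L (nhds ν) := hν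
  have limr : ∀ (ρs : ℕ → ProbabilityMeasure (TT K → Bool)) ρ, Filter.Tendsto ρs L (nhds ρ) →
      ∀ S, IsClopen S → Filter.Tendsto (fun N => (ρs N : Measure (TT K → Bool)).real S) L
        (nhds ((ρ : Measure (TT K → Bool)).real S)) := by
    intro ρs ρ h S hS
    have := ProbabilityMeasure.tendsto_measure_of_isClopen_of_tendsto h hS
    exact (NNReal.tendsto_coe.2 this)
  have hAAc : IsClopen (⋂ i : Fin K, AA i) := by
    apply isClopen_iInter_of_finite
    intro i
    exact (isClopen_discrete ({true} : Set Bool)).preimage (continuous_apply (aa i))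
  have hν1 : (ν : Measure (TT K → Bool)).real (⋂ i, AA i) = 1 := by
    have := limr νs ν hν _ hAAc
    simp only [h1] at this
    exact tendsto_nhds_unique this tendsto_const_nhds
  have hμ0 : (μ : Measure (TT K → Bool)).real (⋂ i, AA i) ≤ 0 := by
    have := limr μs μ hμ _ hAAc
    refine le_of_tendsto_of_tendsto this ?_ (Filter.Eventually.of_forall h0)
    have h2 := (tendsto_one_div_add_atTop_nhds_zero_nat (𝕜 := ℝ)).const_mul (m:ℝ)
    simp only [mul_zero, mul_one_div] at h2
    exact h2.mono_left hL
  have hexch : Exch (μ : Measure (TT K → Bool)) := by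
    intro i σ hσ
    have hcont : Continuous (shift i σ) := continuous_pi fun t => continuous_apply _
    have h2 := ProbabilityMeasure.tendsto_map_of_tendsto_of_continuous μs μ hμ hcont
    have h3 : (fun N => (μs N).map hcont.measurable.aemeasurable) = μs := by
      ext1 N
      apply Subtype.ext
      exact hex N i σ hσ
    rw [h3] at h2
    have := tendsto_nhds_unique h2 hμ
    exact congrArg Subtype.val this
  have hc0 : (0:ℝ) ≤ m / δ := by positivity
  have hacl : ∀ i S, MeasurableSet[Bs {t | t.2 i ≠ 0}] S →
      (ν : Measure (TT K → Bool)).real S ≤ (m / δ + 1) * (μ : Measure (TT K → Bool)).real S := by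
    intro i S hS
    obtain ⟨enc, henc⟩ := Countable.exists_injective_nat (TT K)
    have hSm := Bs_le _ _ hS
    have hstep : ∀ η : ℝ, 0 < η → (ν : Measure (TT K → Bool)).real S ≤
        (m / δ) * (μ : Measure (TT K → Bool)).real S + (m / δ + 1) * η := by
      intro η hη
      obtain ⟨M, S', hS', hd⟩ := approx ((μ : Measure (TT K → Bool)) + (ν : Measure (TT K → Bool))) {t : TT K | t.2 i ≠ 0}
        (fun M => {t : TT K | t.2 i ≠ 0 ∧ enc t < M})
        (fun a b h t ht => ⟨ht.1, ht.2.trans_le h⟩)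
        (fun t ht => Set.mem_iUnion.2 ⟨enc t + 1, ht, Nat.lt_succ_self _⟩) hS hη
      have hfin : {t : TT K | t.2 i ≠ 0 ∧ enc t < M}.Finite := by
        apply Set.Finite.subset ((Set.finite_Iio M).preimage henc.injOn)
        intro t ht; exact ht.2
      have hcl := clopen_of_finite hfin hS'
      have hS'm := Bs_le _ _ hS'
      have hle : (ν : Measure (TT K → Bool)).real S' ≤ (m / δ) * (μ : Measure (TT K → Bool)).real S' :=
        le_of_tendsto_of_tendsto (limr νs ν hν _ hcl) ((limr μs μ hμ _ hcl).const_mul _)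
          (Filter.Eventually.of_forall fun N => hac N i S' (Bs_mono (fun t ht => ht.1) _ hS'))
      rw [measureReal_add_apply] at hd
      have e1 := abs_measureReal_sub_le_measureReal_symmDiff (μ := (μ : Measure (TT K → Bool)))
        hSm.nullMeasurableSet hS'm.nullMeasurableSet
      have e2 := abs_measureReal_sub_le_measureReal_symmDiff (μ := (ν : Measure (TT K → Bool)))
        hSm.nullMeasurableSet hS'm.nullMeasurableSet
      have p1 : 0 ≤ (μ : Measure (TT K → Bool)).real (symmDiff S S') := measureReal_nonneg
      have p2 : 0 ≤ (ν : Measure (TT K → Bool)).real (symmDiff S S') := measureReal_nonneg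
      rw [abs_le] at e1 e2
      have e3 : (μ : Measure (TT K → Bool)).real S' ≤ (μ : Measure (TT K → Bool)).real S + η := by linarith
      have e4 := mul_le_mul_of_nonneg_left e3 hc0
      linarith
    have hlim : (ν : Measure (TT K → Bool)).real S ≤ (m / δ) * (μ : Measure (TT K → Bool)).real S := by
      apply le_of_forall_pos_le_add
      intro η hη
      have := hstep (η / (m / δ + 1)) (by positivity)
      rwa [mul_div_cancel₀ _ (by positivity)] at this
    have : 0 ≤ (μ : Measure (TT K → Bool)).real S := measureReal_nonneg
    linarith
  have := core (μ : Measure (TT K → Bool)) ν hexch (m / δ + 1) (by positivity) hacl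
    (Finset.univ.erase Finset.univ) ?_ (by simp) AA ?_ (by rw [hν1]; exact one_pos)
  · linarith
  · intro a ha b hb
    simp only [Finset.mem_erase, Finset.mem_univ, and_true] at ha ⊢
    rintro rfl
    exact ha (Finset.univ_subset_iff.1 hb)
  · intro i
    have hai : aa i ∈ US (Finset.univ.erase (Finset.univ : Finset (Fin K))) i := by
      refine ⟨?_, by simp [aa]⟩
      simp only [Finset.mem_erase, Finset.mem_univ, and_true]
      intro h
      have := Finset.mem_univ i
      rw [← h, mem_zz] at this
      simp [aa] at this
    exact (Bs_eval hai) (measurableSet_singleton true)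

end arr
lemma union_bound {n r k u : ℕ} (hk : k ≤ r) (S : Finset (Finset (Fin n))) (hS : ∀ A ∈ S, A.card = r)
    (U : Finset (Fin n)) (hU : U.card ≤ u) (hSU : ∀ A ∈ S, k ≤ (A ∩ U).card) :
    (S.biUnion id).card ≤ S.card * (r - k) + u := by
  have h1 : S.biUnion id ⊆ S.biUnion (fun A => A \ U) ∪ U := by
    intro x hx
    simp only [Finset.mem_biUnion, id, Finset.mem_union, Finset.mem_sdiff] at hx ⊢
    obtain ⟨A, hA, hxA⟩ := hx
    by_cases h : x ∈ U
    · exact Or.inr h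
    · exact Or.inl ⟨A, hA, hxA, h⟩
  have h2 : (S.biUnion (fun A => A \ U)).card ≤ S.card * (r - k) := by
    refine Finset.card_biUnion_le_card_mul _ _ _ ?_
    intro A hA
    have e1 := Finset.card_sdiff_add_card_inter A U
    have e2 := hSU A hA
    have e3 := hS A hA
    omega
  have h3 := Finset.card_le_card h1
  have h4 := Finset.card_union_le (S.biUnion (fun A => A \ U)) U
  omega

lemma comb {n r k e : ℕ} (h1 : k + 1 ≤ r) (h2 : e ≤ k + 1) (he : 3 ≤ e) (H : Finset (Finset (Fin n)))
    (hr : ∀ A ∈ H, A.card = r) (hG : GFree H (e * (r - k) + k + 1) e) :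
    ∃ D : Finset (Fin (k + 1) → Fin n), H.card ≤ e * D.card ∧
      (∀ i : Fin (k + 1), ∀ y : Fin (k + 1) → Fin n,
        (Finset.univ.filter (fun d : Fin n => Function.update y i d ∈ D)).card ≤ e) ∧
      (∀ c : Fin (k + 1) → Fin n, (∀ i, ∃ x ∈ D, ∀ j, j ≠ i → x j = c j) → c ∈ D) := by
  classical
  by_cases hn : n = 0
  · subst hn
    refine ⟨∅, ?_, by simp, fun c => (c 0).elim0⟩
    have : H = ∅ := by
      rw [Finset.eq_empty_iff_forall_notMem]
      intro A hA
      have e1 := hr A hA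
      have e2 := Finset.card_le_univ A
      simp at e2
      simp [e2] at e1
      omega
    simp [this]
  have hemb : ∀ A : Finset (Fin n), ∃ t : Fin (k + 1) → Fin n, A ∈ H →
      Function.Injective t ∧ ∀ j, t j ∈ A := by
    intro A
    by_cases hA : A ∈ H
    · have hc : k + 1 ≤ A.card := by rw [hr A hA]; exact h1
      refine ⟨fun j => A.orderEmbOfFin rfl (Fin.castLE hc j), fun _ => ⟨?_, ?_⟩⟩
      · intro a b h
        simpa using h
      · intro j; exact Finset.orderEmbOfFin_mem _ _ _
    · exact ⟨fun _ => ⟨0, Nat.pos_of_ne_zero hn⟩, fun h => absurd h hA⟩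
  choose t ht using hemb
  -- a k-subset of every edge
  have hk : ∀ A ∈ H, ∀ i, ∀ c : Fin (k + 1) → Fin n, (∀ j, j ≠ i → t A j = c j) →
      ∀ U : Finset (Fin n), (∀ j, j ≠ i → c j ∈ U) → k ≤ (A ∩ U).card := by
    intro A hA i c hc U hU
    have e1 : ((Finset.univ.erase i).image (t A)).card = k := by
      rw [Finset.card_image_of_injective _ (ht A hA).1]; simp
    rw [← e1]
    refine Finset.card_le_card ?_
    intro x hx
    simp only [Finset.mem_image, Finset.mem_erase, Finset.mem_univ, and_true] at hx
    obtain ⟨j, hj, rfl⟩ := hx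
    refine Finset.mem_inter.2 ⟨(ht A hA).2 j, ?_⟩
    rw [hc j hj]; exact hU j hj
  have hfib : ∀ (i : Fin (k + 1)) (y : Fin (k + 1) → Fin n), (H.filter (fun A => ∀ j, j ≠ i → t A j = y j)).card ≤ e := by
    intro i y
    by_contra hcon
    obtain ⟨S, hS, hSc⟩ := Finset.exists_subset_card_eq (not_le.1 hcon).le
    have hSH : S ⊆ H := hS.trans (Finset.filter_subset _ _)
    have e1 := hG S hSH hSc
    have e2 := union_bound (k := k) (u := k) (by omega) S (fun A hA => hr A (hSH hA))
      ((Finset.univ.erase i).image y) (Finset.card_image_le.trans (by simp))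
      (fun A hA => hk A (hSH hA) i y (Finset.mem_filter.1 (hS hA)).2 _
        (fun j hj => Finset.mem_image_of_mem _ (by simpa using hj)))
    rw [hSc] at e2
    omega
  refine ⟨H.image t, ?_, ?_, ?_⟩
  · rw [mul_comm]
    have := Finset.card_le_mul_card_image (s := H) (f := t) e (fun x _ => by
      refine le_trans (Finset.card_le_card ?_) (hfib 0 x)
      intro A hA
      simp only [Finset.mem_filter] at hA ⊢
      exact ⟨hA.1, fun j _ => by rw [hA.2]⟩)
    linarith
  · intro i y
    refine le_trans ?_ (hfib i y)
    have hex : ∀ d : Fin n, ∃ A, Function.update y i d ∈ H.image t → A ∈ H ∧ t A = Function.update y i d := by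
      intro d
      by_cases h : Function.update y i d ∈ H.image t
      · obtain ⟨A, hA, hAt⟩ := Finset.mem_image.1 h
        exact ⟨A, fun _ => ⟨hA, hAt⟩⟩
      · exact ⟨∅, fun h' => absurd h' h⟩
    choose f hf using hex
    refine Finset.card_le_card_of_injOn f ?_ ?_
    · intro d hd
      simp only [Finset.coe_filter, Finset.mem_univ, true_and, Set.mem_ofPred_eq] at hd ⊢
      refine ⟨(hf d hd).1, fun j hj => ?_⟩
      rw [(hf d hd).2, Function.update_of_ne hj]
    · intro a ha b hb hab
      simp only [Finset.coe_filter, Finset.mem_univ, true_and, Set.mem_ofPred_eq] at ha hb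
      have e1 := (hf a ha).2
      have e2 := (hf b hb).2
      rw [hab, e2] at e1
      have := congrFun e1 i
      simpa using this.symm
  · intro c hc
    have hex : ∀ i, ∃ A ∈ H, ∀ j, j ≠ i → t A j = c j := by
      intro i
      obtain ⟨x, hx, hxc⟩ := hc i
      obtain ⟨A, hA, rfl⟩ := Finset.mem_image.1 hx
      exact ⟨A, hA, hxc⟩
    choose f hfH hf using hex
    by_cases hinj : Function.Injective f
    · exfalso
      obtain ⟨I, -, hI⟩ := Finset.exists_subset_card_eq (s := (Finset.univ : Finset (Fin (k + 1)))) (n := e) (by simpa using h2)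
      have hSH : I.image f ⊆ H := by
        intro A hA
        obtain ⟨i, -, rfl⟩ := Finset.mem_image.1 hA
        exact hfH i
      have hSc : (I.image f).card = e := by rw [Finset.card_image_of_injective _ hinj, hI]
      have e1 := hG _ hSH hSc
      have e2 := union_bound (k := k) (u := k + 1) (by omega) (I.image f) (fun A hA => hr A (hSH hA))
        (Finset.univ.image c) (Finset.card_image_le.trans (by simp)) (by
          intro A hA
          obtain ⟨i, -, rfl⟩ := Finset.mem_image.1 hA
          exact hk _ (hfH i) i c (hf i) _ (fun j _ => Finset.mem_image_of_mem _ (Finset.mem_univ j)))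
      rw [hSc] at e2
      omega
    · simp only [Function.Injective] at hinj
      push Not at hinj
      obtain ⟨a, b, hab, hne⟩ := hinj
      refine Finset.mem_image.2 ⟨f a, hfH a, ?_⟩
      ext1 j
      by_cases hj : j = a
      · rw [hab]; exact hf b j (by rw [hj]; exact hne)
      · exact hf a j hj

end BES

theorem brown_erdos_sos_upper (r k e : ℕ) (h1 : k + 1 ≤ r) (h2 : e ≤ k + 1) (h3 : 3 ≤ e)
    (ε : ℝ) (hε : 0 < ε) :
    ∃ N : ℕ, ∀ n : ℕ, N ≤ n →
      (extremalF r n (e * (r - k) + k + 1) e : ℝ) ≤ ε * (n : ℝ) ^ k := by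
  have he : (0:ℝ) < e := by
    have : 0 < e := by omega
    exact_mod_cast this
  obtain ⟨N, hN⟩ := BES.simplex_removal (k + 1) (Nat.succ_pos k) e (ε / e) (by positivity)
  refine ⟨N, fun n hn => ?_⟩
  have hmem : extremalF r n (e * (r - k) + k + 1) e ∈ {m : ℕ | ∃ H : Finset (Finset (Fin n)),
      (∀ A ∈ H, A.card = r) ∧ GFree H (e * (r - k) + k + 1) e ∧ H.card = m} := by
    apply Nat.sSup_mem
    · refine ⟨0, ∅, by simp, ?_, by simp⟩
      intro S hS hSe
      rw [Finset.subset_empty.1 hS, Finset.card_empty] at hSe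
      omega
    · refine ⟨(Finset.univ : Finset (Finset (Fin n))).card, ?_⟩
      rintro m ⟨H, -, -, rfl⟩
      exact Finset.card_le_card (Finset.subset_univ H)
  obtain ⟨H, hr, hG, hc⟩ := hmem
  rw [← hc]
  obtain ⟨D, hD1, hD2, hD3⟩ := BES.comb h1 h2 h3 H hr hG
  have h4 := hN n hn D hD2 hD3
  have h5 : (H.card : ℝ) ≤ e * D.card := by exact_mod_cast hD1
  simp only [Nat.add_sub_cancel] at h4
  calc (H.card : ℝ) ≤ e * D.card := h5
    _ ≤ e * (ε / e * (n : ℝ) ^ k) := by gcongr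
    _ = ε * (n : ℝ) ^ k := by field_simp
end

section
/- For all integers r, k, e, i with k ≥ 1, i ≥ 0, r ≥ k+i+1 ≥ 2 and binom(k+i+1, k) ≥ e ≥ 3, one has f_r(n, e(r−k)+k+i+1, e) = o(n^k); that is, for every real ε > 0 there exists N such that for all integers n ≥ N, f_r(n, e(r−k)+k+i+1, e) ≤ ε·n^k. -/
open Finset

section Helpers
open MeasureTheory ProbabilityTheory


theorem int_mul_condExp {Ω : Type*} {m m0 : MeasurableSpace Ω} (hm : m ≤ m0)
    (μ : @Measure Ω m0) [IsProbabilityMeasure μ] (w f : Ω → ℝ)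
    (hw : StronglyMeasurable[m] w) (hw2 : MemLp w 2 μ) (hf : MemLp f 2 μ) :
    ∫ x, w x * f x ∂μ = ∫ x, w x * (μ[f|m]) x ∂μ := by
  rw [← integral_condExp hm (f := fun x => w x * f x)]
  apply integral_congr_ae
  exact condExp_mul_of_stronglyMeasurable_left hw (hw2.integrable_mul hf) (hf.integrable (by norm_num))

theorem indep_core {Ω : Type*} {m1 m2 m0 : MeasurableSpace Ω} (h12 : m1 ≤ m2) (h20 : m2 ≤ m0)
    (μ : @Measure Ω m0) [IsProbabilityMeasure μ] (T : Ω → Ω) (hT : MeasurePreserving T μ μ)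
    (hT1 : @Measurable Ω Ω m1 m2 T) (f : Ω → ℝ) (hf : MemLp f 2 μ)
    (hfT : ∀ x, f (T x) = f x) : μ[f|m2] =ᵐ[μ] μ[f|m1] := by
  set u := μ[f|m2] with hu
  set v := μ[f|m1] with hv
  have hu2 : MemLp u 2 μ := hf.condExp (by norm_num)
  have hv2 : MemLp v 2 μ := hf.condExp (by norm_num)
  have hum : StronglyMeasurable[m2] u := stronglyMeasurable_condExp
  have hvm : StronglyMeasurable[m1] v := stronglyMeasurable_condExp
  have huT2 : MemLp (fun x => u (T x)) 2 μ := hu2.comp_measurePreserving hT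
  have e1 : ∫ x, u x * f x ∂μ = ∫ x, u x * u x ∂μ := int_mul_condExp h20 μ u f hum hu2 hf
  have e2 : ∫ x, v x * f x ∂μ = ∫ x, v x * v x ∂μ :=
    int_mul_condExp (h12.trans h20) μ v f hvm hv2 hf
  have e3 : ∫ x, v x * f x ∂μ = ∫ x, v x * u x ∂μ :=
    int_mul_condExp h20 μ v f (hvm.mono h12) hv2 hf
  have e4 : ∫ x, u (T x) * f x ∂μ = ∫ x, u (T x) * v x ∂μ :=
    int_mul_condExp (h12.trans h20) μ (fun x => u (T x)) f (hum.comp_measurable hT1) huT2 hf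
  have key : ∀ g : Ω → ℝ, AEStronglyMeasurable g μ → ∫ x, g (T x) ∂μ = ∫ x, g x ∂μ := by
    intro g hg
    conv_rhs => rw [← hT.map_eq]
    rw [integral_map hT.measurable.aemeasurable (by rw [hT.map_eq]; exact hg)]
  have e5 : ∫ x, u (T x) * f x ∂μ = ∫ x, u x * f x ∂μ := by
    rw [← key (fun x => u x * f x) (hu2.1.mul hf.1)]
    simp [hfT]
  have e6 : ∫ x, u (T x) * u (T x) ∂μ = ∫ x, u x * u x ∂μ :=
    key (fun x => u x * u x) (hu2.1.mul hu2.1)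
  have i1 : Integrable (fun x => u x * u x) μ := hu2.integrable_mul hu2
  have i2 : Integrable (fun x => v x * v x) μ := hv2.integrable_mul hv2
  have i3 : Integrable (fun x => v x * u x) μ := hv2.integrable_mul hu2
  have i4 : Integrable (fun x => u (T x) * v x) μ := huT2.integrable_mul hv2
  have i5 : Integrable (fun x => u (T x) * u (T x)) μ := huT2.integrable_mul huT2
  have s1 : ∫ x, (u x - v x)^2 ∂μ = ∫ x, u x * u x ∂μ - 2 * ∫ x, v x * u x ∂μ + ∫ x, v x * v x ∂μ := by
    rw [← integral_const_mul, ← integral_sub i1 (i3.const_mul 2), ← integral_add (f := fun x => u x * u x - 2 * (v x * u x)) (i1.sub (i3.const_mul 2)) i2]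
    congr 1; ext x; ring
  have s2 : ∫ x, (v x - u (T x))^2 ∂μ = ∫ x, v x * v x ∂μ - 2 * ∫ x, u (T x) * v x ∂μ + ∫ x, u (T x) * u (T x) ∂μ := by
    rw [← integral_const_mul, ← integral_sub i2 (i4.const_mul 2), ← integral_add (f := fun x => v x * v x - 2 * (u (T x) * v x)) (i2.sub (i4.const_mul 2)) i5]
    congr 1; ext x; ring
  have n2 : 0 ≤ ∫ x, (v x - u (T x))^2 ∂μ := integral_nonneg fun x => sq_nonneg _
  have n1 : 0 ≤ ∫ x, (u x - v x)^2 ∂μ := integral_nonneg fun x => sq_nonneg _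
  have z : ∫ x, (u x - v x)^2 ∂μ = 0 := by linarith
  rw [integral_eq_zero_iff_of_nonneg (fun x => sq_nonneg _)] at z
  · filter_upwards [z] with x hx
    have : (u x - v x)^2 = 0 := hx
    nlinarith [pow_eq_zero_iff (two_ne_zero) |>.1 this]
  · exact (hu2.sub hv2).integrable_sq


@[reducible]
def cyl {E : Type*} (S : Set E) : MeasurableSpace (E → Bool) :=
  MeasurableSpace.comap S.domRestrict inferInstance

theorem cyl_le {E : Type*} (S : Set E) : cyl S ≤ (MeasurableSpace.pi : MeasurableSpace (E → Bool)) := by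
  rw [cyl, ← measurable_iff_comap_le]
  exact measurable_pi_lambda _ fun a => measurable_pi_apply _

theorem measurable_cyl_iff {α E : Type*} {m : MeasurableSpace α} (S : Set E) (f : α → E → Bool) :
    @Measurable α (E → Bool) m (cyl S) f ↔ ∀ e ∈ S, Measurable (fun a => f a e) := by
  rw [cyl, measurable_comap_iff, measurable_pi_iff]
  constructor
  · intro h e he; exact h ⟨e, he⟩
  · intro h e; exact h e.1 e.2

theorem measurable_cyl_apply {E : Type*} (S : Set E) (e : E) (he : e ∈ S) :
    @Measurable (E → Bool) Bool (cyl S) _ (fun ω => ω e) :=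
  ((@measurable_cyl_iff (E → Bool) E (cyl S) S id).1 (@measurable_id _ (cyl S))) e he

theorem cyl_mono {E : Type*} {S S' : Set E} (h : S ⊆ S') : cyl S ≤ cyl S' := by
  have : @Measurable (E → Bool) (E → Bool) (cyl S') (cyl S) id :=
    (@measurable_cyl_iff _ _ (cyl S') S id).2 fun e he => measurable_cyl_apply S' e (h he)
  intro A hA
  exact this hA

theorem cyl_dep {E : Type*} {S : Set E} {A : Set (E → Bool)} (hA : MeasurableSet[cyl S] A)
    {ω ω' : E → Bool} (h : ∀ e ∈ S, ω e = ω' e) : ω ∈ A ↔ ω' ∈ A := by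
  obtain ⟨B, -, rfl⟩ := hA
  have : S.domRestrict ω = S.domRestrict ω' := by ext e; exact h e.1 e.2
  simp only [Set.mem_preimage, this]

/-- the ring of sets depending on `D` and finitely many coordinates of `S` -/
def finRing {E : Type*} (S D : Set E) : Set (Set (E → Bool)) :=
  {A | ∃ F : Finset E, (F : Set E) ⊆ S ∧ MeasurableSet[cyl ((F : Set E) ∪ D)] A}

theorem finRing_common {E : Type*} {S D : Set E} {A B : Set (E → Bool)} (hA : A ∈ finRing S D)
    (hB : B ∈ finRing S D) : ∃ F : Finset E, (F : Set E) ⊆ S ∧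
      MeasurableSet[cyl ((F : Set E) ∪ D)] A ∧ MeasurableSet[cyl ((F : Set E) ∪ D)] B := by
  classical
  obtain ⟨F, hF, hA⟩ := hA
  obtain ⟨G, hG, hB⟩ := hB
  refine ⟨F ∪ G, by simp [hF, hG], cyl_mono ?_ _ hA, cyl_mono ?_ _ hB⟩ <;>
  · intro x; simp; tauto

theorem finRing_isSetRing {E : Type*} (S D : Set E) : IsSetRing (finRing S D) where
  empty_mem := ⟨∅, by simp, @MeasurableSet.empty _ (_)⟩
  union_mem := by
    intro A B hA hB
    obtain ⟨F, hF, hA, hB⟩ := finRing_common hA hB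
    exact ⟨F, hF, @MeasurableSet.union _ (_) _ _ hA hB⟩
  sdiff_mem := by
    intro A B hA hB
    obtain ⟨F, hF, hA, hB⟩ := finRing_common hA hB
    exact ⟨F, hF, @MeasurableSet.diff _ (_) _ _ hA hB⟩

theorem finRing_univ {E : Type*} (S D : Set E) : Set.univ ∈ finRing S D :=
  ⟨∅, by simp, @MeasurableSet.univ _ (_)⟩

theorem finRing_gen {E : Type*} (S D : Set E) :
    cyl (S ∪ D) = MeasurableSpace.generateFrom (finRing S D) := by
  apply le_antisymm
  · have : @Measurable (E → Bool) (E → Bool) (MeasurableSpace.generateFrom (finRing S D)) (cyl (S ∪ D)) id := by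
      rw [measurable_cyl_iff]
      intro e he
      intro B hB
      apply MeasurableSpace.measurableSet_generateFrom
      rcases he with he | he
      · refine ⟨{e}, by simpa using he, ?_⟩
        exact measurable_cyl_apply _ e (by simp) hB
      · refine ⟨∅, by simp, ?_⟩
        exact measurable_cyl_apply _ e (by simp [he]) hB
    intro A hA
    exact this hA
  · apply MeasurableSpace.generateFrom_le
    rintro A ⟨F, hF, hA⟩
    exact cyl_mono (Set.union_subset_union_left _ hF) _ hA

theorem cyl_approx {E : Type*} (S D : Set E) (ρ : Measure (E → Bool)) [IsFiniteMeasure ρ]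
    {A : Set (E → Bool)} (hA : MeasurableSet[cyl (S ∪ D)] A) {ε : ENNReal} (hε : 0 < ε) :
    ∃ F : Finset E, (F : Set E) ⊆ S ∧ ∃ A', MeasurableSet[cyl ((F : Set E) ∪ D)] A' ∧
      ρ (symmDiff A' A) < ε := by
  obtain ⟨A', ⟨F, hF, hA'⟩, h⟩ := @exists_measure_symmDiff_lt_of_generateFrom_isSetRing _ (cyl (S ∪ D))
    (ρ.trim (cyl_le _)) inferInstance (finRing S D) (finRing_isSetRing S D)
    ⟨{Set.univ}, by simp, by simpa using finRing_univ S D, by simp⟩ (finRing_gen S D) A hA ε hε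
  refine ⟨F, hF, A', hA', ?_⟩
  exact lt_of_le_of_lt (le_trim _) h

/-- atoms -/
def atomSet {E : Type*} (F : Finset E) (p : E → Bool) : Set (E → Bool) := {ω | ∀ e ∈ F, ω e = p e}

theorem atomSet_meas {E : Type*} (F : Finset E) (p : E → Bool) :
    MeasurableSet[cyl (F : Set E)] (atomSet F p) := by
  have : atomSet F p = ⋂ e ∈ F, (fun ω : E → Bool => ω e) ⁻¹' {p e} := by
    ext ω; simp [atomSet]
  rw [this]
  refine @Finset.measurableSet_biInter _ _ (cyl _) _ F fun e he => ?_
  exact measurable_cyl_apply _ e he (MeasurableSet.singleton _)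

theorem atom_trace {E : Type*} (F : Finset E) (D : Set E) (p : E → Bool) {A : Set (E → Bool)}
    (hA : MeasurableSet[cyl ((F : Set E) ∪ D)] A) :
    ∃ D0, MeasurableSet[cyl D] D0 ∧ atomSet F p ∩ A = atomSet F p ∩ D0 := by
  classical
  let t : (E → Bool) → (E → Bool) := fun ω e => if e ∈ F then p e else ω e
  have ht : @Measurable _ _ (cyl D) (cyl ((F : Set E) ∪ D)) t := by
    rw [measurable_cyl_iff]
    intro e he
    by_cases h : e ∈ F
    · simp only [t, h, if_true]; exact measurable_const
    · simp only [t, h, if_false]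
      exact measurable_cyl_apply _ e (by simpa [h] using he)
  refine ⟨t ⁻¹' A, ht hA, ?_⟩
  ext ω
  simp only [Set.mem_inter_iff, Set.mem_preimage]
  refine and_congr_right fun h => ?_
  have : t ω = ω := by
    ext e; simp only [t]; split_ifs with he
    · exact (h e he).symm
    · rfl
  rw [this]


theorem ind_memLp {Ω : Type*} {m0 : MeasurableSpace Ω} (μ : Measure Ω) [IsProbabilityMeasure μ]
    {X : Set Ω} (hX : MeasurableSet X) : MemLp (X.indicator (fun _ => (1:ℝ))) 2 μ :=
  (memLp_const (1:ℝ)).indicator hX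

theorem int_ind_mul {Ω : Type*} {m0 : MeasurableSpace Ω} (μ : Measure Ω)
    {X : Set Ω} (hX : MeasurableSet X) (f : Ω → ℝ) :
    ∫ x, X.indicator (fun _ => (1:ℝ)) x * f x ∂μ = ∫ x in X, f x ∂μ := by
  rw [← integral_indicator hX]
  congr 1; ext x; by_cases h : x ∈ X <;> simp [h]

theorem condExp_swap {Ω : Type*} {m m0 : MeasurableSpace Ω} (hm : m ≤ m0) (μ : @Measure Ω m0)
    [IsProbabilityMeasure μ] {f g : Ω → ℝ} (hf : MemLp f 2 μ) (hg : MemLp g 2 μ) :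
    ∫ x, f x * (μ[g|m]) x ∂μ = ∫ x, g x * (μ[f|m]) x ∂μ := by
  have h1 := int_mul_condExp hm μ (μ[g|m]) f stronglyMeasurable_condExp (hg.condExp (by norm_num)) hf
  have h2 := int_mul_condExp hm μ (μ[f|m]) g stronglyMeasurable_condExp (hf.condExp (by norm_num)) hg
  simp only [mul_comm] at h1 h2 ⊢
  rw [h1, h2]

abbrev Idx (m : ℕ) := Finset (Fin m) × (Fin m → ℕ)

def Zs {m : ℕ} (e : Idx m) : Finset (Fin m) := Finset.univ.filter fun j => e.2 j = 0

theorem mem_Zs {m : ℕ} (e : Idx m) (j : Fin m) : j ∈ Zs e ↔ e.2 j = 0 := by simp [Zs]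

def reidx {m : ℕ} (τ : Fin m → ℕ → ℕ) (e : Idx m) : Idx m := (e.1, fun j => τ j (e.2 j))

def Tm {m : ℕ} (τ : Fin m → ℕ → ℕ) (ω : Idx m → Bool) : Idx m → Bool := fun e => ω (reidx τ e)

theorem measurable_Tm {m : ℕ} (τ : Fin m → ℕ → ℕ) : Measurable (Tm τ) :=
  measurable_pi_lambda _ fun _ => measurable_pi_apply _

def Exch {m : ℕ} (Q : Measure (Idx m → Bool)) : Prop :=
  ∀ τ : Fin m → ℕ → ℕ, (∀ j, Function.Injective (τ j)) → Q.map (Tm τ) = Q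

theorem indep_cyl {m : ℕ} (Q : Measure (Idx m → Bool)) [IsProbabilityMeasure Q] (hQ : Exch Q)
    (I : Finset (Fin m)) (𝒟 : Set (Finset (Fin m))) (h𝒟 : IsLowerSet 𝒟) (F : Finset (Idx m))
    (hF : (F : Set (Idx m)) ⊆ {e | Zs e ⊆ I}) {X : Set (Idx m → Bool)}
    (hX : MeasurableSet[cyl (F : Set (Idx m))] X) :
    Q[X.indicator (fun _ => (1:ℝ)) | cyl {e | Zs e ∈ 𝒟}] =ᵐ[Q]
      Q[X.indicator (fun _ => (1:ℝ)) | cyl {e | Zs e ∈ 𝒟 ∧ Zs e ⊆ I}] := by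
  classical
  let M : ℕ := F.sup fun e => Finset.univ.sup e.2
  have hM : ∀ e ∈ F, ∀ j, e.2 j ≤ M := fun e he j =>
    (Finset.le_sup (f := e.2) (Finset.mem_univ j)).trans
      (Finset.le_sup (f := fun e : Idx m => Finset.univ.sup e.2) he)
  let τ : Fin m → ℕ → ℕ := fun j i => if j ∈ I then i else
    if i = 0 then M + 1 else if i ≤ M then i else i + 1
  have hτ : ∀ j, Function.Injective (τ j) := by
    intro j a b hab
    simp only [τ] at hab
    split_ifs at hab <;> omega
  have hfix : ∀ e ∈ F, reidx τ e = e := by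
    intro e he
    refine Prod.ext rfl (funext fun j => ?_)
    simp only [reidx, τ]
    split_ifs with h1 h2 h3
    · rfl
    · exact absurd (hF he (by simp [Zs, h2])) h1
    · rfl
    · exact absurd (hM e he j) h3
  have hTX : ∀ ω, Tm τ ω ∈ X ↔ ω ∈ X := by
    intro ω
    apply cyl_dep hX
    intro e he
    simp [Tm, hfix e he]
  refine indep_core (cyl_mono fun e he => he.1) (cyl_le _) Q (Tm τ) ⟨measurable_Tm τ, hQ τ hτ⟩ ?_ _
    (ind_memLp Q (cyl_le _ _ hX)) ?_
  · rw [measurable_cyl_iff]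
    intro e he
    apply measurable_cyl_apply
    have : Zs (reidx τ e) = Zs e ∩ I := by
      ext j
      rw [Finset.mem_inter, mem_Zs, mem_Zs]
      simp only [reidx, τ]
      split_ifs with h1 h2 h3 <;> simp [h1]
      exact h2
    constructor
    · rw [this]; exact h𝒟 Finset.inter_subset_left he
    · rw [this]; exact Finset.inter_subset_right
  · intro ω
    simp [Set.indicator, hTX]

theorem indep_gen {m : ℕ} (Q : Measure (Idx m → Bool)) [IsProbabilityMeasure Q] (hQ : Exch Q)
    (I : Finset (Fin m)) (𝒟 : Set (Finset (Fin m))) (h𝒟 : IsLowerSet 𝒟)  {X : Set (Idx m → Bool)}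
    (hX : MeasurableSet[cyl {e : Idx m | Zs e ⊆ I}] X) :
    Q[X.indicator (fun _ => (1:ℝ)) | cyl {e | Zs e ∈ 𝒟 ∧ Zs e ⊆ I}] =ᵐ[Q]
      Q[X.indicator (fun _ => (1:ℝ)) | cyl {e | Zs e ∈ 𝒟}] := by
  set m1 := cyl {e : Idx m | Zs e ∈ 𝒟 ∧ Zs e ⊆ I} with hm1
  set m2 := cyl {e : Idx m | Zs e ∈ 𝒟} with hm2
  have h1 : m1 ≤ MeasurableSpace.pi := cyl_le _
  have h2 : m2 ≤ MeasurableSpace.pi := cyl_le _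
  have hS := cyl_le {e : Idx m | Zs e ⊆ I}
  have key : ∀ D, MeasurableSet[m2] D → ∀ X, MeasurableSet[cyl {e : Idx m | Zs e ⊆ I}] X →
      ∫ x in X, (D.indicator (fun _ => (1:ℝ)) x - (Q[D.indicator (fun _ => (1:ℝ)) | m1]) x) ∂Q = 0 := by
    intro D hD
    have hDi := (ind_memLp Q (h2 _ hD)).integrable (by norm_num)
    have hint : Integrable (fun x => D.indicator (fun _ => (1:ℝ)) x - (Q[D.indicator (fun _ => (1:ℝ)) | m1]) x) Q :=
      hDi.sub integrable_condExp
    have gen := finRing_gen {e : Idx m | Zs e ⊆ I} ∅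
    rw [Set.union_empty] at gen
    refine MeasurableSpace.induction_on_inter gen (finRing_isSetRing _ _).isSetSemiring.isPiSystem ?_ ?_ ?_ ?_
    · simp
    · rintro X ⟨F, hF, hX⟩
      rw [Set.union_empty] at hX
      have hX0 := cyl_le _ _ hX
      rw [integral_sub hDi.integrableOn integrable_condExp.integrableOn, ← int_ind_mul Q hX0,
        ← int_ind_mul Q hX0, condExp_swap h1 Q (ind_memLp Q hX0) (ind_memLp Q (h2 _ hD)),
        int_ind_mul Q (h2 _ hD)]
      rw [← setIntegral_congr_ae (h2 _ hD) ((indep_cyl Q hQ I 𝒟 h𝒟 F hF hX).mono fun x hx _ => hx),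
        setIntegral_condExp h2 ((ind_memLp Q hX0).integrable (by norm_num)) hD, ← int_ind_mul Q (h2 _ hD)]
      simp only [mul_comm, sub_self]
    · intro X hX h0
      have := integral_add_compl (hS _ hX) hint
      rw [h0, integral_sub hDi integrable_condExp, integral_condExp h1] at this
      linarith
    · intro f hd hf h0
      rw [integral_iUnion (fun i => hS _ (hf i)) hd hint.integrableOn]
      simp [h0]
  have hX0 := hS _ hX
  refine ae_eq_condExp_of_forall_setIntegral_eq h2 ((ind_memLp Q hX0).integrable (by norm_num))
    (fun s _ _ => integrable_condExp.integrableOn) ?_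
    (stronglyMeasurable_condExp.mono (cyl_mono fun e he => he.1)).aestronglyMeasurable
  intro D hD _
  have hDi := (ind_memLp Q (h2 _ hD)).integrable (by norm_num)
  have := key D hD X hX
  rw [integral_sub hDi.integrableOn integrable_condExp.integrableOn, sub_eq_zero] at this
  rw [← int_ind_mul Q (h2 _ hD), condExp_swap h1 Q (ind_memLp Q (h2 _ hD)) (ind_memLp Q hX0),
    int_ind_mul Q hX0, ← this, ← int_ind_mul Q (h2 _ hD), ← int_ind_mul Q hX0]
  simp only [mul_comm]


theorem condExp_ind_int {Ω : Type*} {m m0 : MeasurableSpace Ω} (hm : m ≤ m0) (μ : @Measure Ω m0)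
    [IsProbabilityMeasure μ] {X D : Set Ω} (hX : MeasurableSet[m0] X) (hD : MeasurableSet[m] D) :
    ∫ x in D, (μ[X.indicator (fun _ => (1:ℝ)) | m]) x ∂μ = μ.real (X ∩ D) := by
  rw [setIntegral_condExp hm ((ind_memLp μ hX).integrable (by norm_num)) hD]
  rw [integral_indicator hX, setIntegral_const, measureReal_restrict_apply hX]
  simp

theorem indep_int {m : ℕ} (Q : Measure (Idx m → Bool)) [IsProbabilityMeasure Q] (hQ : Exch Q)
    (I : Finset (Fin m)) (𝒟 : Set (Finset (Fin m))) (h𝒟 : IsLowerSet 𝒟)  {X D : Set (Idx m → Bool)}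
    (hX : MeasurableSet[cyl {e : Idx m | Zs e ⊆ I}] X)
    (hD : MeasurableSet[cyl {e : Idx m | Zs e ∈ 𝒟}] D) :
    ∫ x in D, (Q[X.indicator (fun _ => (1:ℝ)) | cyl {e | Zs e ∈ 𝒟 ∧ Zs e ⊆ I}]) x ∂Q
      = Q.real (X ∩ D) := by
  rw [← condExp_ind_int (cyl_le {e : Idx m | Zs e ∈ 𝒟}) Q (cyl_le _ _ hX) hD]
  exact setIntegral_congr_ae (cyl_le _ _ hD) ((indep_gen Q hQ I 𝒟 h𝒟 hX).mono fun x hx _ => hx)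

open Classical in
noncomputable def extP {E : Type*} (F : Finset E) (q : F → Bool) : E → Bool :=
  fun e => if h : e ∈ F then q ⟨e, h⟩ else false

/-- the atom of pattern `q` -/
noncomputable def atomN {E : Type*} (F : Finset E) (q : F → Bool) : Set (E → Bool) :=
  atomSet F (extP F q)

theorem mem_atomN {E : Type*} (F : Finset E) (q : F → Bool) (ω : E → Bool) :
    ω ∈ atomN F q ↔ q = fun e => ω e.1 := by
  simp only [atomN, atomSet, extP, Set.mem_ofPred_eq]
  constructor
  · intro h; ext e; have := h e.1 e.2; simp at this; exact this.symm
  · rintro rfl e he; simp [he]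

theorem atomN_sum {E : Type*} [DecidableEq E] (F : Finset E) (Q : Measure (E → Bool)) [IsProbabilityMeasure Q]
    (B : Set (E → Bool)) (hB : MeasurableSet B) :
    ∑ q : F → Bool, Q.real (atomN F q ∩ B) ≤ Q.real B := by
  rw [← measureReal_biUnion_finset]
  · exact measureReal_mono (by simp)
  · intro q _ q' _ hqq
    rw [Function.onFun, Set.disjoint_left]
    intro ω h1 h2
    exact hqq (((mem_atomN F q ω).1 h1.1).trans ((mem_atomN F q' ω).1 h2.1).symm)
  · intro q _
    exact (cyl_le _ _ (atomSet_meas F _)).inter hB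

noncomputable def goodC {E : Type*} (Q : Measure (E → Bool)) (D : Set E) (A : Set (E → Bool)) (η : ℝ)
    (N : Set (E → Bool)) : Set (E → Bool) :=
  {ω | (Q[(N \ A).indicator (fun _ => (1:ℝ)) | cyl D]) ω ≤ η * (Q[N.indicator (fun _ => (1:ℝ)) | cyl D]) ω
    ∧ 0 < (Q[N.indicator (fun _ => (1:ℝ)) | cyl D]) ω}

theorem goodC_meas {E : Type*} (Q : Measure (E → Bool)) (D : Set E) (A : Set (E → Bool)) (η : ℝ)
    (N : Set (E → Bool)) : MeasurableSet[cyl D] (goodC Q D A η N) := by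
  have h1 : Measurable[cyl D] (Q[(N \ A).indicator (fun _ => (1:ℝ)) | cyl D]) :=
    stronglyMeasurable_condExp.measurable
  have h2 : Measurable[cyl D] (Q[N.indicator (fun _ => (1:ℝ)) | cyl D]) :=
    stronglyMeasurable_condExp.measurable
  have h3 : MeasurableSet[cyl D] {ω | (Q[(N \ A).indicator (fun _ => (1:ℝ)) | cyl D]) ω ≤ η * (Q[N.indicator (fun _ => (1:ℝ)) | cyl D]) ω} :=
    @measurableSet_le _ _ _ _ _ (cyl D) _ _ _ _ _ h1 (h2.const_mul η)
  have h4 : MeasurableSet[cyl D] {ω | 0 < (Q[N.indicator (fun _ => (1:ℝ)) | cyl D]) ω} :=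
    @measurableSet_lt _ _ _ _ _ (cyl D) _ _ _ _ _ measurable_const h2
  exact @MeasurableSet.inter _ (cyl D) _ _ h3 h4

theorem bad_atom {E : Type*} (Q : Measure (E → Bool)) [IsProbabilityMeasure Q] (D : Set E)
    {A A' : Set (E → Bool)} (hA : MeasurableSet A) (F : Finset E)
    (hA' : MeasurableSet[cyl ((F : Set E) ∪ D)] A') {η : ℝ} (hη : 0 < η) (q : F → Bool) :
    Q.real (atomN F q ∩ (A ∩ (goodC Q D A η (atomN F q))ᶜ)) ≤
      Q.real (atomN F q ∩ (A \ A')) + η⁻¹ * Q.real (atomN F q ∩ (A' \ A)) := by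
  set N := atomN F q with hN
  have hNm : MeasurableSet N := cyl_le _ _ (atomSet_meas F _)
  obtain ⟨D0, hD0, htr⟩ := atom_trace F D (extP F q) hA'
  change N ∩ A' = N ∩ D0 at htr
  set C := goodC Q D A η N with hC
  set G := D0 ∩ Cᶜ with hG
  have hGm : MeasurableSet[cyl D] G := @MeasurableSet.inter _ (cyl D) _ _ hD0
    (@MeasurableSet.compl _ _ (cyl D) (goodC_meas Q D A η N))
  have htr' : ∀ ω ∈ N, (ω ∈ A' ↔ ω ∈ D0) := fun ω hω => by
    have := Set.ext_iff.1 htr ω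
    simpa [hω] using this
  have s1 : Q.real (N ∩ (A ∩ Cᶜ)) ≤ Q.real (N ∩ (A \ A')) + Q.real (N ∩ G) := by
    refine (measureReal_mono ?_).trans (measureReal_union_le _ _)
    rintro ω ⟨h1, h2, h3⟩
    by_cases h : ω ∈ A'
    · exact Or.inr ⟨h1, (htr' ω h1).1 h, h3⟩
    · exact Or.inl ⟨h1, h2, h⟩
  have s2 : η * Q.real (N ∩ G) ≤ Q.real ((N \ A) ∩ G) := by
    rw [← condExp_ind_int (cyl_le D) Q hNm hGm, ← condExp_ind_int (cyl_le D) Q (hNm.diff hA) hGm,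
      ← integral_const_mul]
    have n1 : 0 ≤ᵐ[Q] Q[(N \ A).indicator (fun _ => (1:ℝ)) | cyl D] :=
      condExp_nonneg (Filter.Eventually.of_forall fun ω => Set.indicator_nonneg (by simp) ω)
    refine setIntegral_mono_on_ae (integrable_condExp.const_mul η).integrableOn
      integrable_condExp.integrableOn (cyl_le _ _ hGm) ?_
    filter_upwards [n1] with ω hω hωG
    have hnot : ω ∉ C := hωG.2
    simp only [hC, goodC, Set.mem_ofPred_eq, not_and_or, not_le, not_lt] at hnot
    rcases hnot with h | h
    · exact h.le
    · exact (mul_nonpos_of_nonneg_of_nonpos hη.le h).trans hω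
  have s3 : Q.real ((N \ A) ∩ G) ≤ Q.real (N ∩ (A' \ A)) := by
    refine measureReal_mono ?_
    rintro ω ⟨⟨h1, h2⟩, h3, h4⟩
    exact ⟨h1, (htr' ω h1).2 h3, h2⟩
  have s4 : Q.real (N ∩ G) ≤ η⁻¹ * Q.real (N ∩ (A' \ A)) := by
    rw [le_inv_mul_iff₀ hη]; exact s2.trans s3
  linarith

theorem bad_small {E : Type*} [DecidableEq E] (Q : Measure (E → Bool)) [IsProbabilityMeasure Q] (S D : Set E)
    {A : Set (E → Bool)} (hA : MeasurableSet[cyl (S ∪ D)] A) {η : ℝ} (hη : 0 < η) {ε : ℝ} (hε : 0 < ε) :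
    ∃ F0 : Finset E, (F0 : Set E) ⊆ S ∧ ∀ F : Finset E, F0 ⊆ F →
      Q.real (⋃ q : F → Bool, atomN F q ∩ (A ∩ (goodC Q D A η (atomN F q))ᶜ)) ≤ ε := by
  have hc : 0 < 1 + η⁻¹ := by positivity
  obtain ⟨F0, hF0, A', hA', h⟩ := cyl_approx S D Q hA (ε := ENNReal.ofReal (ε / (1 + η⁻¹)))
    (by simp; positivity)
  refine ⟨F0, hF0, fun F hF => ?_⟩
  have hAm := cyl_le _ _ hA
  have hA'm := cyl_le _ _ hA'
  have hA'F : MeasurableSet[cyl ((F : Set E) ∪ D)] A' :=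
    cyl_mono (Set.union_subset_union_left _ (by exact_mod_cast hF)) _ hA'
  have hd : Q.real (symmDiff A' A) ≤ ε / (1 + η⁻¹) := by
    rw [measureReal_def]
    exact ENNReal.toReal_le_of_le_ofReal (by positivity) h.le
  have h1 : Q.real (A \ A') ≤ ε / (1 + η⁻¹) := (measureReal_mono (fun x hx => Or.inr hx)).trans hd
  have h2 : Q.real (A' \ A) ≤ ε / (1 + η⁻¹) := (measureReal_mono (fun x hx => Or.inl hx)).trans hd
  calc _ ≤ ∑ q : F → Bool, Q.real (atomN F q ∩ (A ∩ (goodC Q D A η (atomN F q))ᶜ)) :=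
        measureReal_iUnion_fintype_le _
    _ ≤ ∑ q : F → Bool, (Q.real (atomN F q ∩ (A \ A')) + η⁻¹ * Q.real (atomN F q ∩ (A' \ A))) :=
        Finset.sum_le_sum fun q _ => bad_atom Q D hAm F hA'F hη q
    _ = ∑ q : F → Bool, Q.real (atomN F q ∩ (A \ A')) + η⁻¹ * ∑ q : F → Bool, Q.real (atomN F q ∩ (A' \ A)) := by
        rw [Finset.sum_add_distrib, Finset.mul_sum]
    _ ≤ Q.real (A \ A') + η⁻¹ * Q.real (A' \ A) := by
        gcongr
        · exact atomN_sum F Q _ (hAm.diff hA'm)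
        · exact atomN_sum F Q _ (hA'm.diff hAm)
    _ ≤ ε / (1 + η⁻¹) + η⁻¹ * (ε / (1 + η⁻¹)) := by gcongr
    _ = ε := by field_simp


theorem main_step {m : ℕ} (Q : Measure (Idx m → Bool)) [IsProbabilityMeasure Q] (hQ : Exch Q)
    (𝓘 : Finset (Finset (Fin m))) (𝒟' : Set (Finset (Fin m))) (hlow : IsLowerSet 𝒟')
    (J : Finset (Fin m)) (A : Finset (Fin m) → Set (Idx m → Bool))
    (hA : ∀ I ∈ 𝓘, J ⊆ I → MeasurableSet[cyl {e : Idx m | Zs e ⊆ I}] (A I))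
    (hA2 : ∀ I ∈ 𝓘, ¬ J ⊆ I → MeasurableSet[cyl {e : Idx m | Zs e ∈ 𝒟' ∧ Zs e ⊆ I}] (A I))
    (N : Set (Idx m → Bool)) (hN : MeasurableSet[cyl {e : Idx m | Zs e = J}] N)
    (η : ℝ) (hη : ((𝓘.filter fun I => J ⊆ I).card : ℝ) * η < 1)
    (hW : 0 < Q.real (⋂ I ∈ 𝓘, if J ⊆ I then goodC Q {e : Idx m | Zs e ∈ 𝒟' ∧ Zs e ⊆ I} (A I) η N else A I)) :
    0 < Q.real (⋂ I ∈ 𝓘, A I) := by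
  classical
  set A' : Finset (Fin m) → Set (Idx m → Bool) := fun I =>
    if J ⊆ I then goodC Q {e : Idx m | Zs e ∈ 𝒟' ∧ Zs e ⊆ I} (A I) η N else A I with hA'
  set W' := ⋂ I ∈ 𝓘, A' I with hW'
  have hA'm : ∀ I ∈ 𝓘, MeasurableSet[cyl {e : Idx m | Zs e ∈ 𝒟' ∧ Zs e ⊆ I}] (A' I) := by
    intro I hI
    by_cases h : J ⊆ I
    · simp only [hA', h, if_true]; exact goodC_meas _ _ _ _ _
    · simp only [hA', h, if_false]; exact hA2 I hI h
  have hW'm : MeasurableSet[cyl {e : Idx m | Zs e ∈ 𝒟'}] W' :=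
    @Finset.measurableSet_biInter _ _ (cyl _) _ 𝓘 fun I hI => cyl_mono (fun e he => he.1) _ (hA'm I hI)
  have hNI : ∀ I, J ⊆ I → MeasurableSet[cyl {e : Idx m | Zs e ⊆ I}] N := fun I hI =>
    cyl_mono (fun e (he : Zs e = J) => (he ▸ hI : Zs e ⊆ I)) _ hN
  rcases (𝓘.filter fun I => J ⊆ I).eq_empty_or_nonempty with hemp | ⟨I0, hI0⟩
  · refine hW.trans_le (measureReal_mono (Set.iInter₂_mono fun I hI => ?_))
    have : ¬ J ⊆ I := fun h => by
      have : I ∈ (𝓘.filter fun I => J ⊆ I) := Finset.mem_filter.2 ⟨hI, h⟩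
      rw [hemp] at this; simp at this
    simp [hA', this]
  rw [Finset.mem_filter] at hI0
  have hmem : ∀ ω ∈ W', ∀ I ∈ 𝓘, J ⊆ I → ω ∈ goodC Q {e : Idx m | Zs e ∈ 𝒟' ∧ Zs e ⊆ I} (A I) η N := by
    intro ω hω I hI hJ
    have := Set.mem_iInter₂.1 hω I hI
    simpa only [hA', hJ, if_true] using this
  have pos : 0 < Q.real (N ∩ W') := by
    rw [← indep_int Q hQ I0 𝒟' hlow (hNI I0 hI0.2) hW'm]
    rw [setIntegral_pos_iff_support_of_nonneg_ae]
    · have : W' ⊆ Function.support (Q[N.indicator (fun _ => (1:ℝ)) | cyl {e : Idx m | Zs e ∈ 𝒟' ∧ Zs e ⊆ I0}]) ∩ W' := by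
        intro ω hω
        exact ⟨ne_of_gt (hmem ω hω I0 hI0.1 hI0.2).2, hω⟩
      refine lt_of_lt_of_le ?_ (measure_mono this)
      rw [measureReal_def] at hW
      exact (ENNReal.toReal_pos_iff.1 hW).1
    · refine (ae_restrict_iff' (cyl_le _ _ hW'm)).2 (Filter.Eventually.of_forall fun ω hω => ?_)
      exact (hmem ω hω I0 hI0.1 hI0.2).2.le
    · exact integrable_condExp.integrableOn
  have small : ∀ I ∈ 𝓘.filter fun I => J ⊆ I, Q.real ((N \ A I) ∩ W') ≤ η * Q.real (N ∩ W') := by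
    intro I hI
    rw [Finset.mem_filter] at hI
    rw [← indep_int Q hQ I 𝒟' hlow (hNI I hI.2) hW'm, ← indep_int Q hQ I 𝒟' hlow
      (@MeasurableSet.diff _ (cyl _) _ _ (hNI I hI.2) (hA I hI.1 hI.2)) hW'm, ← integral_const_mul]
    refine setIntegral_mono_on integrable_condExp.integrableOn
      (integrable_condExp.const_mul η).integrableOn (cyl_le _ _ hW'm) fun ω hω => ?_
    exact (hmem ω hω I hI.1 hI.2).1
  have cover : N ∩ W' ⊆ (⋂ I ∈ 𝓘, A I) ∪ ⋃ I ∈ 𝓘.filter fun I => J ⊆ I, (N \ A I) ∩ W' := by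
    rintro ω ⟨h1, h2⟩
    by_cases h : ω ∈ ⋂ I ∈ 𝓘, A I
    · exact Or.inl h
    · right
      simp only [Set.mem_iInter, not_forall] at h
      obtain ⟨I, hI, h⟩ := h
      have hJ : J ⊆ I := by
        by_contra hJ
        have := Set.mem_iInter₂.1 h2 I hI
        simp only [hA', hJ, if_false] at this
        exact h this
      exact Set.mem_iUnion₂.2 ⟨I, Finset.mem_filter.2 ⟨hI, hJ⟩, ⟨h1, h⟩, h2⟩
  have b := (measureReal_mono cover (by finiteness)).trans (measureReal_union_le (μ := Q) _ _)
  have b2 := measureReal_biUnion_finset_le (μ := Q) (𝓘.filter fun I => J ⊆ I) (fun I => (N \ A I) ∩ W')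
  have b3 := Finset.sum_le_sum small
  rw [Finset.sum_const, nsmul_eq_mul] at b3
  have : (1 - ((𝓘.filter fun I => J ⊆ I).card : ℝ) * η) * Q.real (N ∩ W') ≤ Q.real (⋂ I ∈ 𝓘, A I) := by
    linarith
  exact lt_of_lt_of_le (mul_pos (by linarith) pos) this

theorem main_pos {m : ℕ} (P Q : Measure (Idx m → Bool)) [IsProbabilityMeasure P]
    [IsProbabilityMeasure Q] (hQ : Exch Q) (𝓘 : Finset (Finset (Fin m))) (K : ℝ) (hK : 0 ≤ K)
    (hPQ : ∀ I ∈ 𝓘, ∀ A, MeasurableSet[cyl {e : Idx m | Zs e ⊆ I}] A → P.real A ≤ K * Q.real A)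
    (n : ℕ) : ∀ 𝒟 : Finset (Finset (Fin m)), 𝒟.card = n → IsLowerSet (𝒟 : Set (Finset (Fin m))) →
      ∀ A : Finset (Fin m) → Set (Idx m → Bool),
      (∀ I ∈ 𝓘, MeasurableSet[cyl {e : Idx m | Zs e ∈ 𝒟 ∧ Zs e ⊆ I}] (A I)) →
      0 < P.real (⋂ I ∈ 𝓘, A I) → 0 < Q.real (⋂ I ∈ 𝓘, A I) := by
  classical
  induction n with
  | zero =>
    intro 𝒟 hc _ A hA hP
    rw [Finset.card_eq_zero] at hc
    subst hc
    have hne : (⋂ I ∈ 𝓘, A I).Nonempty := by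
      by_contra h
      rw [Set.not_nonempty_iff_eq_empty] at h
      rw [h] at hP; simp at hP
    obtain ⟨ω0, hω0⟩ := hne
    have : (⋂ I ∈ 𝓘, A I) = Set.univ := by
      rw [Set.eq_univ_iff_forall]
      intro ω
      refine Set.mem_iInter₂.2 fun I hI => ?_
      refine (cyl_dep (hA I hI) (ω := ω) (ω' := ω0) ?_).2 (Set.mem_iInter₂.1 hω0 I hI)
      intro e he
      simp at he
    rw [this]; simp
  | succ n ih =>
    intro 𝒟 hc hlow A hA hP
    have hne : 𝒟.Nonempty := by rw [← Finset.card_pos, hc]; omega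
    obtain ⟨J, hJmax⟩ := 𝒟.exists_maximal hne
    have hJ := hJmax.prop
    set 𝒟' := 𝒟.erase J with h𝒟'
    have hlow' : IsLowerSet (𝒟' : Set (Finset (Fin m))) := by
      intro a b hba ha
      simp only [h𝒟', Finset.coe_erase, Set.mem_sdiff, Finset.mem_coe, Set.mem_singleton_iff] at ha ⊢
      refine ⟨hlow hba ha.1, ?_⟩
      rintro rfl
      exact ha.2 (le_antisymm (hJmax.le_of_ge ha.1 hba) hba)
    set 𝓙 := 𝓘.filter fun I => J ⊆ I with h𝓙
    set W := ⋂ I ∈ 𝓘, A I with hW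
    set η : ℝ := 1 / ((𝓙.card : ℝ) + 1) with hη
    have hη0 : 0 < η := by positivity
    set ε : ℝ := P.real W / ((𝓙.card : ℝ) * K + 1) with hε
    have hε0 : 0 < ε := by positivity
    let D : Finset (Fin m) → Set (Idx m) := fun I => {e : Idx m | Zs e ∈ 𝒟' ∧ Zs e ⊆ I}
    have hAm : ∀ I ∈ 𝓘, MeasurableSet[cyl {e : Idx m | Zs e ⊆ I}] (A I) := fun I hI =>
      cyl_mono (fun e he => he.2) _ (hA I hI)
    have ex : ∀ I, ∃ F0 : Finset (Idx m), (F0 : Set (Idx m)) ⊆ {e | Zs e = J} ∧ (I ∈ 𝓙 →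
        ∀ F : Finset (Idx m), F0 ⊆ F →
        Q.real (⋃ q : F → Bool, atomN F q ∩ (A I ∩ (goodC Q (D I) (A I) η (atomN F q))ᶜ)) ≤ ε) := by
      intro I
      by_cases hI : I ∈ 𝓙
      · have hI' := Finset.mem_filter.1 hI
        obtain ⟨F0, h1, h2⟩ := bad_small Q {e | Zs e = J} (D I) (A := A I) (η := η)
          (cyl_mono (by
            rintro e ⟨h1, h2⟩
            by_cases h : Zs e = J
            · exact Or.inl h
            · exact Or.inr ⟨Finset.mem_erase.2 ⟨h, h1⟩, h2⟩) _ (hA I hI'.1)) hη0 hε0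
        exact ⟨F0, h1, fun _ => h2⟩
      · exact ⟨∅, by simp, fun h => absurd h hI⟩
    choose F0 hF0 hF0b using ex
    let F : Finset (Idx m) := 𝓙.biUnion F0
    have hFJ : (F : Set (Idx m)) ⊆ {e | Zs e = J} := by
      intro e he
      obtain ⟨I, hI, he⟩ := Finset.mem_biUnion.1 he
      exact hF0 I he
    let bad : Finset (Fin m) → Set (Idx m → Bool) := fun I =>
      ⋃ q : F → Bool, atomN F q ∩ (A I ∩ (goodC Q (D I) (A I) η (atomN F q))ᶜ)
    have hbadQ : ∀ I ∈ 𝓙, Q.real (bad I) ≤ ε := fun I hI =>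
      hF0b I hI F (Finset.subset_biUnion_of_mem F0 hI)
    have hNm : ∀ q : F → Bool, MeasurableSet[cyl {e : Idx m | Zs e = J}] (atomN F q) := fun q =>
      cyl_mono hFJ _ (atomSet_meas F _)
    have hbadP : ∀ I ∈ 𝓙, P.real (bad I) ≤ K * ε := by
      intro I hI
      have hI' := Finset.mem_filter.1 hI
      refine (hPQ I hI'.1 _ ?_).trans (mul_le_mul_of_nonneg_left (hbadQ I hI) hK)
      refine @MeasurableSet.iUnion _ _ (cyl _) _ _ fun q => ?_
      refine @MeasurableSet.inter _ (cyl _) _ _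
        (cyl_mono (fun e (he : Zs e = J) => (he ▸ hI'.2 : Zs e ⊆ I)) _ (hNm q)) ?_
      exact @MeasurableSet.inter _ (cyl _) _ _ (hAm I hI'.1)
        (@MeasurableSet.compl _ _ (cyl _) (cyl_mono (fun e he => he.2) _ (goodC_meas Q (D I) (A I) η _)))
    let A' : (F → Bool) → Finset (Fin m) → Set (Idx m → Bool) := fun q I =>
      if J ⊆ I then goodC Q (D I) (A I) η (atomN F q) else A I
    have hA2 : ∀ I ∈ 𝓘, ¬ J ⊆ I → MeasurableSet[cyl (D I)] (A I) := by
      intro I hI hJI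
      refine cyl_mono ?_ _ (hA I hI)
      rintro e ⟨h1, h2⟩
      refine ⟨Finset.mem_erase.2 ⟨?_, h1⟩, h2⟩
      rintro rfl
      exact hJI h2
    have cover : W ⊆ (⋃ I ∈ 𝓙, bad I) ∪ ⋃ q ∈ (Finset.univ : Finset (F → Bool)), ⋂ I ∈ 𝓘, A' q I := by
      intro ω hω
      by_cases h : ω ∈ ⋃ I ∈ 𝓙, bad I
      · exact Or.inl h
      right
      refine Set.mem_iUnion₂.2 ⟨fun e => ω e.1, Finset.mem_univ _, Set.mem_iInter₂.2 fun I hI => ?_⟩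
      have hωI := Set.mem_iInter₂.1 hω I hI
      by_cases hJI : J ⊆ I
      · simp only [A', hJI, if_true]
        by_contra hcon
        exact h (Set.mem_iUnion₂.2 ⟨I, Finset.mem_filter.2 ⟨hI, hJI⟩, Set.mem_iUnion.2
          ⟨fun e => ω e.1, (mem_atomN F _ ω).2 rfl, hωI, hcon⟩⟩)
      · simp only [A', hJI, if_false]; exact hωI
    have ⟨q, hq⟩ : ∃ q, 0 < P.real (⋂ I ∈ 𝓘, A' q I) := by
      by_contra! hcon
      have b := (measureReal_mono cover (by finiteness)).trans (measureReal_union_le (μ := P) _ _)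
      have b1 := measureReal_biUnion_finset_le (μ := P) 𝓙 bad
      have b2 := measureReal_biUnion_finset_le (μ := P) (Finset.univ : Finset (F → Bool)) (fun q => ⋂ I ∈ 𝓘, A' q I)
      have b3 := Finset.sum_le_sum hbadP
      have b4 : ∑ q : F → Bool, P.real (⋂ I ∈ 𝓘, A' q I) ≤ 0 := Finset.sum_nonpos fun q _ => hcon q
      rw [Finset.sum_const, nsmul_eq_mul] at b3
      have : ε * ((𝓙.card : ℝ) * K + 1) = P.real W := by rw [hε]; field_simp
      nlinarith
    refine main_step Q hQ 𝓘 𝒟' hlow' J A (fun I hI _ => hAm I hI) hA2 (atomN F q) (hNm q) η ?_ ?_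
    · rw [hη, mul_one_div, div_lt_one (by positivity)]; linarith
    · refine ih 𝒟' (by rw [h𝒟', Finset.card_erase_of_mem hJ, hc]; rfl) hlow' (A' q) ?_ hq
      intro I hI
      by_cases h : J ⊆ I
      · simp only [A', h, if_true]; exact goodC_meas _ _ _ _ _
      · simp only [A', h, if_false]; exact hA2 I hI h


theorem cyl_clopen {E : Type*} (F : Finset E) {A : Set (E → Bool)} (hA : MeasurableSet[cyl (F : Set E)] A) :
    IsClopen A := by
  obtain ⟨B, -, rfl⟩ := hA
  haveI : Finite ((F : Set E) : Type _) := F.finite_toSet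
  have hB : IsClopen B := isClopen_discrete B
  refine hB.preimage ?_
  exact continuous_pi fun e => continuous_apply _

theorem pm_tendsto {m : ℕ} {U : Filter ℕ} {p : ProbabilityMeasure (Idx m → Bool)}
    {ps : ℕ → ProbabilityMeasure (Idx m → Bool)} (h : Filter.Tendsto ps U (nhds p))
    {A : Set (Idx m → Bool)} (hA : IsClopen A) :
    Filter.Tendsto (fun i => (ps i : Measure (Idx m → Bool)).real A) U
      (nhds ((p : Measure (Idx m → Bool)).real A)) := by
  have := ProbabilityMeasure.tendsto_measure_of_null_frontier_of_tendsto' h (E := A)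
    (by rw [hA.frontier_eq]; simp)
  exact (ENNReal.tendsto_toReal (measure_ne_top _ _)).comp this

theorem limit_contra {m : ℕ} (ps qs : ℕ → ProbabilityMeasure (Idx m → Bool))
    (hq : ∀ n, Exch (qs n : Measure (Idx m → Bool))) (𝓘 : Finset (Finset (Fin m))) (K : ℝ) (hK : 0 ≤ K)
    (hPQ : ∀ n, ∀ I ∈ 𝓘, ∀ A, MeasurableSet[cyl {e : Idx m | Zs e ⊆ I}] A →
      (ps n : Measure (Idx m → Bool)).real A ≤ K * (qs n : Measure (Idx m → Bool)).real A)
    (ev : Finset (Fin m) → Idx m) (hev : ∀ I, Zs (ev I) ⊆ I)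
    (hp1 : ∀ n, (ps n : Measure (Idx m → Bool)).real (⋂ I ∈ 𝓘, {ω | ω (ev I) = true}) = 1)
    (hq0 : Filter.Tendsto (fun n => (qs n : Measure (Idx m → Bool)).real (⋂ I ∈ 𝓘, {ω | ω (ev I) = true}))
      Filter.atTop (nhds 0)) : False := by
  classical
  let U : Ultrafilter ℕ := Ultrafilter.of Filter.atTop
  have hU : (U : Filter ℕ) ≤ Filter.atTop := Ultrafilter.of_le _
  set p := (U.map ps).lim
  set q := (U.map qs).lim
  have hp : Filter.Tendsto ps U (nhds p) := (U.map ps).le_nhds_lim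
  have hqt : Filter.Tendsto qs U (nhds q) := (U.map qs).le_nhds_lim
  set P : Measure (Idx m → Bool) := (p : Measure (Idx m → Bool)) with hP
  set Q : Measure (Idx m → Bool) := (q : Measure (Idx m → Bool)) with hQ
  have hcl : IsClopen (⋂ I ∈ 𝓘, {ω : Idx m → Bool | ω (ev I) = true}) := by
    refine isClopen_biInter_finset fun I _ => ?_
    exact (isClopen_discrete {true}).preimage (continuous_apply (ev I))
  have hP1 : P.real (⋂ I ∈ 𝓘, {ω | ω (ev I) = true}) = 1 := by
    have := pm_tendsto hp hcl
    simp only [hp1] at this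
    exact tendsto_nhds_unique this tendsto_const_nhds
  have hQ0 : Q.real (⋂ I ∈ 𝓘, {ω | ω (ev I) = true}) = 0 :=
    tendsto_nhds_unique (pm_tendsto hqt hcl) (hq0.mono_left hU)
  have hE : Exch Q := by
    intro τ hτ
    haveI : IsProbabilityMeasure (Q.map (Tm τ)) := Measure.isProbabilityMeasure_map (measurable_Tm τ).aemeasurable
    have gen := finRing_gen (Set.univ : Set (Idx m)) ∅
    have hu : cyl (Set.univ ∪ ∅ : Set (Idx m)) = MeasurableSpace.pi := by
      refine le_antisymm (cyl_le _) ?_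
      have : @Measurable (Idx m → Bool) (Idx m → Bool) (cyl (Set.univ ∪ ∅)) MeasurableSpace.pi id :=
        @measurable_pi_lambda _ _ _ (cyl _) _ _ fun e => measurable_cyl_apply _ e (by simp)
      intro A hA; exact this hA
    rw [hu] at gen
    refine ext_of_generate_finite _ gen (finRing_isSetRing _ _).isSetSemiring.isPiSystem ?_ (by simp)
    rintro A ⟨F, -, hA⟩
    rw [Set.union_empty] at hA
    have hAm := cyl_le _ _ hA
    rw [Measure.map_apply (measurable_Tm τ) hAm]
    have c1 := cyl_clopen F hA
    have c2 : IsClopen (Tm τ ⁻¹' A) := c1.preimage (continuous_pi fun e => continuous_apply _)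
    have t1 := pm_tendsto hqt c1
    have t2 := pm_tendsto hqt c2
    have : ∀ n, (qs n : Measure (Idx m → Bool)).real (Tm τ ⁻¹' A) = (qs n : Measure (Idx m → Bool)).real A := by
      intro n
      conv_rhs => rw [← hq n τ hτ]
      rw [map_measureReal_apply (measurable_Tm τ) hAm]
    simp only [this] at t2
    have := tendsto_nhds_unique t2 t1
    rwa [measureReal_def, measureReal_def, ENNReal.toReal_eq_toReal_iff' (by finiteness) (by finiteness)] at this
  have hfin : ∀ I ∈ 𝓘, ∀ A, MeasurableSet[cyl {e : Idx m | Zs e ⊆ I}] A → P.real A ≤ K * Q.real A := by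
    intro I hI A hA
    refine le_of_forall_pos_le_add fun ε hε => ?_
    obtain ⟨F, hF, A', hA', hd⟩ := cyl_approx {e : Idx m | Zs e ⊆ I} ∅ (P + Q) (A := A)
      (by rw [Set.union_empty]; exact hA) (ε := ENNReal.ofReal (ε / (K + 1))) (by simp; positivity)
    rw [Set.union_empty] at hA'
    have c := cyl_clopen F hA'
    have h1 : P.real A' ≤ K * Q.real A' :=
      le_of_tendsto_of_tendsto' (pm_tendsto hp c) ((pm_tendsto hqt c).const_mul K)
        fun n => hPQ n I hI A' (cyl_mono hF _ hA')
    have hdr : P.real (symmDiff A' A) + Q.real (symmDiff A' A) ≤ ε / (K + 1) := by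
      rw [← measureReal_add_apply, measureReal_def]
      exact ENNReal.toReal_le_of_le_ofReal (by positivity) hd.le
    have h2 : P.real A ≤ P.real A' + P.real (symmDiff A' A) := by
      refine (measureReal_mono ?_ (by finiteness)).trans (measureReal_union_le _ _)
      intro ω h; by_cases h' : ω ∈ A'
      · exact Or.inl h'
      · exact Or.inr (Or.inr ⟨h, h'⟩)
    have h3 : Q.real A' ≤ Q.real A + Q.real (symmDiff A' A) := by
      refine (measureReal_mono ?_ (by finiteness)).trans (measureReal_union_le _ _)
      intro ω h; by_cases h' : ω ∈ A
      · exact Or.inl h'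
      · exact Or.inr (Or.inl ⟨h, h'⟩)
    have h4 : ε / (K + 1) * (K + 1) = ε := by field_simp
    have h5 : 0 ≤ P.real (symmDiff A' A) := measureReal_nonneg
    have h6 : 0 ≤ Q.real (symmDiff A' A) := measureReal_nonneg
    nlinarith [mul_le_mul_of_nonneg_left h3 hK, mul_nonneg hK h5]
  have := main_pos P Q hE 𝓘 K hK hfin _ Finset.univ rfl (by simp [isLowerSet_univ])
    (fun I => {ω | ω (ev I) = true}) (fun I _ => ?_) (by rw [hP1]; norm_num)
  · rw [hQ0] at this; exact lt_irrefl _ this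
  · exact measurable_cyl_apply _ (ev I) (by simpa using hev I) (MeasurableSet.singleton true)


abbrev Smp (m n : ℕ) := Fin m × ℕ → Fin n

noncomputable def muS (m n : ℕ) : Measure (Smp m n) :=
  Measure.infinitePi fun _ : Fin m × ℕ => uniformOn (Set.univ : Set (Fin n))

theorem unif_prob (n : ℕ) [NeZero n] : IsProbabilityMeasure (uniformOn (Set.univ : Set (Fin n))) :=
  isProbabilityMeasure_uniformOn Set.finite_univ Set.univ_nonempty

theorem muS_prob (m n : ℕ) [NeZero n] : IsProbabilityMeasure (muS m n) := by
  have := unif_prob n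
  unfold muS; infer_instance

open Classical in
noncomputable def Ym {m n : ℕ} (S : Finset (Fin m → Fin n)) (x : Smp m n) : Idx m → Bool :=
  fun e => decide (∃ s ∈ S, ∀ j ∈ e.1, s j = x (j, e.2 j))

theorem Ym_eq {m n : ℕ} (S : Finset (Fin m → Fin n)) (x : Smp m n) (e : Idx m) :
    Ym S x e = true ↔ ∃ s ∈ S, ∀ j ∈ e.1, s j = x (j, e.2 j) := by simp [Ym]

theorem Ym_congr {m n : ℕ} (S : Finset (Fin m → Fin n)) (x y : Smp m n) (e : Idx m)
    (h : ∀ j, x (j, e.2 j) = y (j, e.2 j)) : Ym S x e = Ym S y e := by simp [Ym, h]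

theorem Ym_meas {m n : ℕ} (S : Finset (Fin m → Fin n)) : Measurable (Ym S) := by
  classical
  refine measurable_pi_lambda _ fun e => ?_
  have : (fun x => Ym S x e) = (fun z : Fin m → Fin n => decide (∃ s ∈ S, ∀ j ∈ e.1, s j = z j)) ∘
      (fun (x : Smp m n) j => x (j, e.2 j)) := by
    ext x; simp [Ym]
  rw [this]
  exact Measurable.of_discrete.comp (measurable_pi_lambda _ fun j => measurable_pi_apply _)

theorem Ym_exch {m n : ℕ} [NeZero n] (S : Finset (Fin m → Fin n)) : Exch ((muS m n).map (Ym S)) := by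
  intro τ hτ
  have := unif_prob n
  rw [Measure.map_map (measurable_Tm τ) (Ym_meas S)]
  have h1 : Tm τ ∘ Ym S = Ym S ∘ (fun (x : Smp m n) p => x (p.1, τ p.1 p.2)) := by
    funext x; funext e; rw [Bool.eq_iff_iff, Function.comp_apply, Function.comp_apply, Tm, Ym_eq, Ym_eq]; rfl
  rw [h1, ← Measure.map_map (Ym_meas S) (measurable_pi_lambda _ fun p => measurable_pi_apply (p.1, τ p.1 p.2))]
  congr 1
  exact Measure.map_infinitePi_infinitePi_of_inj (P := fun _ : Fin m × ℕ => uniformOn (Set.univ : Set (Fin n)))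
    (f := fun p : Fin m × ℕ => (p.1, τ p.1 p.2)) (by
      rintro ⟨a, b⟩ ⟨c, d⟩ h
      simp only [Prod.mk.injEq] at h
      obtain ⟨rfl, h⟩ := h
      rw [hτ _ h])

def subI {m n : ℕ} (I : Finset (Fin m)) (s : Fin m → Fin n) (x : Smp m n) : Smp m n :=
  fun p => if p.1 ∈ I ∧ p.2 = 0 then s p.1 else x p

theorem subI_meas {m n : ℕ} (I : Finset (Fin m)) (s : Fin m → Fin n) : Measurable (subI I s) := by
  refine measurable_pi_lambda _ fun p => ?_
  unfold subI
  by_cases h : p.1 ∈ I ∧ p.2 = 0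
  · simp only [h, if_true]; exact measurable_const
  · simp only [h, if_false]; exact measurable_pi_apply _

def evC {m n : ℕ} (I : Finset (Fin m)) (s : Fin m → Fin n) : Set (Smp m n) := {x | ∀ j ∈ I, x (j, 0) = s j}

theorem evC_eq {m n : ℕ} (I : Finset (Fin m)) (s : Fin m → Fin n) :
    evC I s = ((I ×ˢ {0} : Finset (Fin m × ℕ)) : Set (Fin m × ℕ)).pi (fun p => {s p.1}) := by
  ext x
  simp only [evC, Set.mem_pi, Set.mem_ofPred_eq, Finset.mem_coe, Finset.mem_product, Finset.mem_singleton,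
    Set.mem_singleton_iff]
  constructor
  · rintro h ⟨j, i⟩ ⟨h1, rfl⟩; exact h j h1
  · intro h j hj; exact h (j, 0) ⟨hj, rfl⟩

theorem evC_meas {m n : ℕ} (I : Finset (Fin m)) (s : Fin m → Fin n) : MeasurableSet (evC I s) := by
  rw [evC_eq]
  exact MeasurableSet.pi (Finset.countable_toSet _) fun _ _ => MeasurableSet.singleton _

theorem evC_mu {m n : ℕ} [NeZero n] (I : Finset (Fin m)) (s : Fin m → Fin n) :
    (muS m n).real (evC I s) = ((n : ℝ) ^ I.card)⁻¹ := by
  have := unif_prob n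
  rw [evC_eq, measureReal_def, muS, Measure.infinitePi_pi _ (fun _ _ => MeasurableSet.singleton _)]
  simp [uniformOn_univ]

theorem evC_indep {m n : ℕ} [NeZero n] (I : Finset (Fin m)) (s : Fin m → Fin n) (B : Set (Smp m n))
    (hB : MeasurableSet B) :
    (muS m n).real (evC I s ∩ subI I s ⁻¹' B) = ((n : ℝ) ^ I.card)⁻¹ * (muS m n).real (subI I s ⁻¹' B) := by
  have := unif_prob n
  have hi : iIndepFun (fun (p : Fin m × ℕ) (x : Smp m n) => x p) (muS m n) :=
    iIndepFun_infinitePi (P := fun _ : Fin m × ℕ => uniformOn (Set.univ : Set (Fin n)))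
      (X := fun _ => id) (fun _ => measurable_id)
  rw [iIndepFun_iff_iIndep] at hi
  let T : Set (Fin m × ℕ) := {p | p.1 ∈ I ∧ p.2 = 0}
  have hind := indep_iSup_of_disjoint (fun p => (measurable_pi_apply p).comap_le) hi
    (disjoint_compl_right (a := T))
  rw [Indep_iff] at hind
  have hco : ∀ (R : Set (Fin m × ℕ)) p, p ∈ R → @Measurable (Smp m n) (Fin n)
      (⨆ i ∈ R, MeasurableSpace.comap (fun x : Smp m n => x i) inferInstance) _ (fun x => x p) := by
    intro R p hp
    rw [measurable_iff_comap_le]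
    exact le_iSup₂ (f := fun i (_ : i ∈ R) => MeasurableSpace.comap (fun x : Smp m n => x i) inferInstance) p hp
  have h := hind (evC I s) (subI I s ⁻¹' B) ?_ ?_
  · rw [measureReal_def, h, ENNReal.toReal_mul, ← measureReal_def, evC_mu, ← measureReal_def]
  · rw [evC_eq]
    have : ((I ×ˢ {0} : Finset (Fin m × ℕ)) : Set (Fin m × ℕ)).pi (fun p => ({s p.1} : Set (Fin n)))
        = ⋂ p ∈ (I ×ˢ {0} : Finset (Fin m × ℕ)), (fun x : Smp m n => x p) ⁻¹' {s p.1} := by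
      ext x; simp [Set.mem_pi]
    rw [this]
    refine @Finset.measurableSet_biInter _ _ (_) _ _ fun p hp => ?_
    refine hco T p ?_ (MeasurableSet.singleton _)
    rw [Finset.mem_product, Finset.mem_singleton] at hp
    exact hp
  · have : @Measurable _ _ (⨆ i ∈ Tᶜ, MeasurableSpace.comap (fun x : Smp m n => x i) inferInstance)
        MeasurableSpace.pi (subI I s) := by
      refine @measurable_pi_lambda _ _ _ (_) _ _ fun p => ?_
      unfold subI
      by_cases h : p.1 ∈ I ∧ p.2 = 0
      · simp only [h, if_true]; exact measurable_const
      · simp only [h, if_false]; exact hco Tᶜ p h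
    exact this hB

noncomputable def Qn {m n : ℕ} (S : Finset (Fin m → Fin n)) : Measure (Idx m → Bool) := (muS m n).map (Ym S)

noncomputable def Pn {m n : ℕ} (S : Finset (Fin m → Fin n)) : Measure (Idx m → Bool) :=
  (S.card : ENNReal)⁻¹ • ∑ s ∈ S, (muS m n).map (Ym S ∘ subI Finset.univ s)

theorem Qn_prob {m n : ℕ} [NeZero n] (S : Finset (Fin m → Fin n)) : IsProbabilityMeasure (Qn S) := by
  have := muS_prob m n
  exact Measure.isProbabilityMeasure_map (Ym_meas S).aemeasurable

theorem Pn_apply {m n : ℕ} [NeZero n] (S : Finset (Fin m → Fin n)) (A : Set (Idx m → Bool))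
    (hA : MeasurableSet A) :
    (Pn S) A = (S.card : ENNReal)⁻¹ * ∑ s ∈ S, (muS m n) (subI Finset.univ s ⁻¹' (Ym S ⁻¹' A)) := by
  simp only [Pn, Measure.smul_apply, Measure.finsetSum_apply, smul_eq_mul]
  congr 1
  refine Finset.sum_congr rfl fun s _ => ?_
  rw [Measure.map_apply ((Ym_meas S).comp (subI_meas _ s)) hA]
  rfl

theorem Pn_prob {m n : ℕ} [NeZero n] (S : Finset (Fin m → Fin n)) (hS : S.Nonempty) :
    IsProbabilityMeasure (Pn S) := by
  have := muS_prob m n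
  refine ⟨?_⟩
  rw [Pn_apply S _ MeasurableSet.univ]
  simp only [Set.preimage_univ, measure_univ, Finset.sum_const, nsmul_eq_mul, mul_one]
  exact ENNReal.inv_mul_cancel (by simpa using hS.card_pos.ne') (by simp)

theorem Pn_real {m n : ℕ} [NeZero n] (S : Finset (Fin m → Fin n)) (A : Set (Idx m → Bool))
    (hA : MeasurableSet A) :
    (Pn S).real A = (S.card : ℝ)⁻¹ * ∑ s ∈ S, (muS m n).real (subI Finset.univ s ⁻¹' (Ym S ⁻¹' A)) := by
  have := muS_prob m n
  rw [measureReal_def, Pn_apply S A hA, ENNReal.toReal_mul, ENNReal.toReal_sum (by intros; finiteness)]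
  simp [measureReal_def]

theorem PQ_le {m n k : ℕ} [NeZero n] (S : Finset (Fin m → Fin n)) (hS : S.Nonempty) (I : Finset (Fin m)) (hI : I.card = k)
    (hinj : ∀ s ∈ S, ∀ s' ∈ S, (∀ j ∈ I, s j = s' j) → s = s') (δ : ℝ) (hδ : 0 < δ)
    (hSc : δ * (n : ℝ) ^ k ≤ S.card) (A : Set (Idx m → Bool))
    (hA : MeasurableSet[cyl {e : Idx m | Zs e ⊆ I}] A) : (Pn S).real A ≤ δ⁻¹ * (Qn S).real A := by
  have := muS_prob m n
  have hAm := cyl_le _ _ hA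
  have hYA := Ym_meas S hAm
  rw [Pn_real S A hAm]
  have hB : ∀ s, subI Finset.univ s ⁻¹' (Ym S ⁻¹' A) = subI I s ⁻¹' (Ym S ⁻¹' A) := by
    intro s
    ext x
    refine cyl_dep hA fun e he => Ym_congr S _ _ e fun j => ?_
    have : e.2 j = 0 → j ∈ I := fun h => he ((mem_Zs e j).2 h)
    simp only [subI, Finset.mem_univ, true_and]
    by_cases h : e.2 j = 0
    · simp [h, this h]
    · simp [h]
  simp only [hB]
  have hle : ∑ s ∈ S, (muS m n).real (evC I s ∩ subI I s ⁻¹' (Ym S ⁻¹' A)) ≤ (Qn S).real A := by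
    rw [← measureReal_biUnion_finset]
    · rw [Qn, map_measureReal_apply (Ym_meas S) hAm]
      refine measureReal_mono (Set.iUnion₂_subset fun s hs x hx => ?_) (by finiteness)
      have : subI I s x = x := by
        ext p
        simp only [subI]
        split_ifs with h
        · obtain ⟨a, b⟩ := p
          obtain ⟨h1, h2⟩ := h
          simp only at h1 h2
          rw [h2, hx.1 a h1]
        · rfl
      have h2 : subI I s x ∈ Ym S ⁻¹' A := hx.2
      rwa [this] at h2
    · intro s hs s' hs' hne
      rw [Function.onFun, Set.disjoint_left]
      intro x h1 h2
      exact hne (hinj s hs s' hs' fun j hj => (h1.1 j hj).symm.trans (h2.1 j hj))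
    · intro s hs
      exact (evC_meas I s).inter (subI_meas I s hYA)
  simp only [evC_indep I _ _ hYA, hI, ← Finset.mul_sum] at hle
  set R := ∑ s ∈ S, (muS m n).real (subI I s ⁻¹' (Ym S ⁻¹' A))
  have hR : 0 ≤ R := Finset.sum_nonneg fun _ _ => measureReal_nonneg
  have hn : (0:ℝ) < n := by exact_mod_cast Nat.pos_of_ne_zero (NeZero.ne n)
  have hc : (0:ℝ) < S.card := by exact_mod_cast hS.card_pos
  calc (S.card : ℝ)⁻¹ * R ≤ (δ * (n : ℝ) ^ k)⁻¹ * R := by gcongr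
    _ = δ⁻¹ * (((n : ℝ) ^ k)⁻¹ * R) := by rw [mul_inv]; ring
    _ ≤ _ := by gcongr

open Classical in
noncomputable def Zf {m n : ℕ} (k : ℕ) (S : Finset (Fin m → Fin n)) : Finset (Fin m → Fin n) :=
  Finset.univ.filter fun z => ∀ I ∈ Finset.powersetCard k Finset.univ, ∃ s ∈ S, ∀ j ∈ I, s j = z j

def evI {m : ℕ} (I : Finset (Fin m)) : Idx m := (I, fun j => if j ∈ I then 0 else 1)

theorem Zs_evI {m : ℕ} (I : Finset (Fin m)) : Zs (evI I) = I := by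
  ext j; rw [mem_Zs]; simp [evI]

theorem Qn_ev {m n : ℕ} [NeZero n] (k : ℕ) (S : Finset (Fin m → Fin n)) :
    (Qn S).real (⋂ I ∈ Finset.powersetCard k Finset.univ, {ω | ω (evI I) = true}) ≤
      ((Zf k S).card : ℝ) / (n : ℝ) ^ m := by
  have := muS_prob m n
  have hm : MeasurableSet (⋂ I ∈ Finset.powersetCard k (Finset.univ : Finset (Fin m)), {ω : Idx m → Bool | ω (evI I) = true}) :=
    Finset.measurableSet_biInter _ fun I _ =>
      (measurable_pi_apply (X := fun _ : Idx m => Bool) (evI I)) (MeasurableSet.singleton true)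
  rw [Qn, map_measureReal_apply (Ym_meas S) hm]
  have hsub : Ym S ⁻¹' (⋂ I ∈ Finset.powersetCard k Finset.univ, {ω | ω (evI I) = true}) ⊆
      ⋃ z ∈ Zf k S, evC Finset.univ z := by
    intro x hx
    refine Set.mem_iUnion₂.2 ⟨fun j => x (j, 0), ?_, fun j _ => rfl⟩
    simp only [Zf, Finset.mem_filter, Finset.mem_univ, true_and]
    intro I hI
    have := Set.mem_iInter₂.1 hx I hI
    rw [Set.mem_ofPred_eq, Ym_eq] at this
    obtain ⟨s, hs, h⟩ := this
    refine ⟨s, hs, fun j hj => ?_⟩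
    have := h j hj
    simp only [evI] at hj this
    simpa [hj] using this
  refine (measureReal_mono hsub (measure_ne_top _ _)).trans ((measureReal_biUnion_finset_le _ _).trans ?_)
  simp [evC_mu, div_eq_mul_inv]

theorem Pn_ev {m n : ℕ} [NeZero n] (k : ℕ) (S : Finset (Fin m → Fin n)) (hS : S.Nonempty) :
    (Pn S).real (⋂ I ∈ Finset.powersetCard k Finset.univ, {ω | ω (evI I) = true}) = 1 := by
  have := muS_prob m n
  have hm : MeasurableSet (⋂ I ∈ Finset.powersetCard k (Finset.univ : Finset (Fin m)), {ω : Idx m → Bool | ω (evI I) = true}) :=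
    Finset.measurableSet_biInter _ fun I _ =>
      (measurable_pi_apply (X := fun _ : Idx m => Bool) (evI I)) (MeasurableSet.singleton true)
  rw [Pn_real S _ hm]
  have : ∀ s ∈ S, (muS m n).real (subI Finset.univ s ⁻¹' (Ym S ⁻¹'
      (⋂ I ∈ Finset.powersetCard k Finset.univ, {ω | ω (evI I) = true}))) = 1 := by
    intro s hs
    have : subI Finset.univ s ⁻¹' (Ym S ⁻¹'
      (⋂ I ∈ Finset.powersetCard k Finset.univ, {ω | ω (evI I) = true})) = Set.univ := by
      rw [Set.eq_univ_iff_forall]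
      intro x
      refine Set.mem_iInter₂.2 fun I _ => ?_
      rw [Set.mem_ofPred_eq, Ym_eq]
      refine ⟨s, hs, fun j hj => ?_⟩
      simp only [evI] at hj
      simp [evI, subI, hj]
    rw [this]; simp
  rw [Finset.sum_congr rfl this]
  have hc : (S.card : ℝ) ≠ 0 := by exact_mod_cast hS.card_pos.ne'
  simp [hc]

theorem removal (m k : ℕ) (δ : ℝ) (hδ : 0 < δ) (ns : ℕ → ℕ) (hns : ∀ t, 0 < ns t)
    (S : ∀ t, Finset (Fin m → Fin (ns t)))
    (hinj : ∀ t, ∀ I : Finset (Fin m), I.card = k → ∀ s ∈ S t, ∀ s' ∈ S t, (∀ j ∈ I, s j = s' j) → s = s')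
    (hS : ∀ t, δ * (ns t : ℝ) ^ k ≤ (S t).card)
    (hZ : Filter.Tendsto (fun t => ((Zf k (S t)).card : ℝ) / (ns t : ℝ) ^ m) Filter.atTop (nhds 0)) : False := by
  have hne : ∀ t, NeZero (ns t) := fun t => ⟨(hns t).ne'⟩
  have hSne : ∀ t, (S t).Nonempty := by
    intro t
    have : (0:ℝ) < ns t := by exact_mod_cast hns t
    have h : (0:ℝ) < (S t).card := lt_of_lt_of_le (by positivity) (hS t)
    exact Finset.card_pos.1 (by exact_mod_cast h)
  refine limit_contra (fun t => ⟨Pn (S t), Pn_prob (S t) (hSne t)⟩) (fun t => ⟨Qn (S t), Qn_prob (S t)⟩)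
    (fun t => Ym_exch (S t)) (Finset.powersetCard k Finset.univ) δ⁻¹ (by positivity) ?_ evI
    (fun I => (Zs_evI I).subset) (fun t => Pn_ev k (S t) (hSne t)) ?_
  · intro t I hI A hA
    rw [Finset.mem_powersetCard] at hI
    exact PQ_le (S t) (hSne t) I hI.2 (hinj t I hI.2) δ hδ (hS t) A hA
  · exact squeeze_zero (fun t => measureReal_nonneg) (fun t => Qn_ev k (S t)) hZ


end Helpers

theorem union_bound {n : ℕ} (r k : ℕ) (S : Finset (Finset (Fin n))) (hr : ∀ A ∈ S, A.card = r)
    (T : Finset (Fin n)) (hT : ∀ A ∈ S, k ≤ (A ∩ T).card) :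
    (S.biUnion id).card ≤ T.card + S.card * (r - k) := by
  classical
  have h1 : S.biUnion id ⊆ T ∪ S.biUnion (fun A => A \ T) := by
    intro x hx
    simp only [Finset.mem_biUnion, id, Finset.mem_union, Finset.mem_sdiff] at hx ⊢
    obtain ⟨A, hA, hx⟩ := hx
    by_cases h : x ∈ T
    · exact Or.inl h
    · exact Or.inr ⟨A, hA, hx, h⟩
  refine (Finset.card_le_card h1).trans ((Finset.card_union_le _ _).trans ?_)
  refine Nat.add_le_add_left (Finset.card_biUnion_le_card_mul _ _ _ fun A hA => ?_) _
  have := Finset.card_sdiff_add_card_inter A T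
  have := hr A hA
  have := hT A hA
  omega

theorem sparse_sub {n : ℕ} (r k e v : ℕ) (he : 1 ≤ e) (hkr : k ≤ r) (hv : k + e * (r - k) ≤ v)
    (H : Finset (Finset (Fin n)))
    (hr : ∀ A ∈ H, A.card = r) (hG : GFree H v e) :
    ∃ H' ⊆ H, (∀ A ∈ H', ∀ B ∈ H', k ≤ (A ∩ B).card → A = B) ∧
      H.card ≤ H'.card * (r.choose k * e) := by
  classical
  have L1 : ∀ T : Finset (Fin n), T.card = k → (H.filter fun A => T ⊆ A).card ≤ e := by
    intro T hT
    by_contra! hc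
    obtain ⟨S, hS, hSc⟩ := Finset.exists_subset_card_eq hc.le
    have hSH : S ⊆ H := hS.trans (Finset.filter_subset _ _)
    have h1 := hG S hSH hSc
    have h2 := union_bound r k S (fun A hA => hr A (hSH hA)) T (fun A hA => by
      have := (Finset.mem_filter.1 (hS hA)).2
      rw [Finset.inter_eq_right.2 this, hT])
    rw [hSc, hT] at h2
    omega
  let 𝓕 := H.powerset.filter fun H' => ∀ A ∈ H', ∀ B ∈ H', k ≤ (A ∩ B).card → A = B
  have hne : 𝓕.Nonempty := ⟨∅, by simp [𝓕]⟩
  obtain ⟨H', hH', hmax⟩ := 𝓕.exists_max_image Finset.card hne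
  obtain ⟨hsub, hsp⟩ := Finset.mem_filter.1 hH'
  rw [Finset.mem_powerset] at hsub
  refine ⟨H', hsub, hsp, ?_⟩
  have hcov : ∀ A ∈ H, ∃ B ∈ H', k ≤ (A ∩ B).card := by
    intro A hA
    by_cases hAH : A ∈ H'
    · exact ⟨A, hAH, by rw [Finset.inter_self, hr A hA]; exact hkr⟩
    by_contra! hcon
    have : insert A H' ∈ 𝓕 := by
      refine Finset.mem_filter.2 ⟨Finset.mem_powerset.2 (Finset.insert_subset hA hsub), ?_⟩
      intro B hB C hC hBC
      rcases Finset.mem_insert.1 hB with hB1 | hB1 <;> rcases Finset.mem_insert.1 hC with hC1 | hC1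
      · rw [hB1, hC1]
      · rw [hB1] at hBC
        exact absurd hBC (not_le.2 (hcon C hC1))
      · rw [Finset.inter_comm, hC1] at hBC
        exact absurd hBC (not_le.2 (hcon B hB1))
      · exact hsp B hB1 C hC1 hBC
    have := hmax _ this
    rw [Finset.card_insert_of_notMem hAH] at this
    omega
  have hsub2 : H ⊆ H'.biUnion fun B => (Finset.powersetCard k B).biUnion fun T => H.filter fun A => T ⊆ A := by
    intro A hA
    obtain ⟨B, hB, hk⟩ := hcov A hA
    obtain ⟨T, hT, hTc⟩ := Finset.exists_subset_card_eq hk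
    refine Finset.mem_biUnion.2 ⟨B, hB, Finset.mem_biUnion.2 ⟨T, ?_, ?_⟩⟩
    · exact Finset.mem_powersetCard.2 ⟨hT.trans Finset.inter_subset_right, hTc⟩
    · exact Finset.mem_filter.2 ⟨hA, hT.trans Finset.inter_subset_left⟩
  refine (Finset.card_le_card hsub2).trans (Finset.card_biUnion_le_card_mul _ _ _ fun B hB => ?_)
  have : (Finset.powersetCard k B).card = r.choose k := by
    rw [Finset.card_powersetCard, hr B (hsub hB)]
  rw [← this]
  exact Finset.card_biUnion_le_card_mul _ _ _ fun T hT => L1 T (Finset.mem_powersetCard.1 hT).2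

theorem card_proj {m n : ℕ} (I : Finset (Fin m)) (S : Finset (Fin m → Fin n))
    (hinj : ∀ s ∈ S, ∀ s' ∈ S, (∀ j ∈ I, s j = s' j) → s = s') : S.card ≤ n ^ I.card := by
  classical
  have := Finset.card_le_card_of_injOn (s := S) (t := (Finset.univ : Finset (I → Fin n)))
    (fun s j => s j.1) (fun _ _ => Finset.mem_coe.2 (Finset.mem_univ _)) (by
      intro s hs s' hs' h
      exact hinj s hs s' hs' fun j hj => congrFun h ⟨j, hj⟩)
  simpa using this

theorem build {n : ℕ} [NeZero n] (r k e i : ℕ) (hr1 : k + i + 1 ≤ r)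
    (h2 : e ≤ (k + i + 1).choose k) (h3 : 3 ≤ e) (H : Finset (Finset (Fin n)))
    (hr : ∀ A ∈ H, A.card = r) (hG : GFree H (e * (r - k) + k + i + 1) e) :
    ∃ S : Finset (Fin (k + i + 1) → Fin n),
      (∀ I : Finset (Fin (k + i + 1)), I.card = k → ∀ s ∈ S, ∀ s' ∈ S, (∀ j ∈ I, s j = s' j) → s = s') ∧
      H.card ≤ S.card * (r.choose k * e) ∧
      (Zf k S).card ≤ (k + i + 1).choose (k + 1) * n ^ (k + i) := by
  classical
  obtain ⟨H', hsub, hsp, hcard⟩ := sparse_sub r k e (e * (r - k) + k + i + 1) (by omega) (by omega)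
    (by omega) H hr hG
  set m := k + i + 1 with hm
  have ex : ∀ A : Finset (Fin n), ∃ s : Fin m → Fin n, A ∈ H' → Function.Injective s ∧ ∀ j, s j ∈ A := by
    intro A
    by_cases hA : A ∈ H'
    · have hc := hr A (hsub hA)
      refine ⟨fun j => A.orderEmbOfFin hc (Fin.castLE hr1 j), fun _ => ⟨?_, fun j => ?_⟩⟩
      · intro a b hab
        exact Fin.castLE_injective hr1 ((A.orderEmbOfFin hc).injective hab)
      · exact A.orderEmbOfFin_mem hc _
    · exact ⟨fun _ => 0, fun h => absurd h hA⟩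
  choose sA hsA using ex
  have hagree : ∀ A ∈ H', ∀ B ∈ H', ∀ I : Finset (Fin m), I.card = k → (∀ j ∈ I, sA A j = sA B j) → A = B := by
    intro A hA B hB I hI h
    refine hsp A hA B hB ?_
    have : I.image (sA A) ⊆ A ∩ B := by
      intro x hx
      obtain ⟨j, hj, rfl⟩ := Finset.mem_image.1 hx
      refine Finset.mem_inter.2 ⟨(hsA A hA).2 j, ?_⟩
      rw [h j hj]; exact (hsA B hB).2 j
    rw [← hI, ← Finset.card_image_of_injective I (hsA A hA).1]
    exact Finset.card_le_card this
  obtain ⟨I0, -, hI0⟩ := Finset.exists_subset_card_eq (s := (Finset.univ : Finset (Fin m))) (n := k)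
    (by simp; omega)
  have hinj : ∀ I : Finset (Fin m), I.card = k → ∀ s ∈ H'.image sA, ∀ s' ∈ H'.image sA,
      (∀ j ∈ I, s j = s' j) → s = s' := by
    intro I hI s hs s' hs' h
    obtain ⟨A, hA, rfl⟩ := Finset.mem_image.1 hs
    obtain ⟨B, hB, rfl⟩ := Finset.mem_image.1 hs'
    rw [hagree A hA B hB I hI h]
  have hSc : (H'.image sA).card = H'.card := by
    refine Finset.card_image_of_injOn ?_
    intro A hA B hB h
    exact hagree A hA B hB I0 hI0 fun j _ => congrFun h j
  refine ⟨H'.image sA, hinj, by rw [hSc]; exact hcard, ?_⟩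
  have hH'n : H'.card ≤ n ^ k := by
    rw [← hSc, ← hI0]
    exact card_proj I0 _ (hinj I0 hI0)
  have hcov : Zf k (H'.image sA) ⊆ H'.biUnion fun A => (Finset.powersetCard (k + 1) Finset.univ).biUnion
      fun U => Finset.univ.filter fun z => ∀ j ∈ U, sA A j = z j := by
    intro z hz
    simp only [Zf, Finset.mem_filter, Finset.mem_univ, true_and] at hz
    have hz' : ∀ I : Finset (Fin m), ∃ A, I.card = k → A ∈ H' ∧ ∀ j ∈ I, sA A j = z j := by
      intro I
      by_cases hI : I.card = k
      · obtain ⟨s, hs, h⟩ := hz I (Finset.mem_powersetCard.2 ⟨Finset.subset_univ _, hI⟩)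
        obtain ⟨A, hA, rfl⟩ := Finset.mem_image.1 hs
        exact ⟨A, fun _ => ⟨hA, h⟩⟩
      · exact ⟨∅, fun h => absurd h hI⟩
    choose f hf using hz'
    have hnot : ¬ Set.InjOn f (Finset.powersetCard k (Finset.univ : Finset (Fin m))) := by
      intro hi
      have hc : e ≤ ((Finset.powersetCard k (Finset.univ : Finset (Fin m))).image f).card := by
        rw [Finset.card_image_of_injOn hi, Finset.card_powersetCard, Finset.card_univ, Fintype.card_fin]
        exact h2
      obtain ⟨S0, hS0, hS0c⟩ := Finset.exists_subset_card_eq hc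
      have hS0f : ∀ A ∈ S0, ∃ I : Finset (Fin m), I.card = k ∧ f I = A := by
        intro A hA
        obtain ⟨I, hI, rfl⟩ := Finset.mem_image.1 (hS0 hA)
        exact ⟨I, (Finset.mem_powersetCard.1 hI).2, rfl⟩
      have hS0H : S0 ⊆ H := by
        intro A hA
        obtain ⟨I, hI, rfl⟩ := hS0f A hA
        exact hsub (hf I hI).1
      have b1 := hG S0 hS0H hS0c
      have b2 := union_bound r k S0 (fun A hA => hr A (hS0H hA)) (Finset.univ.image z) (fun A hA => by
        obtain ⟨I, hI, rfl⟩ := hS0f A hA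
        obtain ⟨h4, h5⟩ := hf I hI
        have : I.image (sA (f I)) ⊆ f I ∩ Finset.univ.image z := by
          intro x hx
          obtain ⟨j, hj, rfl⟩ := Finset.mem_image.1 hx
          refine Finset.mem_inter.2 ⟨(hsA _ h4).2 j, ?_⟩
          rw [h5 j hj]; exact Finset.mem_image_of_mem _ (Finset.mem_univ _)
        rw [← hI, ← Finset.card_image_of_injective I (hsA _ h4).1]
        exact Finset.card_le_card this)
      have b3 : (Finset.univ.image z).card ≤ m := by
        have := Finset.card_image_le (s := Finset.univ) (f := z)
        simpa using this
      rw [hS0c] at b2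
      omega
    simp only [Set.InjOn, not_forall] at hnot
    obtain ⟨I, hI, I', hI', hff, hne⟩ := hnot
    have hI := (Finset.mem_powersetCard.1 (Finset.mem_coe.1 hI)).2
    have hI' := (Finset.mem_powersetCard.1 (Finset.mem_coe.1 hI')).2
    have hcu : k + 1 ≤ (I ∪ I').card := by
      rw [← hI]
      refine Finset.card_lt_card (Finset.ssubset_iff_subset_ne.2 ⟨Finset.subset_union_left, fun h => ?_⟩)
      have : I' ⊆ I := by rw [h]; exact Finset.subset_union_right
      exact hne (Finset.eq_of_subset_of_card_le this (by omega)).symm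
    obtain ⟨U, hU, hUc⟩ := Finset.exists_subset_card_eq hcu
    refine Finset.mem_biUnion.2 ⟨f I, (hf I hI).1, Finset.mem_biUnion.2 ⟨U,
      Finset.mem_powersetCard.2 ⟨Finset.subset_univ _, hUc⟩, Finset.mem_filter.2 ⟨Finset.mem_univ _, ?_⟩⟩⟩
    intro j hj
    rcases Finset.mem_union.1 (hU hj) with h | h
    · exact (hf I hI).2 j h
    · rw [hff]; exact (hf I' hI').2 j h
  have hfib : ∀ A, ∀ U ∈ Finset.powersetCard (k + 1) (Finset.univ : Finset (Fin m)),
      (Finset.univ.filter fun z : Fin m → Fin n => ∀ j ∈ U, sA A j = z j).card ≤ n ^ i := by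
    intro A U hU
    have hUc := (Finset.mem_powersetCard.1 hU).2
    have : Uᶜ.card = i := by rw [Finset.card_compl, hUc, Fintype.card_fin]; omega
    rw [← this]
    refine card_proj Uᶜ _ ?_
    intro z hz z' hz' h
    ext j
    by_cases hj : j ∈ U
    · rw [← (Finset.mem_filter.1 hz).2 j hj, ← (Finset.mem_filter.1 hz').2 j hj]
    · rw [h j (Finset.mem_compl.2 hj)]
  calc (Zf k (H'.image sA)).card ≤ H'.card * ((k + i + 1).choose (k + 1) * n ^ i) := by
        refine (Finset.card_le_card hcov).trans (Finset.card_biUnion_le_card_mul _ _ _ fun A _ => ?_)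
        refine (Finset.card_biUnion_le_card_mul _ _ _ (hfib A)).trans (le_of_eq ?_)
        rw [Finset.card_powersetCard, Finset.card_univ, Fintype.card_fin]
    _ ≤ n ^ k * ((k + i + 1).choose (k + 1) * n ^ i) := Nat.mul_le_mul_right _ hH'n
    _ = _ := by rw [pow_add]; ring

theorem brown_erdos_sos_upper_general (r k e i : ℕ) (hk : 1 ≤ k)
    (h1 : k + i + 1 ≤ r) (h2 : e ≤ (k + i + 1).choose k) (h3 : 3 ≤ e) (ε : ℝ) (hε : 0 < ε) :
    ∃ N : ℕ, ∀ n : ℕ, N ≤ n → (extremalF r n (e * (r - k) + k + i + 1) e : ℝ) ≤ ε * (n : ℝ) ^ k := by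
  by_contra! hcon
  have hcon' : ∀ t : ℕ, ∃ n : ℕ, t + 1 ≤ n ∧ ε * (n : ℝ) ^ k < (extremalF r n (e * (r - k) + k + i + 1) e : ℝ) :=
    fun t => hcon (t + 1)
  choose ns hns hlt using hcon'
  have hne : ∀ t, NeZero (ns t) := fun t => ⟨by have := hns t; omega⟩
  have hH : ∀ t, ∃ H : Finset (Finset (Fin (ns t))), (∀ A ∈ H, A.card = r) ∧
      GFree H (e * (r - k) + k + i + 1) e ∧ H.card = extremalF r (ns t) (e * (r - k) + k + i + 1) e := by
    intro t
    refine Nat.sSup_mem (s := {m : ℕ | ∃ H : Finset (Finset (Fin (ns t))),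
      (∀ A ∈ H, A.card = r) ∧ GFree H (e * (r - k) + k + i + 1) e ∧ H.card = m}) ⟨0, ∅, by simp, ?_, rfl⟩ ⟨Fintype.card (Finset (Fin (ns t))), ?_⟩
    · intro S hS hc
      rw [Finset.subset_empty.1 hS] at hc
      simp at hc; omega
    · rintro _ ⟨H, -, -, rfl⟩
      exact Finset.card_le_univ H
  choose H hHr hHG hHc using hH
  choose S hinj hHS hZ using fun t => build r k e i h1 h2 h3 (H t) (hHr t) (hHG t)
  have hC : 0 < r.choose k * e := Nat.mul_pos (Nat.choose_pos (by omega)) (by omega)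
  set C : ℝ := ((r.choose k * e : ℕ) : ℝ) with hCdef
  have hC' : 0 < C := by rw [hCdef]; exact_mod_cast hC
  refine removal (k + i + 1) k (ε / C) (by positivity) ns (fun t => by have := hns t; omega) S
    hinj ?_ ?_
  · intro t
    have h4 : ((H t).card : ℝ) ≤ (S t).card * C := by rw [hCdef]; exact_mod_cast hHS t
    have h5 := hlt t
    rw [← hHc t] at h5
    rw [div_mul_eq_mul_div, div_le_iff₀ hC']
    linarith
  · refine squeeze_zero (fun t => by positivity) (g := fun t : ℕ =>
      ((k + i + 1).choose (k + 1) : ℝ) * (1 / ((t : ℝ) + 1))) (fun t => ?_) ?_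
    · have h4 : ((Zf k (S t)).card : ℝ) ≤ (k + i + 1).choose (k + 1) * (ns t : ℝ) ^ (k + i) := by
        exact_mod_cast hZ t
      have h5 : (t : ℝ) + 1 ≤ ns t := by exact_mod_cast hns t
      have h6 : (0:ℝ) < ns t := lt_of_lt_of_le (by positivity) h5
      calc ((Zf k (S t)).card : ℝ) / (ns t : ℝ) ^ (k + i + 1)
          ≤ ((k + i + 1).choose (k + 1) * (ns t : ℝ) ^ (k + i)) / (ns t : ℝ) ^ (k + i + 1) := by gcongr
        _ = (k + i + 1).choose (k + 1) * (1 / (ns t : ℝ)) := by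
            rw [pow_succ]; field_simp
        _ ≤ _ := by gcongr
    · have := tendsto_one_div_add_atTop_nhds_zero_nat (𝕜 := ℝ)
      simpa using this.const_mul ((k + i + 1).choose (k + 1) : ℝ)
end

section
/- Let r ≥ 3 and let H be an r-uniform r-partite linear hypergraph containing no rainbow cycles of length three or four. Then H is G_r(3r−3, 3)-free, G_r(4r−5, 4)-free, G_r(5r−7, 5)-free, G_r(7r−11, 7)-free and G_r(8r−13, 8)-free. -/
open Finset

/-- `H` (an `r`-uniform `r`-partite hypergraph with parts given by `part`) contains a rainbow
cycle of length `k`: `k` distinct vertices and `k` distinct edges, with `vᵢ, vᵢ₊₁ ∈ Aᵢ`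
(cyclically), and the `k` vertices lying in `k` distinct vertex parts. -/
def HasRainbowCycle {V : Type*} {r : ℕ} (H : Finset (Finset V)) (part : V → Fin r)
    (k : ℕ) : Prop :=
  ∃ (v : Fin k → V) (A : Fin k → Finset V),
    Function.Injective v ∧ Function.Injective A ∧
    (∀ i, A i ∈ H) ∧
    (∀ i : Fin k, v i ∈ A i ∧ v (finRotate k i) ∈ A i) ∧
    Function.Injective (fun i => part (v i))


def Good {X C : Type*} (G : SimpleGraph X) (col : X → X → C) : Prop :=
  (∀ a b, col a b = col b a) ∧
  (∀ a b c, G.Adj a b → G.Adj b c → ¬ G.Adj c a) ∧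
  (∀ a x b y, G.Adj a x → G.Adj x b → G.Adj b y → G.Adj y a → a ≠ b → x ≠ y →
    col a x ≠ col x b ∧ (col a x = col b y ∨ col x b = col y a))

lemma good_three {X C : Type*} {G : SimpleGraph X} {col : X → X → C} (h : Good G col)
    {a b x y z : X} (hab : a ≠ b) (hxy : x ≠ y) (hxz : x ≠ z) (hyz : y ≠ z)
    (ax : G.Adj a x) (ay : G.Adj a y) (az : G.Adj a z)
    (bx : G.Adj b x) (b_y : G.Adj b y) (bz : G.Adj b z) :
    (col b x = col a z ∧ col b y = col a x ∧ col b z = col a y) ∨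
    (col b x = col a y ∧ col b y = col a z ∧ col b z = col a x) := by
  obtain ⟨hs, -, h4⟩ := h
  have e1 := h4 a x b y ax bx.symm b_y ay.symm hab hxy
  have e2 := h4 a y b z ay b_y.symm bz az.symm hab hyz
  have e3 := h4 a x b z ax bx.symm bz az.symm hab hxz
  have f1 := h4 x a y b ax.symm ay b_y.symm bx hxy hab
  have f2 := h4 y a z b ay.symm az bz.symm b_y hyz hab
  have f3 := h4 x a z b ax.symm az bz.symm bx hxz hab
  have g1 := h4 x b y a bx.symm b_y ay.symm ax hxy hab.symm
  have g2 := h4 y b z a b_y.symm bz az.symm ay hyz hab.symm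
  have g3 := h4 x b z a bx.symm bz az.symm ax hxz hab.symm
  rw [hs x b, hs y a] at e1
  rw [hs y b, hs z a] at e2
  rw [hs x b, hs z a] at e3
  rw [hs x a] at f1 f3
  rw [hs y a] at f2
  rw [hs x b] at g1 g3
  rw [hs y b] at g2
  grind

lemma good_codeg {X C : Type*} [Fintype X] [DecidableEq X] {G : SimpleGraph X}
    [DecidableRel G.Adj] {col : X → X → C} (h : Good G col)
    {a b : X} (hab : a ≠ b) : (G.neighborFinset a ∩ G.neighborFinset b).card ≤ 3 := by
  by_contra hc
  obtain ⟨T, hT, hT4⟩ := Finset.exists_subset_card_eq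
    (show 4 ≤ (G.neighborFinset a ∩ G.neighborFinset b).card by omega)
  obtain ⟨x, y, z, w, hxy, hxz, hxw, hyz, hyw, hzw, rfl⟩ := Finset.card_eq_four.1 hT4
  simp only [insert_subset_iff, singleton_subset_iff, mem_inter, SimpleGraph.mem_neighborFinset] at hT
  obtain ⟨⟨ax, bx⟩, ⟨ay, b_y⟩, ⟨az, bz⟩, ⟨aw, bw⟩⟩ := hT
  have q1 := good_three h hab hxy hxz hyz ax ay az bx b_y bz
  have q2 := good_three h hab hxy hxw hyw ax ay aw bx b_y bw
  have q3 := good_three h hab hxz hxw hzw ax az aw bx bz bw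
  have d1 := (h.2.2 x a y b ax.symm ay b_y.symm bx hxy hab).1
  have d2 := (h.2.2 x a z b ax.symm az bz.symm bx hxz hab).1
  have d3 := (h.2.2 x a w b ax.symm aw bw.symm bx hxw hab).1
  have d4 := (h.2.2 y a z b ay.symm az bz.symm b_y hyz hab).1
  have d5 := (h.2.2 y a w b ay.symm aw bw.symm b_y hyw hab).1
  have d6 := (h.2.2 z a w b az.symm aw bw.symm bz hzw hab).1
  rw [h.1 x a] at d1 d2 d3
  rw [h.1 y a] at d4 d5
  rw [h.1 z a] at d6
  grind

section count
variable {X C : Type*} [Fintype X] [DecidableEq X] {G : SimpleGraph X}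
    [DecidableRel G.Adj] {col : X → X → C}

lemma good_count (h : Good G col) (u : X) :
    2 * G.edgeFinset.card = ∑ v ∈ (G.neighborFinset u)ᶜ,
      (G.degree v + (G.neighborFinset u ∩ G.neighborFinset v).card) := by
  rw [← G.sum_degrees_eq_twice_card_edges, ← Finset.sum_compl_add_sum (G.neighborFinset u),
    Finset.sum_add_distrib]
  congr 1
  have : ∀ x, G.degree x = ∑ v, if G.Adj x v then 1 else 0 := by
    intro x
    rw [← G.card_neighborFinset_eq_degree, Finset.sum_boole, SimpleGraph.neighborFinset_eq_filter]
    simp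
  simp_rw [this]
  rw [Finset.sum_comm, ← Finset.sum_compl_add_sum (G.neighborFinset u)]
  have h0 : ∑ v ∈ G.neighborFinset u, (∑ x ∈ G.neighborFinset u, if G.Adj x v then 1 else 0) = 0 := by
    apply Finset.sum_eq_zero
    intro v hv
    apply Finset.sum_eq_zero
    intro x hx
    rw [SimpleGraph.mem_neighborFinset] at hv hx
    rw [if_neg]
    intro hxv
    exact h.2.1 u x v hx hxv hv.symm
  rw [h0, add_zero]
  apply Finset.sum_congr rfl
  intro v hv
  rw [Finset.sum_boole]
  simp only [Nat.cast_id]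
  congr 1
  ext x
  simp [G.adj_comm]

/-- degree split -/
lemma deg_split (u v : X) : G.degree v = (G.neighborFinset u ∩ G.neighborFinset v).card +
    ((G.neighborFinset u)ᶜ.filter (G.Adj v)).card := by
  rw [← G.card_neighborFinset_eq_degree, ← Finset.card_inter_add_card_sdiff _ (G.neighborFinset u),
    Finset.inter_comm]
  congr 2
  ext x
  simp [and_comm]

lemma good_disj (h : Good G col) (u : X) {v w : X} (hvw : G.Adj v w) :
    (G.neighborFinset u ∩ G.neighborFinset v).card +
    (G.neighborFinset u ∩ G.neighborFinset w).card ≤ G.degree u := by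
  rw [← Finset.card_union_of_disjoint, ← G.card_neighborFinset_eq_degree]
  · apply Finset.card_le_card
    intro x; simp; tauto
  · rw [Finset.disjoint_left]
    intro x
    simp only [mem_inter, SimpleGraph.mem_neighborFinset]
    rintro ⟨_, h1⟩ ⟨_, h2⟩
    exact h.2.1 v w x hvw h2 h1.symm

lemma compl_eq (u : X) : ∃ W : Finset X, (G.neighborFinset u)ᶜ = insert u W ∧ u ∉ W ∧
    W.card + 1 + G.degree u = Fintype.card X := by
  refine ⟨(G.neighborFinset u)ᶜ.erase u, ?_, by simp, ?_⟩
  · rw [Finset.insert_erase]; simp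
  · rw [Finset.card_erase_of_mem (by simp), Finset.card_compl, G.card_neighborFinset_eq_degree]
    have := G.degree_lt_card_verts u
    omega

lemma exists_big (k m : ℕ) (hX : Fintype.card X = k) (hm : k * m < 2 * G.edgeFinset.card) :
    ∃ u, m < G.degree u := by
  by_contra hc
  push Not at hc
  rw [← G.sum_degrees_eq_twice_card_edges] at hm
  have := Finset.sum_le_card_nsmul univ (fun v => G.degree v) m (fun v _ => hc v)
  simp [hX] at this
  omega

lemma good_W0 (h : Good G col) (u : X) (hc : (G.neighborFinset u)ᶜ = {u}) :
    G.edgeFinset.card = G.degree u := by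
  have := good_count h u
  rw [hc] at this
  simp at this
  omega

lemma good_W1 (h : Good G col) (u w : X) (hu : u ≠ w) (hc : (G.neighborFinset u)ᶜ = {u, w}) :
    G.edgeFinset.card = G.degree u + (G.neighborFinset u ∩ G.neighborFinset w).card := by
  have h1 := good_count h u
  have h2 := deg_split (G := G) u w
  have hm : ∀ x, x ∈ (G.neighborFinset u)ᶜ → ¬ G.Adj u x := by simp
  simp only [hc] at hm
  have a1 : ¬ G.Adj w u := fun h => hm w (by simp) h.symm
  rw [hc] at h1 h2
  rw [Finset.sum_pair hu] at h1
  simp [filter_insert, filter_singleton, a1] at h1 h2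
  omega

lemma good_W2 (h : Good G col) (u w z : X) (hu : u ≠ w) (hz : u ≠ z) (hwz : w ≠ z)
    (hc : (G.neighborFinset u)ᶜ = {u, w, z}) :
    G.edgeFinset.card = G.degree u + (G.neighborFinset u ∩ G.neighborFinset w).card
      + (G.neighborFinset u ∩ G.neighborFinset z).card + if G.Adj w z then 1 else 0 := by
  have h1 := good_count h u
  have h2 := deg_split (G := G) u w
  have h3 := deg_split (G := G) u z
  have hm : ∀ x, x ∈ (G.neighborFinset u)ᶜ → ¬ G.Adj u x := by simp
  simp only [hc] at hm
  have a1 : ¬ G.Adj w u := fun h => hm w (by simp) h.symm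
  have a2 : ¬ G.Adj z u := fun h => hm z (by simp) h.symm
  rw [hc] at h1 h2 h3
  rw [Finset.sum_insert (by simp [hu, hz]), Finset.sum_pair hwz] at h1
  by_cases p : G.Adj w z
  · have p' := p.symm
    simp [filter_insert, filter_singleton, a1, a2, p, p'] at h1 h2 h3 ⊢
    omega
  · have p' : ¬ G.Adj z w := fun h => p h.symm
    simp [filter_insert, filter_singleton, a1, a2, p, p'] at h1 h2 h3 ⊢
    omega

lemma good_W3 (h : Good G col) (u w z t : X) (hu : u ≠ w) (hz : u ≠ z) (ht : u ≠ t)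
    (hwz : w ≠ z) (hwt : w ≠ t) (hzt : z ≠ t)
    (hc : (G.neighborFinset u)ᶜ = {u, w, z, t}) :
    G.edgeFinset.card = G.degree u + (G.neighborFinset u ∩ G.neighborFinset w).card
      + (G.neighborFinset u ∩ G.neighborFinset z).card
      + (G.neighborFinset u ∩ G.neighborFinset t).card + (if G.Adj w z then 1 else 0)
      + (if G.Adj w t then 1 else 0) + (if G.Adj z t then 1 else 0) := by
  have h1 := good_count h u
  have h2 := deg_split (G := G) u w
  have h3 := deg_split (G := G) u z
  have h4 := deg_split (G := G) u t
  have hm : ∀ x, x ∈ (G.neighborFinset u)ᶜ → ¬ G.Adj u x := by simp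
  simp only [hc] at hm
  have a1 : ¬ G.Adj w u := fun h => hm w (by simp) h.symm
  have a2 : ¬ G.Adj z u := fun h => hm z (by simp) h.symm
  have a3 : ¬ G.Adj t u := fun h => hm t (by simp) h.symm
  rw [hc] at h1 h2 h3 h4
  rw [Finset.sum_insert (by simp [hu, hz, ht]), Finset.sum_insert (by simp [hwz, hwt]),
    Finset.sum_pair hzt] at h1
  have e1 := G.adj_comm z w
  have e2 := G.adj_comm t w
  have e3 := G.adj_comm t z
  by_cases p : G.Adj w z <;> by_cases q : G.Adj w t <;> by_cases s : G.Adj z t <;>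
  · simp only [p, q, s, iff_true, iff_false] at e1 e2 e3
    simp [filter_insert, filter_singleton, a1, a2, a3, p, q, s, e1, e2, e3, hwz, hwt, hzt] at h1 h2 h3 h4 ⊢
    omega

lemma good_seven (h : Good G col) (hX : Fintype.card X = 7) : G.edgeFinset.card ≤ 10 := by
  by_contra hc
  obtain ⟨u, hu⟩ := exists_big (G := G) 7 3 hX (by omega)
  obtain ⟨W, hW, huW, hcard⟩ := compl_eq (G := G) u
  have : W.card = 0 ∨ W.card = 1 ∨ W.card = 2 := by omega
  rcases this with h0 | h0 | h0
  · rw [Finset.card_eq_zero] at h0; subst h0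
    have := good_W0 h u hW
    simp at hcard
    omega
  · obtain ⟨w, rfl⟩ := Finset.card_eq_one.1 h0
    simp only [mem_singleton] at huW
    have := good_W1 h u w huW hW
    have := good_codeg h huW
    omega
  · obtain ⟨w, z, hwz, rfl⟩ := Finset.card_eq_two.1 h0
    simp only [mem_insert, mem_singleton, not_or] at huW
    have := good_W2 h u w z huW.1 huW.2 hwz hW
    have := good_codeg h huW.1
    have := good_codeg h huW.2
    have hd := @good_disj _ _ _ _ _ _ _ h u w z
    by_cases p : G.Adj w z
    · have := hd p
      simp only [p, if_true] at *
      omega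
    · simp only [p, if_false] at *
      omega

lemma good_path (h : Good G col) {u a b c : X} (hac : a ≠ c) (hub : ¬ G.Adj u b)
    (hu : G.degree u = 4) (ab : G.Adj a b) (bc : G.Adj b c)
    (ha : (G.neighborFinset u ∩ G.neighborFinset a).card = 3)
    (hc : (G.neighborFinset u ∩ G.neighborFinset c).card = 3)
    (hb : (G.neighborFinset u ∩ G.neighborFinset b).card = 1) : False := by
  have key : ∀ a, G.Adj a b → (G.neighborFinset u ∩ G.neighborFinset a).card = 3 →
      G.neighborFinset u ∩ G.neighborFinset a = G.neighborFinset u \ G.neighborFinset b := by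
    intro a ab ha
    apply Finset.eq_of_subset_of_card_le
    · intro x
      simp only [mem_inter, mem_sdiff, SimpleGraph.mem_neighborFinset]
      rintro ⟨h1, h2⟩
      exact ⟨h1, fun h3 => h.2.1 a b x ab h3 h2.symm⟩
    · have := Finset.card_inter_add_card_sdiff (G.neighborFinset u) (G.neighborFinset b)
      rw [G.card_neighborFinset_eq_degree] at this
      omega
  have k1 := key a ab ha
  have k2 := key c bc.symm hc
  have := good_codeg h hac
  have hs : insert b (G.neighborFinset u ∩ G.neighborFinset a) ⊆
      G.neighborFinset a ∩ G.neighborFinset c := by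
    intro x hx
    rw [mem_insert] at hx
    rcases hx with rfl | hx
    · simp [ab, bc.symm]
    · have hx' := hx
      rw [k1, ← k2] at hx'
      simp at hx hx' ⊢
      tauto
  have := Finset.card_le_card hs
  rw [Finset.card_insert_of_notMem (by simp [hub])] at this
  omega

lemma miss {T N : Finset X} (hT : T.card = 4) (h : (T ∩ N).card = 3) :
    ∃ x ∈ T, x ∉ N ∧ ∀ y ∈ T, y ≠ x → y ∈ N := by
  have := Finset.card_inter_add_card_sdiff T N
  obtain ⟨x, hx⟩ := Finset.card_eq_one.1 (show (T \ N).card = 1 by omega)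
  have hx' : ∀ y, y ∈ T \ N ↔ y = x := by rw [hx]; simp
  simp only [mem_sdiff] at hx'
  refine ⟨x, ((hx' x).2 rfl).1, ((hx' x).2 rfl).2, ?_⟩
  intro y hy hyx
  by_contra hn
  exact hyx ((hx' y).1 ⟨hy, hn⟩)

/-- two `w`'s missing the same vertex is impossible -/
lemma miss_ne (h : Good G col) {T : Finset X} (hT : T.card = 4) {u w z t p s : X}
    (hu : u ≠ w) (hz : u ≠ z) (ht : u ≠ t)
    (hwz : w ≠ z) (hwt : w ≠ t) (hzt : z ≠ t)
    (h0 : ∀ y ∈ T, G.Adj u y)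
    (h1 : ∀ y ∈ T, y ≠ p → G.Adj w y) (h2 : ∀ y ∈ T, y ≠ p → G.Adj z y)
    (h3 : ∀ y ∈ T, y ≠ s → G.Adj t y) : False := by
  have : 2 ≤ ((T.erase p).erase s).card := by
    have := Finset.pred_card_le_card_erase (s := T) (a := p)
    have := Finset.pred_card_le_card_erase (s := T.erase p) (a := s)
    omega
  obtain ⟨x, hx, y, hy, hxy⟩ := Finset.one_lt_card.1 this
  simp only [mem_erase] at hx hy
  have c := good_codeg h hxy
  have hs : {u, w, z, t} ⊆ G.neighborFinset x ∩ G.neighborFinset y := by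
    intro a
    simp only [mem_insert, mem_singleton, mem_inter, SimpleGraph.mem_neighborFinset]
    rintro (rfl | rfl | rfl | rfl)
    · exact ⟨(h0 x hx.2.2).symm, (h0 y hy.2.2).symm⟩
    · exact ⟨(h1 x hx.2.2 hx.2.1).symm, (h1 y hy.2.2 hy.2.1).symm⟩
    · exact ⟨(h2 x hx.2.2 hx.2.1).symm, (h2 y hy.2.2 hy.2.1).symm⟩
    · exact ⟨(h3 x hx.2.2 hx.1).symm, (h3 y hy.2.2 hy.1).symm⟩
  have := Finset.card_le_card hs
  have : ({u, w, z, t} : Finset X).card = 4 := by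
    rw [Finset.card_eq_four]
    exact ⟨u, w, z, t, hu, hz, ht, hwz, hwt, hzt, rfl⟩
  omega

lemma good_K44 (h : Good G col) {u w z t a b c d : X}
    (hu : u ≠ w) (hz : u ≠ z) (ht : u ≠ t)
    (hwz : w ≠ z) (hwt : w ≠ t) (hzt : z ≠ t)
    (hab : a ≠ b) (hac : a ≠ c) (had : a ≠ d) (hbc : b ≠ c) (hbd : b ≠ d) (hcd : c ≠ d)
    (ua : G.Adj u a) (ub : G.Adj u b) (uc : G.Adj u c) (ud : G.Adj u d)
    (wb : G.Adj w b) (wc : G.Adj w c) (wd : G.Adj w d)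
    (za : G.Adj z a) (zc : G.Adj z c) (zd : G.Adj z d)
    (ta : G.Adj t a) (tb : G.Adj t b) (td : G.Adj t d) : False := by
  have q1 := good_three h hu hbc hbd hcd ub uc ud wb wc wd
  have q2 := good_three h hz hac had hcd ua uc ud za zc zd
  have q3 := good_three h ht hab had hbd ua ub ud ta tb td
  have e1 := h.2.2 w c z d wc zc.symm zd wd.symm hwz hcd
  have e2 := h.2.2 w b t d wb tb.symm td wd.symm hwt hbd
  have e3 := h.2.2 z a t d za ta.symm td zd.symm hzt had
  have f1 := (h.2.2 c w d z wc.symm wd zd.symm zc hcd hwz).1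
  have d1 := (h.2.2 a u c z ua.symm uc zc.symm za hac hz).1
  have d2 := (h.2.2 a u d z ua.symm ud zd.symm za had hz).1
  have d3 := (h.2.2 c u d z uc.symm ud zd.symm zc hcd hz).1
  have d4 := (h.2.2 a u b t ua.symm ub tb.symm ta hab ht).1
  have d5 := (h.2.2 b u d t ub.symm ud td.symm tb hbd ht).1
  have d6 := (h.2.2 b u c w ub.symm uc wc.symm wb hbc hu).1
  have g1 := (h.2.2 w d z c wd zd.symm zc wc.symm hwz hcd.symm).1
  have g2 := (h.2.2 w d t b wd td.symm tb wb.symm hwt hbd.symm).1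
  have g3 := (h.2.2 z d t a zd td.symm ta za.symm hzt had.symm).1
  have hs := h.1
  rw [hs c z, hs d w] at e1
  rw [hs b t, hs d w] at e2
  rw [hs a t, hs d z] at e3
  rw [hs a u] at d1 d2 d4
  rw [hs b u] at d5 d6
  rw [hs c u] at d3
  rw [hs d z] at g1
  rw [hs d t] at g2 g3
  clear hs
  grind

lemma good_eight (h : Good G col) (hX : Fintype.card X = 8) : G.edgeFinset.card ≤ 12 := by
  by_contra hc
  obtain ⟨u, hu⟩ := exists_big (G := G) 8 3 hX (by omega)
  obtain ⟨W, hW, huW, hcard⟩ := compl_eq (G := G) u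
  have : W.card = 0 ∨ W.card = 1 ∨ W.card = 2 ∨ W.card = 3 := by omega
  rcases this with h0 | h0 | h0 | h0
  · rw [Finset.card_eq_zero] at h0; subst h0
    have := good_W0 h u hW
    simp at hcard
    omega
  · obtain ⟨w, rfl⟩ := Finset.card_eq_one.1 h0
    simp only [mem_singleton] at huW
    have := good_W1 h u w huW hW
    have := good_codeg h huW
    omega
  · obtain ⟨w, z, hwz, rfl⟩ := Finset.card_eq_two.1 h0
    simp only [mem_insert, mem_singleton, not_or] at huW
    have := good_W2 h u w z huW.1 huW.2 hwz hW
    have := good_codeg h huW.1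
    have := good_codeg h huW.2
    split_ifs at * <;> omega
  · obtain ⟨w, z, t, hwz, hwt, hzt, rfl⟩ := Finset.card_eq_three.1 h0
    simp only [mem_insert, mem_singleton, not_or] at huW
    obtain ⟨hw, hz, ht⟩ := huW
    have hE := good_W3 h u w z t hw hz ht hwz hwt hzt hW
    have c1 := good_codeg h hw
    have c2 := good_codeg h hz
    have c3 := good_codeg h ht
    have hd : G.degree u = 4 := by omega
    have d1 := @good_disj _ _ _ _ _ _ _ h u w z
    have d2 := @good_disj _ _ _ _ _ _ _ h u w t
    have d3 := @good_disj _ _ _ _ _ _ _ h u z t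
    have tri := h.2.1 w z t
    have hm : ∀ x, x ∈ (G.neighborFinset u)ᶜ → ¬ G.Adj u x := by simp
    simp only [hW] at hm
    have a1 := hm w (by simp)
    have a2 := hm z (by simp)
    have a3 := hm t (by simp)
    by_cases p : G.Adj w z <;> by_cases q : G.Adj w t <;> by_cases s : G.Adj z t <;>
      simp only [p, q, s, if_true, if_false, true_imp_iff, false_imp_iff] at hE d1 d2 d3
    · exact tri p s q.symm
    · exact good_path h hzt a1 hd p.symm q (by omega) (by omega) (by omega)
    · exact good_path h hwt a2 hd p s (by omega) (by omega) (by omega)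
    · omega
    · exact good_path h hwz a3 hd q s.symm (by omega) (by omega) (by omega)
    · omega
    · omega
    · have hT : (G.neighborFinset u).card = 4 := by rw [G.card_neighborFinset_eq_degree, hd]
      obtain ⟨a, ha, -, hwa⟩ := miss hT (show (_ ∩ G.neighborFinset w).card = 3 by omega)
      obtain ⟨b, hb, -, hzb⟩ := miss hT (show (_ ∩ G.neighborFinset z).card = 3 by omega)
      obtain ⟨c, hc', -, htc⟩ := miss hT (show (_ ∩ G.neighborFinset t).card = 3 by omega)
      have hT0 : ∀ y ∈ G.neighborFinset u, G.Adj u y := by simp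
      generalize G.neighborFinset u = T at *
      simp only [SimpleGraph.mem_neighborFinset] at hwa hzb htc
      have hab : a ≠ b := by
        rintro rfl
        exact miss_ne h hT hw hz ht hwz hwt hzt hT0 hwa hzb htc
      have hac : a ≠ c := by
        rintro rfl
        exact miss_ne h hT hw ht hz hwt hwz hzt.symm hT0 hwa htc hzb
      have hbc : b ≠ c := by
        rintro rfl
        exact miss_ne h hT hz ht hw hzt hwz.symm hwt.symm hT0 hzb htc hwa
      have : ∃ d ∈ T, d ∉ ({a, b, c} : Finset X) := by
        apply Finset.exists_mem_notMem_of_card_lt_card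
        have := Finset.card_le_three (a := a) (b := b) (c := c)
        omega
      obtain ⟨d, hdT, hd'⟩ := this
      simp only [mem_insert, mem_singleton, not_or] at hd'
      obtain ⟨da, db, dc⟩ := hd'
      exact good_K44 h hw hz ht hwz hwt hzt hab hac (Ne.symm da) hbc (Ne.symm db) (Ne.symm dc)
        (hT0 _ ha) (hT0 _ hb) (hT0 _ hc') (hT0 _ hdT)
        (hwa _ hb hab.symm) (hwa _ hc' hac.symm) (hwa _ hdT da)
        (hzb _ ha hab) (hzb _ hc' hbc.symm) (hzb _ hdT db)
        (htc _ ha hac) (htc _ hb hbc) (htc _ hdT dc)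

end count

lemma good_mantel {X C : Type*} [Fintype X] {G : SimpleGraph X}
    [DecidableRel G.Adj] {col : X → X → C} (h : Good G col) :
    G.edgeFinset.card ≤ (Fintype.card X ^ 2 - (Fintype.card X % 2) ^ 2) / 4 := by
  classical
  have cf : G.CliqueFree (2 + 1) := by
    intro s hs
    obtain ⟨a, b, c, h1, h2, h3, rfl⟩ := SimpleGraph.is3Clique_iff.1 hs
    exact h.2.1 a b c h1 h3 h2.symm
  have := cf.card_edgeFinset_le
  have h0 : (Fintype.card X % 2).choose 2 = 0 := Nat.choose_eq_zero_of_lt (Nat.mod_lt _ (by norm_num))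
  simpa [h0] using this

section hyper
variable {V : Type*} [DecidableEq V] {r : ℕ} {H : Finset (Finset V)} {part : V → Fin r}

lemma part_inj (hpart : ∀ A ∈ H, ∀ i : Fin r, (A.filter fun x => part x = i).card = 1)
    {A : Finset V} (hA : A ∈ H) {x y : V} (hx : x ∈ A) (hy : y ∈ A) (hxy : x ≠ y) :
    part x ≠ part y := by
  intro he
  have := Finset.card_le_one.1 (hpart A hA (part y)).le x (by simp [hx, he]) y (by simp [hy])
  exact hxy this

lemma lin_eq (hlin : ∀ A ∈ H, ∀ B ∈ H, A ≠ B → (A ∩ B).card ≤ 1)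
    {A B : Finset V} (hA : A ∈ H) (hB : B ∈ H) (hAB : A ≠ B) {x y : V}
    (hxA : x ∈ A) (hxB : x ∈ B) (hyA : y ∈ A) (hyB : y ∈ B) : x = y :=
  Finset.card_le_one.1 (hlin A hA B hB hAB) x (by simp [*]) y (by simp [*])

lemma tri_eq (hpart : ∀ A ∈ H, ∀ i : Fin r, (A.filter fun x => part x = i).card = 1)
    (hlin : ∀ A ∈ H, ∀ B ∈ H, A ≠ B → (A ∩ B).card ≤ 1)
    (h3 : ¬ HasRainbowCycle H part 3)
    {A B C : Finset V} (hA : A ∈ H) (hB : B ∈ H) (hC : C ∈ H)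
    (hAB : A ≠ B) (hBC : B ≠ C) (hCA : C ≠ A) {p q s : V}
    (pA : p ∈ A) (pB : p ∈ B) (qB : q ∈ B) (qC : q ∈ C) (sC : s ∈ C) (sA : s ∈ A) :
    p = q ∧ q = s := by
  by_cases e1 : p = q
  · subst e1
    exact ⟨rfl, lin_eq hlin hC hA hCA qC pA sC sA⟩
  by_cases e2 : q = s
  · subst e2
    exact absurd (lin_eq hlin hA hB hAB pA pB sA qB) e1
  by_cases e3 : s = p
  · subst e3
    exact absurd (lin_eq hlin hB hC hBC pB sC qB qC) e1
  exfalso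
  apply h3
  have f1 := part_inj hpart hB pB qB e1
  have f2 := part_inj hpart hC qC sC e2
  have f3 := part_inj hpart hA sA pA e3
  refine ⟨![p, q, s], ![B, C, A], ?_, ?_, ?_, ?_, ?_⟩
  · intro i j; fin_cases i <;> fin_cases j <;> simp <;> grind
  · intro i j; fin_cases i <;> fin_cases j <;> simp <;> grind
  · intro i; fin_cases i <;> simp [*]
  · intro i; fin_cases i <;> simp [finRotate_apply, *]
  · intro i j; fin_cases i <;> fin_cases j <;> simp <;> grind

lemma exists_graph (hpart : ∀ A ∈ H, ∀ i : Fin r, (A.filter fun x => part x = i).card = 1)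
    (hlin : ∀ A ∈ H, ∀ B ∈ H, A ≠ B → (A ∩ B).card ≤ 1)
    (h3 : ¬ HasRainbowCycle H part 3) (h4 : ¬ HasRainbowCycle H part 4)
    (S : Finset (Finset V)) (hS : S ⊆ H) (hne : S.Nonempty) :
    ∃ (G : SimpleGraph S) (_ : DecidableRel G.Adj) (col : S → S → Finset (Fin r)),
      Good G col ∧ S.card * r ≤ (S.biUnion id).card + G.edgeFinset.card := by
  classical
  have hroot : ∀ v : V, ∃ R : S, ∀ A : S, v ∈ A.1 → v ∈ R.1 := by
    intro v
    by_cases hv : ∃ A : S, v ∈ A.1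
    · obtain ⟨A, hA⟩ := hv
      exact ⟨A, fun _ _ => hA⟩
    · push Not at hv
      exact ⟨⟨hne.choose, hne.choose_spec⟩, fun A hA => absurd hA (hv A)⟩
  choose root hroot using hroot
  have inH : ∀ A : S, A.1 ∈ H := fun A => hS A.2
  have vne : ∀ {A B : S}, A ≠ B → A.1 ≠ B.1 := fun h h' => h (Subtype.ext h')
  let G : SimpleGraph S :=
    { Adj := fun A B => A ≠ B ∧ ∃ v, v ∈ A.1 ∧ v ∈ B.1 ∧ (root v = A ∨ root v = B)
      symm := ⟨fun A B ⟨h, v, h1, h2, h3⟩ => ⟨h.symm, v, h2, h1, h3.symm⟩⟩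
      loopless := ⟨fun A h => h.1 rfl⟩ }
  refine ⟨G, inferInstance, fun A B => (A.1 ∩ B.1).image part, ⟨?_, ?_, ?_⟩, ?_⟩
  · intro a b
    simp only [Finset.inter_comm]
  · rintro a b c ⟨ab, p, pa, pb, hp⟩ ⟨bc, q, qb, qc, hq⟩ ⟨ca, s, sc, sa, hs⟩
    obtain ⟨rfl, rfl⟩ := tri_eq hpart hlin h3 (inH a) (inH b) (inH c) (vne ab) (vne bc) (vne ca)
      pa pb qb qc sc sa
    grind
  · rintro a x b y ⟨ax, p, pa, px, hp⟩ ⟨xb, q, qx, qb, hq⟩ ⟨hby, s, sb, sy, hs⟩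
      ⟨ya, t, ty, ta, ht⟩ ab xy
    have nall : ¬ (p = q ∧ p = s ∧ p = t) := by
      rintro ⟨rfl, rfl, rfl⟩
      grind
    have L : ∀ {A B : S}, A ≠ B → ∀ {x y : V}, x ∈ A.1 → x ∈ B.1 → y ∈ A.1 → y ∈ B.1 → x = y :=
      fun {A B} h => lin_eq hlin (inH A) (inH B) (vne h)
    have T : ∀ {A B C : S}, A ≠ B → B ≠ C → C ≠ A → ∀ {p q s : V}, p ∈ A.1 → p ∈ B.1 →
        q ∈ B.1 → q ∈ C.1 → s ∈ C.1 → s ∈ A.1 → p = q ∧ q = s :=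
      fun {A B C} h1 h2 h3' => tri_eq hpart hlin h3 (inH A) (inH B) (inH C) (vne h1) (vne h2) (vne h3')
    have pq : p ≠ q := by
      rintro rfl
      have := T ab hby ya pa qb sb sy ty ta
      grind
    have qs : q ≠ s := by
      rintro rfl
      have := T xy ya ax qx sy ty ta pa px
      grind
    have st : s ≠ t := by
      rintro rfl
      have := T ab.symm ax xb sb ta pa px qx qb
      grind
    have tp : t ≠ p := by
      rintro rfl
      have := T xy.symm xb hby ty px qx qb sb sy
      grind
    have ps : p ≠ s := by
      rintro rfl
      exact pq (L xb px sb qx qb)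
    have qt : q ≠ t := by
      rintro rfl
      exact pq (L ax pa px ta qx)
    have I : ∀ {A B : S}, A ≠ B → ∀ {x : V}, x ∈ A.1 → x ∈ B.1 → (A.1 ∩ B.1).image part = {part x} := by
      intro A B h x hA hB
      have : A.1 ∩ B.1 = {x} := by
        ext y
        simp only [mem_inter, mem_singleton]
        exact ⟨fun hy => L h hy.1 hy.2 hA hB, by rintro rfl; exact ⟨hA, hB⟩⟩
      rw [this, Finset.image_singleton]
    have f1 := part_inj hpart (inH x) px qx pq
    have f2 := part_inj hpart (inH b) qb sb qs
    have f3 := part_inj hpart (inH y) sy ty st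
    have f4 := part_inj hpart (inH a) ta pa tp
    beta_reduce
    rw [I ax pa px, I xb qx qb, I hby sb sy, I ya ty ta]
    simp only [ne_eq, Finset.singleton_inj]
    refine ⟨f1, ?_⟩
    by_contra hcon
    push Not at hcon
    obtain ⟨f5, f6⟩ := hcon
    apply h4
    have v1 := vne ax
    have v2 := vne xb
    have v3 := vne hby
    have v4 := vne ya
    have v5 := vne ab
    have v6 := vne xy
    have i1 := inH a
    have i2 := inH x
    have i3 := inH b
    have i4 := inH y
    refine ⟨![p, q, s, t], ![x.1, b.1, y.1, a.1], ?_, ?_, ?_, ?_, ?_⟩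
    · intro i j; fin_cases i <;> fin_cases j <;> simp <;> grind
    · intro i j; fin_cases i <;> fin_cases j <;> simp <;> grind
    · intro i; fin_cases i <;> simp [i1, i2, i3, i4]
    · intro i; fin_cases i <;> simp [finRotate_apply, *]
    · intro i j; fin_cases i <;> fin_cases j <;> simp <;> grind
  · let P : Finset (Σ _ : S, V) := (univ : Finset S).sigma (fun A => A.1)
    have hP : P.card = S.card * r := by
      rw [Finset.card_sigma]
      have : ∀ A : S, A.1.card = r := by
        intro A
        rw [Finset.card_eq_sum_card_fiberwise (f := part) (t := univ) (by simp)]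
        simp [hpart A.1 (inH A)]
      simp [this]
    rw [← hP, ← Finset.card_filter_add_card_filter_not (s := P) (fun z => z.1 = root z.2)]
    apply Nat.add_le_add
    · apply Finset.card_le_card_of_injOn (fun z => z.2)
      · rintro ⟨A, v⟩ hz
        simp [P] at hz
        simp only [coe_biUnion, id, Set.mem_iUnion]
        exact ⟨A.1, by simp, by simpa using hz.1⟩
      · rintro ⟨A, v⟩ hz ⟨B, w⟩ hw hvw
        simp at hz hw hvw
        subst hvw
        rw [hz.2, hw.2]
    · apply Finset.card_le_card_of_injOn (fun z => s(z.1, root z.2))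
      · rintro ⟨A, v⟩ hz
        simp [P] at hz
        simp only [SimpleGraph.coe_edgeFinset, SimpleGraph.mem_edgeSet]
        exact ⟨hz.2, v, hz.1, hroot v A hz.1, Or.inr rfl⟩
      · rintro ⟨A, v⟩ hz ⟨B, w⟩ hw hvw
        simp [P] at hz hw
        have hv := hroot v A hz.1
        have hw' := hroot w B hw.1
        have hvw' : s(A, root v) = s(B, root w) := hvw
        have : v = w := by
          rw [Sym2.eq_iff] at hvw'
          refine lin_eq hlin (inH A) (inH (root v)) (vne hz.2) hz.1 hv ?_ ?_ <;> grind
        subst this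
        rw [Sym2.eq_iff] at hvw'
        have : A = B := by grind
        rw [this]

end hyper

theorem rainbowFree_is_sparse {V : Type*} [DecidableEq V] (r : ℕ) (hr : 3 ≤ r)
    (H : Finset (Finset V)) (part : V → Fin r)
    (hpart : ∀ A ∈ H, ∀ i : Fin r, (A.filter fun x => part x = i).card = 1)
    (hlin : ∀ A ∈ H, ∀ B ∈ H, A ≠ B → (A ∩ B).card ≤ 1)
    (h3 : ¬ HasRainbowCycle H part 3) (h4 : ¬ HasRainbowCycle H part 4) :
    GFree H (3 * r - 3) 3 ∧ GFree H (4 * r - 5) 4 ∧ GFree H (5 * r - 7) 5 ∧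
      GFree H (7 * r - 11) 7 ∧ GFree H (8 * r - 13) 8 := by
  have key : ∀ e, 1 ≤ e → ∀ k, (∀ S : Finset (Finset V), S.card = e →
      ∀ (G : SimpleGraph S) (_ : DecidableRel G.Adj) (col : S → S → Finset (Fin r)),
      Good G col → G.edgeFinset.card ≤ k) → ∀ S ⊆ H, S.card = e →
      e * r ≤ (S.biUnion id).card + k := by
    intro e he k hk S hS hc
    obtain ⟨G, iG, col, hG, hE⟩ := exists_graph hpart hlin h3 h4 S hS
      (Finset.card_pos.1 (by omega))
    have := hk S hc G iG col hG
    rw [hc] at hE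
    omega
  refine ⟨?_, ?_, ?_, ?_, ?_⟩ <;> intro S hS hc
  · have := key 3 (by norm_num) 2 (fun S hc G _ col hG => by
      have := good_mantel hG
      simpa [hc] using this) S hS hc
    omega
  · have := key 4 (by norm_num) 4 (fun S hc G _ col hG => by
      have := good_mantel hG
      simpa [hc] using this) S hS hc
    omega
  · have := key 5 (by norm_num) 6 (fun S hc G _ col hG => by
      have := good_mantel hG
      simpa [hc] using this) S hS hc
    omega
  · have := key 7 (by norm_num) 10 (fun S hc G _ col hG =>
      good_seven hG (by simp [hc])) S hS hc
    omega
  · have := key 8 (by norm_num) 12 (fun S hc G _ col hG =>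
      good_eight hG (by simp [hc])) S hS hc
    omega
end
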